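/- arXiv:2408.10480 — 3 statements merged into one kernel-verified Lean document; each statement's English description precedes it below -/
import Mathlib

section
/- Assume (A1)–(A5). Then there exists a threshold s* ∈ [s₁, s₂) such that c*(s) = 2 for all s ∈ [0, s*] and c*(s) > 2 for all s ∈ (s*, ∞). -/
open Filter Asymptotics MeasureTheory Set

noncomputable section

/-- A traveling wave front with speed `c` for the nonlinearity `g`:
a decreasing `C²` solution of `W'' + c W' + g(W) = 0` connecting `1` (at `-∞`) to `0` (at `+∞`). -/
def IsFront (g : ℝ → ℝ) (c : ℝ) (W : ℝ → ℝ) : Prop :=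
  ContDiff ℝ 2 W ∧
  (∀ ξ, deriv (deriv W) ξ + c * deriv W ξ + g (W ξ) = 0) ∧
  Tendsto W atBot (nhds 1) ∧ Tendsto W atTop (nhds 0) ∧
  (∀ ξ, deriv W ξ < 0)

/-!
A front `W` is decreasing, so its squared slope `W'²` is a function `y` of the height `w = W`. The
front equation becomes `y' = 2 c √y - 2 f(w; s)`, and `W → 1` gives `y(1) = 0`. For every `s` this
terminal value problem has a unique nonnegative solution on `[0, 1]`, because `√` is increasing:
the comparison principle holds backwards from `w = 1`, although `√` is not Lipschitz. Existence
follows by regularizing the root. A front of speed `c` exists if and only if the gap `y(0)`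
vanishes: comparing `y(W)` with `W'²` along a front gives `y(0) ≤ 0`, while for `y(0) = 0` a
solution of `W' = -√y(W)` with values in `(0, 1)` is a front. By comparison the gap is nondecreasing
and continuous in `s`, so for `c = 2` the set `{s | c*(s) = 2} = {s | y(0) ≤ 0}` is a closed
interval starting at `0`.
-/

open scoped NNReal Topology

lemma hasDerivAt_max_zero_sq (x : ℝ) :
    HasDerivAt (fun x : ℝ => max x 0 ^ 2) (2 * max x 0) x := by
  refine hasDerivAt_of_hasDerivAt_of_ne' (g := fun x => 2 * max x 0) (x := 0) (fun y hy => ?_)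
    (by fun_prop) (by fun_prop) x
  rcases hy.lt_or_gt with hneg | hpos
  · rw [max_eq_right hneg.le, mul_zero]
    refine (hasDerivAt_const y (0 : ℝ)).congr_of_eventuallyEq ?_
    filter_upwards [Iio_mem_nhds hneg] with z hz
    simp [max_eq_right (mem_Iio.1 hz).le]
  · rw [max_eq_left hpos.le]
    refine HasDerivAt.congr_of_eventuallyEq (by simpa using hasDerivAt_pow 2 y) ?_
    filter_upwards [Ioi_mem_nhds hpos] with z hz
    rw [max_eq_left (mem_Ioi.1 hz).le]

lemma monotoneOn_max_zero_of_hasDerivAt {D : Set ℝ} (hD : Convex ℝ D) {h h' : ℝ → ℝ}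
    (hc : ContinuousOn h D) (hd : ∀ x ∈ interior D, HasDerivAt h (h' x) x)
    (hpos : ∀ x ∈ interior D, 0 < h x → 0 ≤ h' x) :
    MonotoneOn (fun x => max (h x) 0) D := by
  -- The square of the positive part is differentiable, unlike the positive part itself.
  have hsq : MonotoneOn (fun x => max (h x) 0 ^ 2) D :=
    monotoneOn_of_hasDerivWithinAt_nonneg hD (by fun_prop)
      (fun x hx => ((hasDerivAt_max_zero_sq (h x)).comp x (hd x hx)).hasDerivWithinAt)
      fun x hx => by
        rcases le_or_gt (h x) 0 with hx0 | hx0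
        · simp [max_eq_right hx0]
        · exact mul_nonneg (by positivity) (hpos x hx hx0)
  exact fun x hx z hz hxz =>
    (sq_le_sq₀ (le_max_right _ _) (le_max_right _ _)).1 (hsq hx hz hxz)

lemma sqrt_le_sqrt_add_sqrt_abs_sub (x z : ℝ) : √x ≤ √z + √|x - z| := by
  refine Real.sqrt_le_iff.2 ⟨by positivity, ?_⟩
  have hz : z ≤ √z ^ 2 := by rw [Real.sq_sqrt']; exact le_max_left z 0
  have hxz : x - z ≤ √|x - z| ^ 2 := by rw [Real.sq_sqrt (abs_nonneg _)]; exact le_abs_self _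
  nlinarith [mul_nonneg (Real.sqrt_nonneg z) (Real.sqrt_nonneg |x - z|)]

lemma abs_sqrt_sub_sqrt_le (x z : ℝ) : |√x - √z| ≤ √|x - z| := by
  rw [abs_sub_le_iff]
  constructor
  · linarith [sqrt_le_sqrt_add_sqrt_abs_sub x z]
  · linarith [abs_sub_comm x z ▸ sqrt_le_sqrt_add_sqrt_abs_sub z x]

lemma uniformContinuous_sqrt : UniformContinuous Real.sqrt := by
  refine Metric.uniformContinuous_iff.2 fun ε hε => ⟨ε ^ 2, by positivity, fun {x z} hxz => ?_⟩
  exact (abs_sqrt_sub_sqrt_le x z).trans_lt ((Real.sqrt_lt' hε).2 hxz)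

lemma lipschitzWith_sqrt_max {δ : ℝ} (hδ : 0 < δ) :
    LipschitzWith (√δ)⁻¹.toNNReal (fun x => √(max x δ)) := by
  refine LipschitzWith.of_dist_le' fun x z => ?_
  have hδ_le (t : ℝ) : √δ ≤ √(max t δ) := Real.sqrt_le_sqrt (le_max_right _ _)
  have hsq (t : ℝ) : √(max t δ) ^ 2 = max t δ := Real.sq_sqrt (hδ.le.trans (le_max_right _ _))
  have hδ' : 0 < √δ := Real.sqrt_pos.2 hδ
  rw [inv_mul_eq_div, le_div_iff₀ hδ', Real.dist_eq, Real.dist_eq]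
  calc |√(max x δ) - √(max z δ)| * √δ
      ≤ |√(max x δ) - √(max z δ)| * (√(max x δ) + √(max z δ)) := by
        gcongr; linarith [hδ_le x, Real.sqrt_nonneg (max z δ)]
    _ = |√(max x δ) ^ 2 - √(max z δ) ^ 2| := by
        rw [sq_sub_sq, abs_mul, mul_comm, abs_of_nonneg (by positivity : 0 ≤ √(max x δ) + _)]
    _ ≤ |x - z| := by rw [hsq, hsq]; exact abs_max_sub_max_le_abs x z δ

lemma sqrt_max_sub_sqrt_mem_Icc {δ : ℝ} (x : ℝ) :
    √(max x δ) - √x ∈ Icc 0 √δ := by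
  rw [Real.sqrt_monotone.map_max]
  constructor
  · linarith [le_max_left √x √δ]
  · linarith [max_le_add_of_nonneg (Real.sqrt_nonneg x) (Real.sqrt_nonneg δ)]

lemma exists_le_mul_sub_of_contDiffOn {g : ℝ → ℝ} {a b : ℝ} (hab : a < b)
    (hg : ContDiffOn ℝ 1 g (Icc a b)) (hb : g b = 0) :
    ∃ M, ∀ w ∈ Icc a b, g w ≤ M * (b - w) := by
  obtain ⟨M, hM⟩ := isCompact_Icc.exists_bound_of_continuousOn
    (hg.continuousOn_derivWithin (uniqueDiffOn_Icc hab) le_rfl)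
  refine ⟨M, fun w hw => (le_abs_self _).trans ?_⟩
  simpa [hb, abs_of_nonneg (sub_nonneg.2 hw.2), abs_sub_comm w] using
    (convex_Icc a b).norm_image_sub_le_of_norm_derivWithin_le
      (hg.differentiableOn one_ne_zero) hM (right_mem_Icc.2 hab.le) hw

lemma equicontinuousOn_of_abs_sub_le {ι : Type*} {F : ι → ℝ → ℝ} {S : Set ℝ} {L : ℝ}
    (h : ∀ i, ∀ s ∈ S, ∀ t ∈ S, |F i s - F i t| ≤ L * |s - t|) : EquicontinuousOn F S :=
  (LipschitzOnWith.uniformEquicontinuousOn F L.toNNReal fun i =>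
    .of_dist_le' (h i)).equicontinuousOn

lemma exists_tendsto_deriv_zero {W : ℝ → ℝ} {a : ℝ} (hW : Differentiable ℝ W)
    (ha : Tendsto W atTop (𝓝 a)) :
    ∃ ξ : ℕ → ℝ, Tendsto ξ atTop atTop ∧ Tendsto (fun n => deriv W (ξ n)) atTop (𝓝 0) := by
  have hmvt (n : ℕ) : ∃ ξ ∈ Ioo (n : ℝ) (n + 1), deriv W ξ = W (n + 1) - W n := by
    simpa using exists_deriv_eq_slope W (lt_add_one (n : ℝ)) hW.continuous.continuousOn
      hW.differentiableOn
  choose ξ hξ hderiv using hmvt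
  refine ⟨ξ, tendsto_atTop_mono (fun n => (hξ n).1.le) tendsto_natCast_atTop_atTop, ?_⟩
  have hW₀ := ha.comp (tendsto_natCast_atTop_atTop (R := ℝ))
  have hW₁ := hW₀.comp (tendsto_add_atTop_nat 1)
  simpa [hderiv, Function.comp_def] using hW₁.sub hW₀

lemma exists_threshold_of_monotoneOn {δ : ℝ → ℝ} {a r s₁ s₂ : ℝ}
    (hmono : MonotoneOn δ (Ici a)) (hcont : ContinuousOn δ (Ici a)) (ha : a ≤ s₁)
    (hs : s₁ ≤ s₂) (h₁ : δ s₁ ≤ r) (h₂ : r < δ s₂) :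
    ∃ t ∈ Ico s₁ s₂, ∀ s ∈ Ici a, δ s ≤ r ↔ s ≤ t := by
  have hsub : Icc s₁ s₂ ⊆ Ici a := fun s hs => ha.trans hs.1
  have hcompact : IsCompact (Icc s₁ s₂ ∩ δ ⁻¹' Iic r) :=
    isCompact_Icc.of_isClosed_subset
      ((hcont.mono hsub).preimage_isClosed_of_isClosed isClosed_Icc isClosed_Iic)
      inter_subset_left
  obtain ⟨t, ⟨⟨ht₁, ht₂⟩, htr⟩, hmax⟩ := hcompact.exists_isGreatest ⟨s₁, left_mem_Icc.2 hs, h₁⟩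
  have hat : a ≤ t := ha.trans ht₁
  refine ⟨t, ⟨ht₁, ht₂.lt_of_ne ?_⟩, fun s hsa => ⟨fun hsr => ?_, fun hst => ?_⟩⟩
  · rintro rfl
    exact h₂.not_ge htr
  · by_contra! hts
    rcases le_or_gt s s₂ with hs₂ | hs₂
    · exact hts.not_ge (hmax ⟨⟨ht₁.trans hts.le, hs₂⟩, hsr⟩)
    · exact h₂.not_ge ((hmono (ha.trans hs) hsa hs₂.le).trans hsr)
  · exact (hmono hsa hat hst).trans htr

/-! ### Terminal value problems on the unit interval -/

/-- `y` solves the terminal value problem `y' = φ(y) - k(w)`, `y(1) = 0` on `[0, 1]`.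
It serves both the equation of squared slopes of fronts, where `φ` is a multiple of the square
root, and the Lipschitz regularizations of that equation. -/
structure IsTerminalSolution (φ k y : ℝ → ℝ) : Prop where
  continuousOn : ContinuousOn y (Icc 0 1)
  hasDerivAt : ∀ w ∈ Ioo (0 : ℝ) 1, HasDerivAt y (φ (y w) - k w) w
  apply_one : y 1 = 0

namespace IsTerminalSolution

variable {φ ψ k l y z : ℝ → ℝ} {ε : ℝ}

lemma zero (hφ : φ 0 = 0) : IsTerminalSolution φ 0 0 where
  continuousOn := continuousOn_const
  hasDerivAt w _ := by simp [hφ, hasDerivAt_zero]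
  apply_one := rfl

lemma mul_one_sub_sq (M : ℝ) :
    IsTerminalSolution 0 (fun w => 2 * M * (1 - w)) (fun w => M * (1 - w) ^ 2) where
  continuousOn := by fun_prop
  hasDerivAt w _ := by
    simpa [mul_assoc, mul_left_comm] using (((hasDerivAt_id w).const_sub 1).pow 2).const_mul M
  apply_one := by simp

lemma le_add (hφ : Monotone φ) (hy : IsTerminalSolution φ k y)
    (hz : IsTerminalSolution ψ l z) (hε : 0 ≤ ε)
    (h : ∀ w ∈ Ioo (0 : ℝ) 1, ψ (z w) - l w ≤ φ (z w) - k w + ε) :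
    ∀ w ∈ Icc (0 : ℝ) 1, y w ≤ z w + ε := by
  intro w hw
  have hmono := monotoneOn_max_zero_of_hasDerivAt (convex_Icc (0 : ℝ) 1)
    (h := fun w => y w - z w - ε * (1 - w))
    (h' := fun w => (φ (y w) - k w) - (ψ (z w) - l w) + ε)
    ((hy.continuousOn.sub hz.continuousOn).sub (by fun_prop))
    (fun x hx => by
      rw [interior_Icc] at hx
      have hlin : HasDerivAt (fun x => ε * (1 - x)) (-ε) x := by
        simpa using ((hasDerivAt_id x).const_sub 1).const_mul ε
      exact (((hy.hasDerivAt x hx).sub (hz.hasDerivAt x hx)).sub hlin).congr_deriv (by ring))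
    (fun x hx hpos => by
      rw [interior_Icc] at hx
      have hzy : z x ≤ y x := by linarith [mul_nonneg hε (sub_nonneg.2 hx.2.le)]
      linarith [h x hx, hφ hzy])
  have hle : y w - z w - ε * (1 - w) ≤ 0 := by
    simpa [hy.apply_one, hz.apply_one] using hmono hw (right_mem_Icc.2 zero_le_one) hw.2
  linarith [mul_nonneg hε hw.1]

lemma nonneg (hφ : Monotone φ) (hφ0 : φ 0 = 0) (hk : ∀ w ∈ Ioo (0 : ℝ) 1, 0 ≤ k w)
    (hy : IsTerminalSolution φ k y) : ∀ w ∈ Icc (0 : ℝ) 1, 0 ≤ y w := by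
  simpa using (zero hφ0).le_add hφ hy le_rfl fun w hw => by simpa using hk w hw

lemma pos (hφ : Monotone φ) (hφ0 : φ 0 = 0) (hk : ∀ w ∈ Ioo (0 : ℝ) 1, 0 < k w)
    (hy : IsTerminalSolution φ k y) : ∀ w ∈ Ioo (0 : ℝ) 1, 0 < y w := by
  intro w hw
  have hnonneg := hy.nonneg hφ hφ0 fun w hw => (hk w hw).le
  refine (hnonneg w (Ioo_subset_Icc_self hw)).lt_of_ne' fun hyw => (hk w hw).ne ?_
  have hmin : IsLocalMin y w := by
    filter_upwards [Icc_mem_nhds hw.1 hw.2] with x hx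
    exact hyw ▸ hnonneg x hx
  simpa [hyw, hφ0, eq_comm] using hmin.hasDerivAt_eq_zero (hy.hasDerivAt w hw)

lemma exists_of_lipschitzOnWith {K R : ℝ≥0}
    (hφ : LipschitzOnWith K φ (Metric.closedBall 0 R)) (hk : ContinuousOn k (Icc 0 1))
    (hR : ∀ w ∈ Icc (0 : ℝ) 1, ∀ x ∈ Metric.closedBall (0 : ℝ) R, |φ x - k w| ≤ R) :
    ∃ y, IsTerminalSolution φ k y := by
  have hPL : IsPicardLindelof (fun w x => φ x - k w) (⟨1, by simp⟩ : Icc (0 : ℝ) 1) 0 R 0 R K :=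
    { lipschitzOnWith := fun w _ => by
        simpa using hφ.sub (LipschitzWith.const (k w)).lipschitzOnWith
      continuousOn := fun _ _ => continuousOn_const.sub hk
      norm_le := hR
      mul_max_le := by simp }
  obtain ⟨y, hy1, hy⟩ := hPL.exists_eq_forall_mem_Icc_hasDerivWithinAt₀
  exact ⟨y, fun w hw => (hy w hw).continuousWithinAt,
    fun w hw => (hy w (Ioo_subset_Icc_self hw)).hasDerivAt (Icc_mem_nhds hw.1 hw.2), hy1⟩

lemma uniformCauchySeqOn {Φ Y : ℕ → ℝ → ℝ} (hΦ : TendstoUniformly Φ φ atTop)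
    (hmono : ∀ n, Monotone (Φ n)) (hY : ∀ n, IsTerminalSolution (Φ n) k (Y n)) :
    UniformCauchySeqOn Y atTop (Icc 0 1) := by
  refine Metric.uniformCauchySeqOn_iff.2 fun ε hε => ?_
  obtain ⟨N, hN⟩ := eventually_atTop.1 (Metric.tendstoUniformly_iff.1 hΦ (ε / 4) (by positivity))
  have hle (m n : ℕ) (hm : N ≤ m) (hn : N ≤ n) : ∀ w ∈ Icc (0 : ℝ) 1, Y m w ≤ Y n w + ε / 2 :=
    (hY m).le_add (hmono m) (hY n) (by positivity) fun w _ => by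
      have hm' := abs_lt.1 (hN m hm (Y n w))
      have hn' := abs_lt.1 (hN n hn (Y n w))
      linarith
  refine ⟨N, fun m hm n hn w hw => ?_⟩
  rw [Real.dist_eq, abs_lt]
  constructor <;> linarith [hle m n hm hn w hw, hle n m hn hm w hw]

lemma exists_of_tendstoUniformly {Φ : ℕ → ℝ → ℝ} (hφ : UniformContinuous φ)
    (hΦ : TendstoUniformly Φ φ atTop) (hmono : ∀ n, Monotone (Φ n))
    (hex : ∀ n, ∃ y, IsTerminalSolution (Φ n) k y) : ∃ y, IsTerminalSolution φ k y := by
  choose Y hY using hex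
  have hcauchy := uniformCauchySeqOn hΦ hmono hY
  have hpt : ∀ w ∈ Icc (0 : ℝ) 1, ∃ l, Tendsto (fun n => Y n w) atTop (𝓝 l) :=
    fun w hw => cauchySeq_tendsto_of_complete (hcauchy.cauchySeq hw)
  choose! y hy using hpt
  have hlim : TendstoUniformlyOn Y y atTop (Icc 0 1) := hcauchy.tendstoUniformlyOn_of_tendsto hy
  have hlim' : TendstoUniformlyOn (fun n w => Φ n (Y n w) - k w) (fun w => φ (y w) - k w)
      atTop (Ioo 0 1) := by
    refine Metric.tendstoUniformlyOn_iff.2 fun ε hε => ?_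
    filter_upwards [Metric.tendstoUniformly_iff.1 hΦ (ε / 2) (half_pos hε),
      Metric.tendstoUniformlyOn_iff.1 (hφ.comp_tendstoUniformlyOn hlim) (ε / 2) (half_pos hε)]
      with n hn hn' w hw
    rw [dist_sub_right]
    exact (dist_triangle _ (φ (Y n w)) _).trans_lt
      ((add_lt_add (hn' w (Ioo_subset_Icc_self hw)) (hn _)).trans_eq (add_halves ε))
  exact ⟨y, hlim.continuousOn (.of_forall fun n => (hY n).continuousOn),
    fun w hw => hasDerivAt_of_tendstoUniformlyOn isOpen_Ioo hlim'
      (.of_forall fun n => (hY n).hasDerivAt) (fun x hx => hy x (Ioo_subset_Icc_self hx)) hw,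
    tendsto_nhds_unique (hy 1 (right_mem_Icc.2 zero_le_one)) (by simp [(hY _).apply_one])⟩

lemma exists_mul_sqrt_max {a δ : ℝ} (ha : 0 ≤ a) (hδ : 0 < δ) (hδ1 : δ ≤ 1)
    (hk : ContinuousOn k (Icc 0 1)) :
    ∃ y, IsTerminalSolution (fun x => a * √(max x δ)) k y := by
  obtain ⟨M, hM⟩ := isCompact_Icc.exists_bound_of_continuousOn hk
  have hM0 : 0 ≤ M := (norm_nonneg _).trans (hM 0 (left_mem_Icc.2 zero_le_one))
  -- The radius `R = q ^ 2` satisfies `a √R + M ≤ R`, so that the field is bounded by `R`.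
  set q : ℝ≥0 := a.toNNReal + M.toNNReal + 1 with hq
  have hqR : (q : ℝ) = a + M + 1 := by simp [hq, ha, hM0]
  refine exists_of_lipschitzOnWith (R := q ^ 2)
    ((lipschitzWith_smul a).comp (lipschitzWith_sqrt_max hδ)).lipschitzOnWith hk fun w hw x hx => ?_
  have hx' : |x| ≤ (q : ℝ) ^ 2 := by simpa using hx
  have hsqrt : √(max x δ) ≤ q :=
    Real.sqrt_le_iff.2 ⟨q.2, max_le ((le_abs_self x).trans hx') (by nlinarith)⟩
  calc |a * √(max x δ) - k w| ≤ |a * √(max x δ)| + |k w| := abs_sub _ _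
    _ ≤ a * q + M := by
        rw [abs_of_nonneg (by positivity)]
        gcongr
        exact hM w hw
    _ ≤ (q ^ 2 : ℝ≥0) := by push_cast; nlinarith

lemma exists_mul_sqrt {a : ℝ} (ha : 0 ≤ a) (hk : ContinuousOn k (Icc 0 1)) :
    ∃ y, IsTerminalSolution (fun x => a * √x) k y := by
  have hδ : Tendsto (fun n : ℕ => a * √(1 / ((n : ℝ) + 1))) atTop (𝓝 0) := by
    simpa using ((Real.continuous_sqrt.tendsto 0).comp
      tendsto_one_div_add_atTop_nhds_zero_nat).const_mul a
  refine exists_of_tendstoUniformly (Φ := fun n x => a * √(max x (1 / ((n : ℝ) + 1))))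
    ((lipschitzWith_smul a).uniformContinuous.comp uniformContinuous_sqrt) ?_
    (fun n x z hxz => by dsimp only; gcongr)
    fun n => exists_mul_sqrt_max ha (by positivity)
      (div_le_one_of_le₀ (by linarith [n.cast_nonneg (α := ℝ)]) (by positivity)) hk
  refine Metric.tendstoUniformly_iff.2 fun ε hε => ?_
  filter_upwards [hδ.eventually_lt_const hε] with n hn x
  have hdiff := sqrt_max_sub_sqrt_mem_Icc (δ := 1 / ((n : ℝ) + 1)) x
  rw [dist_comm, Real.dist_eq, ← mul_sub, abs_of_nonneg (mul_nonneg ha hdiff.1)]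
  exact (mul_le_mul_of_nonneg_left hdiff.2 ha).trans_lt hn

end IsTerminalSolution

/-! ### Orbits of scalar autonomous equations -/

lemma tendsto_nhdsLT_atTop_of_div_le_deriv {T T' : ℝ → ℝ} {a b A : ℝ} (hab : a < b) (hA : 0 < A)
    (hT : ∀ w ∈ Ioo a b, HasDerivAt T (T' w) w) (hT' : ∀ w ∈ Ioo a b, A / (b - w) ≤ T' w) :
    Tendsto T (𝓝[<] b) atTop := by
  have hlog (w : ℝ) (hw : w ∈ Ioo a b) :
      HasDerivAt (fun w => A * Real.log (b - w)) (-(A / (b - w))) w := by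
    convert! (((hasDerivAt_id w).const_sub b).log (sub_pos.2 hw.2).ne').const_mul A using 1
    simp only [id]
    ring
  have hd (w : ℝ) (hw : w ∈ Ioo a b) := (hT w hw).add (hlog w hw)
  have hmono : MonotoneOn (fun w => T w + A * Real.log (b - w)) (Ioo a b) :=
    monotoneOn_of_hasDerivWithinAt_nonneg (convex_Ioo a b)
      (fun w hw => (hd w hw).continuousAt.continuousWithinAt)
      (fun w hw => (hd w (interior_subset hw)).hasDerivWithinAt)
      fun w hw => by linarith [hT' w (interior_subset hw)]
  have hsub : Tendsto (fun w => b - w) (𝓝[<] b) (𝓝[>] 0) := by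
    refine tendsto_nhdsWithin_iff.2
      ⟨?_, eventually_mem_nhdsWithin.mono fun w hw => mem_Ioi.2 (sub_pos.2 hw)⟩
    exact ((continuous_const.sub continuous_id).tendsto' b 0 (sub_self b)).mono_left
      nhdsWithin_le_nhds
  have hlim : Tendsto (fun w => -(A * Real.log (b - w))) (𝓝[<] b) atTop :=
    tendsto_neg_atBot_atTop.comp ((Real.tendsto_log_nhdsGT_zero.comp hsub).const_mul_atBot hA)
  obtain ⟨m, hm⟩ := exists_between hab
  refine tendsto_atTop_mono' _ ?_ (tendsto_atTop_add_const_left _ (T m + A * Real.log (b - m)) hlim)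
  filter_upwards [Ioo_mem_nhdsLT hm.2] with w hw
  linarith [hmono hm ⟨hm.1.trans hw.1, hw.2⟩ hw.1.le]

lemma tendsto_nhdsGT_atBot_of_div_le_deriv {T T' : ℝ → ℝ} {a b A : ℝ} (hab : a < b) (hA : 0 < A)
    (hT : ∀ w ∈ Ioo a b, HasDerivAt T (T' w) w) (hT' : ∀ w ∈ Ioo a b, A / (w - a) ≤ T' w) :
    Tendsto T (𝓝[>] a) atBot := by
  have hmem (x : ℝ) (hx : x ∈ Ioo (-b) (-a)) : -x ∈ Ioo a b := ⟨lt_neg.1 hx.2, neg_lt.1 hx.1⟩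
  have hreflect : Tendsto (fun x => -T (-x)) (𝓝[<] (-a)) atTop :=
    tendsto_nhdsLT_atTop_of_div_le_deriv (neg_lt_neg hab) hA
      (T' := fun x => T' (-x))
      (fun x hx => by
        simpa [Function.comp_def] using
          ((hT (-x) (hmem x hx)).scomp x (hasDerivAt_neg x)).fun_neg)
      fun x hx => by simpa [sub_eq_add_neg, add_comm] using hT' (-x) (hmem x hx)
  simpa [Function.comp_def] using tendsto_neg_atTop_atBot.comp (hreflect.comp tendsto_neg_nhdsGT)

lemma exists_hasDerivAt_Ioo {q : ℝ → ℝ} {a b : ℝ} (hq : ContinuousOn q (Ioo a b)) :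
    ∃ T : ℝ → ℝ, ∀ w ∈ Ioo a b, HasDerivAt T (q w) w := by
  rcases (Ioo a b).eq_empty_or_nonempty with hempty | ⟨m, hm⟩
  · simp [hempty]
  · exact ⟨fun w => ∫ x in m..w, q x, fun w hw => intervalIntegral.integral_hasDerivAt_right
      (hq.mono (ordConnected_Ioo.uIcc_subset hm hw)).intervalIntegrable
      (hq.stronglyMeasurableAtFilter isOpen_Ioo w hw) (hq.continuousAt (Ioo_mem_nhds hw.1 hw.2))⟩

lemma exists_inverse_Ioo_of_hasDerivAt_pos {T T' : ℝ → ℝ} {a b : ℝ} (hab : a < b)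
    (hT : ∀ w ∈ Ioo a b, HasDerivAt T (T' w) w) (hpos : ∀ w ∈ Ioo a b, 0 < T' w)
    (hbot : Tendsto T (𝓝[>] a) atBot) (htop : Tendsto T (𝓝[<] b) atTop) :
    ∃ V : ℝ → ℝ, (∀ t, V t ∈ Ioo a b) ∧ (∀ t, HasDerivAt V (T' (V t))⁻¹ t) ∧
      Tendsto V atBot (𝓝 a) ∧ Tendsto V atTop (𝓝 b) := by
  have hcont : ContinuousOn T (Ioo a b) := fun w hw => (hT w hw).continuousAt.continuousWithinAt
  have hmono : StrictMonoOn T (Ioo a b) :=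
    strictMonoOn_of_hasDerivWithinAt_pos (convex_Ioo a b) hcont
      (fun w hw => (hT w (interior_subset hw)).hasDerivWithinAt)
      fun w hw => hpos w (interior_subset hw)
  have hsurj : SurjOn T (Ioo a b) univ := hcont.surjOn_of_tendsto (nonempty_Ioo.2 hab)
    ((tendsto_comp_coe_Ioo_atBot hab).2 hbot) ((tendsto_comp_coe_Ioo_atTop hab).2 htop)
  let e : Ioo a b ≃o ℝ := StrictMono.orderIsoOfSurjective (fun w : Ioo a b => T w)
    (fun x z hxz => hmono x.2 z.2 hxz) (surjOn_iff_surjective.1 hsurj)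
  refine ⟨fun t => e.symm t, fun t => (e.symm t).2, fun t => ?_,
    ((tendsto_Ioo_atBot ..).1 e.symm.tendsto_atBot).mono_right nhdsWithin_le_nhds,
    ((tendsto_Ioo_atTop ..).1 e.symm.tendsto_atTop).mono_right nhdsWithin_le_nhds⟩
  exact (hT _ (e.symm t).2).of_local_left_inverse
    (continuous_subtype_val.comp e.symm.continuous).continuousAt (hpos _ (e.symm t).2).ne'
    (.of_forall e.apply_symm_apply)

lemma exists_orbit_Ioo {p : ℝ → ℝ} {a b A B : ℝ} (hab : a < b) (hp : ContinuousOn p (Ioo a b))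
    (hpos : ∀ w ∈ Ioo a b, 0 < p w) (hA : ∀ w ∈ Ioo a b, p w ≤ A * (w - a))
    (hB : ∀ w ∈ Ioo a b, p w ≤ B * (b - w)) :
    ∃ V : ℝ → ℝ, (∀ t, V t ∈ Ioo a b) ∧ (∀ t, HasDerivAt V (p (V t)) t) ∧
      Tendsto V atBot (𝓝 a) ∧ Tendsto V atTop (𝓝 b) := by
  obtain ⟨m, hm⟩ := exists_between hab
  have hA0 : 0 < A := pos_of_mul_pos_left ((hpos m hm).trans_le (hA m hm)) (sub_pos.2 hm.1).le
  have hB0 : 0 < B := pos_of_mul_pos_left ((hpos m hm).trans_le (hB m hm)) (sub_pos.2 hm.2).le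
  have hinv {C d w : ℝ} (hw : w ∈ Ioo a b) (hle : p w ≤ C * d) : C⁻¹ / d ≤ (p w)⁻¹ := by
    rw [div_eq_mul_inv, ← mul_inv]
    exact inv_anti₀ (hpos w hw) hle
  obtain ⟨T, hT⟩ := exists_hasDerivAt_Ioo (hp.inv₀ fun w hw => (hpos w hw).ne')
  simpa only [Pi.inv_apply, inv_inv] using exists_inverse_Ioo_of_hasDerivAt_pos hab hT
    (fun w hw => inv_pos.2 (hpos w hw))
    (tendsto_nhdsGT_atBot_of_div_le_deriv hab (inv_pos.2 hA0) hT fun w hw => hinv hw (hA w hw))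
    (tendsto_nhdsLT_atTop_of_div_le_deriv hab (inv_pos.2 hB0) hT fun w hw => hinv hw (hB w hw))

/-! ### Squared slopes of fronts -/

/-- The terminal value problem `y' = 2 c √y - 2 g(w)`, `y(1) = 0`, satisfied by the squared slope
`y = W'²` of a front `W` of speed `c`, regarded as a function of the height `w = W`. -/
abbrev IsSquaredSlope (c : ℝ) (g y : ℝ → ℝ) : Prop :=
  IsTerminalSolution (fun x => 2 * c * √x) (fun w => 2 * g w) y

lemma exists_isSquaredSlope {c : ℝ} {g : ℝ → ℝ} (hc : 0 ≤ c) (hg : ContinuousOn g (Icc 0 1)) :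
    ∃ y, IsSquaredSlope c g y :=
  IsTerminalSolution.exists_mul_sqrt (by positivity) (hg.const_mul 2)

lemma isFront_comp_neg {c : ℝ} {g p V : ℝ → ℝ} (hg : ContinuousOn g (Ioo 0 1))
    (hp : ∀ w ∈ Ioo (0 : ℝ) 1, HasDerivAt p (c - g w / p w) w)
    (hpos : ∀ w ∈ Ioo (0 : ℝ) 1, 0 < p w) (hmem : ∀ t, V t ∈ Ioo 0 1)
    (hV : ∀ t, HasDerivAt V (p (V t)) t) (hbot : Tendsto V atBot (𝓝 0))
    (htop : Tendsto V atTop (𝓝 1)) :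
    IsFront g c (fun ξ => V (-ξ)) := by
  have hd (ξ : ℝ) : HasDerivAt (fun ξ => V (-ξ)) (-p (V (-ξ))) ξ := by
    simpa [Function.comp_def] using (hV (-ξ)).comp ξ (hasDerivAt_neg ξ)
  have hdd (ξ : ℝ) : HasDerivAt (fun ξ => -p (V (-ξ))) (c * p (V (-ξ)) - g (V (-ξ))) ξ := by
    refine ((hp _ (hmem (-ξ))).comp ξ (hd ξ)).neg.congr_deriv ?_
    field_simp [(hpos _ (hmem (-ξ))).ne']
  have hderiv : deriv (fun ξ => V (-ξ)) = fun ξ => -p (V (-ξ)) := funext fun ξ => (hd ξ).deriv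
  have hderiv2 : deriv (fun ξ => -p (V (-ξ))) = fun ξ => c * p (V (-ξ)) - g (V (-ξ)) :=
    funext fun ξ => (hdd ξ).deriv
  have hcont : Continuous (fun ξ => V (-ξ)) :=
    continuous_iff_continuousAt.2 fun ξ => (hd ξ).continuousAt
  have hcomp {q : ℝ → ℝ} (hq : ContinuousOn q (Ioo 0 1)) : Continuous (fun ξ => q (V (-ξ))) :=
    hq.comp_continuous hcont fun ξ => hmem (-ξ)
  refine ⟨?_, fun ξ => ?_, htop.comp tendsto_neg_atBot_atTop, hbot.comp tendsto_neg_atTop_atBot,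
    fun ξ => by simpa [hderiv] using hpos _ (hmem (-ξ))⟩
  · refine contDiff_succ_iff_deriv (n := 1) |>.2
      ⟨fun ξ => (hd ξ).differentiableAt, by simp, hderiv ▸ contDiff_one_iff_deriv.2
        ⟨fun ξ => (hdd ξ).differentiableAt, hderiv2 ▸ ?_⟩⟩
    exact ((hcomp fun w hw => (hp w hw).continuousAt.continuousWithinAt).const_mul c).sub (hcomp hg)
  · rw [hderiv, hderiv2]
    ring

namespace IsFront

variable {c : ℝ} {g y W : ℝ → ℝ}

lemma hasDerivAt (hW : IsFront g c W) (ξ : ℝ) : HasDerivAt W (deriv W ξ) ξ :=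
  (hW.1.differentiable two_ne_zero ξ).hasDerivAt

lemma hasDerivAt_deriv (hW : IsFront g c W) (ξ : ℝ) :
    HasDerivAt (deriv W) (-(c * deriv W ξ + g (W ξ))) ξ :=
  ((hW.1.differentiable_deriv_two ξ).hasDerivAt).congr_deriv (by linarith [hW.2.1 ξ])

lemma mem_Ioo (hW : IsFront g c W) (ξ : ℝ) : W ξ ∈ Ioo 0 1 := by
  have hanti : StrictAnti W := strictAnti_of_deriv_neg hW.2.2.2.2
  exact ⟨(hanti.antitone.le_of_tendsto hW.2.2.2.1 _).trans_lt (hanti (lt_add_one ξ)),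
    (hanti (sub_one_lt ξ)).trans_le (hanti.antitone.ge_of_tendsto hW.2.2.1 _)⟩

lemma monotone_max_squaredSlope_sub (hW : IsFront g c W) (hc : 0 ≤ c)
    (hy : IsSquaredSlope c g y) :
    Monotone (fun t => max (y (W (-t)) - deriv W (-t) ^ 2) 0) := by
  have hd (t : ℝ) : HasDerivAt (fun t => y (W (-t)) - deriv W (-t) ^ 2)
      (-(2 * c * deriv W (-t) * (√(y (W (-t))) + deriv W (-t)))) t := by
    have hWt := (hW.hasDerivAt (-t)).comp t (hasDerivAt_neg t)
    have hW't := (hW.hasDerivAt_deriv (-t)).comp t (hasDerivAt_neg t)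
    exact (((hy.hasDerivAt _ (hW.mem_Ioo (-t))).comp t hWt).sub (hW't.pow 2)).congr_deriv
      (by simp only [Function.comp_apply]; ring)
  refine monotoneOn_univ.1 (monotoneOn_max_zero_of_hasDerivAt convex_univ
    (fun t _ => (hd t).continuousAt.continuousWithinAt) (fun t _ => hd t) fun t _ hpos => ?_)
  have hneg := hW.2.2.2.2 (-t)
  have hsqrt : -deriv W (-t) ≤ √(y (W (-t))) :=
    Real.le_sqrt_of_sq_le (by linarith [neg_sq (deriv W (-t))])
  nlinarith [mul_nonneg (mul_nonneg hc (neg_nonneg.2 hneg.le)) (neg_le_iff_add_nonneg.1 hsqrt)]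

lemma squaredSlope_le (hW : IsFront g c W) (hc : 0 ≤ c) (hy : IsSquaredSlope c g y) (ξ : ℝ) :
    y (W ξ) ≤ deriv W ξ ^ 2 := by
  have hlim : Tendsto (fun t => max (y (W (-t))) 0) atTop (𝓝 0) := by
    have hW1 : Tendsto (fun t => W (-t)) atTop (𝓝[Icc 0 1] 1) := tendsto_nhdsWithin_iff.2
      ⟨hW.2.2.1.comp tendsto_neg_atTop_atBot,
        .of_forall fun t => Ioo_subset_Icc_self (hW.mem_Ioo (-t))⟩
    have hy1 := hy.continuousOn 1 (right_mem_Icc.2 zero_le_one)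
    simpa [hy.apply_one] using (hy1.tendsto.comp hW1).max (tendsto_const_nhds (x := 0))
  have hle : max (y (W ξ) - deriv W ξ ^ 2) 0 ≤ 0 := by
    refine ge_of_tendsto hlim ?_
    filter_upwards [eventually_ge_atTop (-ξ)] with t ht
    have hξt := hW.monotone_max_squaredSlope_sub hc hy ht
    simp only [neg_neg] at hξt
    exact hξt.trans (max_le_max_right 0 (sub_le_self _ (sq_nonneg _)))
  linarith [(le_max_left _ _).trans hle]

lemma squaredSlope_zero_nonpos (hW : IsFront g c W) (hc : 0 ≤ c) (hy : IsSquaredSlope c g y) :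
    y 0 ≤ 0 := by
  obtain ⟨ξ, hξ, hderiv⟩ := exists_tendsto_deriv_zero (hW.1.differentiable two_ne_zero) hW.2.2.2.1
  have hW0 : Tendsto (fun n => W (ξ n)) atTop (𝓝[Icc 0 1] 0) := tendsto_nhdsWithin_iff.2
    ⟨hW.2.2.2.1.comp hξ, .of_forall fun n => Ioo_subset_Icc_self (hW.mem_Ioo (ξ n))⟩
  have hy0 := (hy.continuousOn 0 (left_mem_Icc.2 zero_le_one)).tendsto.comp hW0
  exact le_of_tendsto_of_tendsto' hy0 (by simpa using hderiv.pow 2)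
    fun n => hW.squaredSlope_le hc hy (ξ n)

end IsFront

namespace IsSquaredSlope

variable {c M ε : ℝ} {g l y z : ℝ → ℝ}

lemma monotone_mul_sqrt (hc : 0 ≤ c) : Monotone (fun x => 2 * c * √x) :=
  fun x z hxz => by dsimp only; gcongr

lemma le_add (hc : 0 ≤ c) (hy : IsSquaredSlope c g y) (hz : IsSquaredSlope c l z) (hε : 0 ≤ ε)
    (h : ∀ w ∈ Ioo (0 : ℝ) 1, g w ≤ l w + ε) : ∀ w ∈ Icc (0 : ℝ) 1, y w ≤ z w + 2 * ε :=
  IsTerminalSolution.le_add (monotone_mul_sqrt hc) hy hz (by positivity)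
    fun w hw => by linarith [h w hw]

lemma pos (hc : 0 ≤ c) (hg : ∀ w ∈ Ioo (0 : ℝ) 1, 0 < g w) (hy : IsSquaredSlope c g y) :
    ∀ w ∈ Ioo (0 : ℝ) 1, 0 < y w :=
  IsTerminalSolution.pos (monotone_mul_sqrt hc) (by simp) (fun w hw => by simpa using hg w hw) hy

lemma zero_nonneg (hc : 0 ≤ c) (hg : ∀ w ∈ Ioo (0 : ℝ) 1, 0 < g w)
    (hy : IsSquaredSlope c g y) : 0 ≤ y 0 :=
  IsTerminalSolution.nonneg (monotone_mul_sqrt hc) (by simp)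
    (fun w hw => by simpa using (hg w hw).le) hy 0 (left_mem_Icc.2 zero_le_one)

lemma hasDerivAt_sqrt (hy : IsSquaredSlope c g y) {w : ℝ} (hw : w ∈ Ioo 0 1) (hpos : 0 < y w) :
    HasDerivAt (fun w => √(y w)) (c - g w / √(y w)) w := by
  refine ((hy.hasDerivAt w hw).sqrt hpos.ne').congr_deriv ?_
  field_simp [(Real.sqrt_pos.2 hpos).ne']

lemma sqrt_le_mul_one_sub (hc : 0 ≤ c) (hM : ∀ w ∈ Icc (0 : ℝ) 1, g w ≤ M * (1 - w))
    (hy : IsSquaredSlope c g y) {w : ℝ} (hw : w ∈ Icc 0 1) : √(y w) ≤ √M * (1 - w) := by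
  have hle : y w ≤ M * (1 - w) ^ 2 := by
    simpa using IsTerminalSolution.le_add (monotone_mul_sqrt hc) hy (.mul_one_sub_sq M) le_rfl
      (fun x hx => by
        have hsqrt : 0 ≤ 2 * c * √(M * (1 - x) ^ 2) := by positivity
        simp only [Pi.zero_apply]
        linarith [hM x (Ioo_subset_Icc_self hx)]) w hw
  calc √(y w) ≤ √(M * (1 - w) ^ 2) := Real.sqrt_le_sqrt hle
    _ = √M * (1 - w) := by rw [Real.sqrt_mul' M (sq_nonneg _), Real.sqrt_sq (sub_nonneg.2 hw.2)]

lemma sqrt_le_mul (hc : 0 ≤ c) (hg : ∀ w ∈ Ioo (0 : ℝ) 1, 0 < g w) (hy : IsSquaredSlope c g y)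
    (hy0 : y 0 = 0) {w : ℝ} (hw : w ∈ Icc 0 1) : √(y w) ≤ c * w := by
  have hmono : MonotoneOn (fun w => c * w - √(y w)) (Icc 0 1) := by
    refine monotoneOn_of_hasDerivWithinAt_nonneg (f' := fun w => g w / √(y w)) (convex_Icc 0 1)
      ((continuousOn_const.mul continuousOn_id).sub hy.continuousOn.sqrt)
      (fun x hx => ?_) fun x hx => ?_ <;> rw [interior_Icc] at hx
    · have hd := hy.hasDerivAt_sqrt hx (hy.pos hc hg x hx)
      exact ((((hasDerivAt_id x).const_mul c).sub hd).congr_deriv (by ring)).hasDerivWithinAt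
    · exact div_nonneg (hg x hx).le (Real.sqrt_nonneg _)
  simpa [hy0] using hmono (left_mem_Icc.2 zero_le_one) hw hw.1

lemma exists_isFront (hc : 0 ≤ c) (hcont : ContinuousOn g (Icc 0 1))
    (hg : ∀ w ∈ Ioo (0 : ℝ) 1, 0 < g w) (hM : ∀ w ∈ Icc (0 : ℝ) 1, g w ≤ M * (1 - w))
    (hy : IsSquaredSlope c g y) (hy0 : y 0 = 0) : ∃ W, IsFront g c W := by
  have hslope (w : ℝ) (hw : w ∈ Ioo 0 1) := hy.hasDerivAt_sqrt hw (hy.pos hc hg w hw)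
  have hpos (w : ℝ) (hw : w ∈ Ioo 0 1) : 0 < √(y w) := Real.sqrt_pos.2 (hy.pos hc hg w hw)
  obtain ⟨V, hmem, hV, hbot, htop⟩ := exists_orbit_Ioo zero_lt_one
    (fun w hw => (hslope w hw).continuousAt.continuousWithinAt) hpos
    (fun w hw => by simpa using hy.sqrt_le_mul hc hg hy0 (Ioo_subset_Icc_self hw))
    (fun w hw => hy.sqrt_le_mul_one_sub hc hM (Ioo_subset_Icc_self hw))
  exact ⟨_, isFront_comp_neg (hcont.mono Ioo_subset_Icc_self) hslope hpos hmem hV hbot htop⟩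

lemma exists_isFront_iff (hc : 0 ≤ c) (hcont : ContinuousOn g (Icc 0 1))
    (hg : ∀ w ∈ Ioo (0 : ℝ) 1, 0 < g w) (hM : ∀ w ∈ Icc (0 : ℝ) 1, g w ≤ M * (1 - w))
    (hy : IsSquaredSlope c g y) : (∃ W, IsFront g c W) ↔ y 0 ≤ 0 :=
  ⟨fun ⟨_, hW⟩ => hW.squaredSlope_zero_nonpos hc hy,
    fun hy0 => hy.exists_isFront hc hcont hg hM (hy0.antisymm (hy.zero_nonneg hc hg))⟩

section Family

variable {Λ : Type*} {S : Set Λ} {f : ℝ → Λ → ℝ} {Y : Λ → ℝ → ℝ}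

lemma monotoneOn_param [Preorder Λ] (hc : 0 ≤ c)
    (hY : ∀ s ∈ S, IsSquaredSlope c (fun w => f w s) (Y s))
    (hf : ∀ w ∈ Ioo (0 : ℝ) 1, MonotoneOn (f w) S) {w : ℝ} (hw : w ∈ Icc 0 1) :
    MonotoneOn (fun s => Y s w) S := fun s hs t ht hst => by
  simpa using (hY s hs).le_add hc (hY t ht) le_rfl
    (fun x hx => by simpa using hf x hx hs ht hst) w hw

lemma continuousOn_param [TopologicalSpace Λ] (hc : 0 ≤ c)
    (hY : ∀ s ∈ S, IsSquaredSlope c (fun w => f w s) (Y s))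
    (hf : EquicontinuousOn (fun w : Ioo (0 : ℝ) 1 => f w) S) {w : ℝ} (hw : w ∈ Icc 0 1) :
    ContinuousOn (fun s => Y s w) S := fun s hs => by
  refine Metric.tendsto_nhds.2 fun ε hε => ?_
  have hε4 : 0 < ε / 4 := by positivity
  filter_upwards [hf s hs _ (Metric.dist_mem_uniformity hε4), eventually_mem_nhdsWithin]
    with t hclose ht
  have hclose' (x : ℝ) (hx : x ∈ Ioo 0 1) : |f x s - f x t| < ε / 4 := hclose ⟨x, hx⟩
  have hst := (hY s hs).le_add hc (hY t ht) hε4.le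
    (fun x hx => by linarith [(abs_lt.1 (hclose' x hx)).2]) w hw
  have hts := (hY t ht).le_add hc (hY s hs) hε4.le
    (fun x hx => by linarith [(abs_lt.1 (hclose' x hx)).1]) w hw
  rw [Real.dist_eq, abs_lt]
  constructor <;> linarith

end Family

end IsSquaredSlope

lemma exists_isFront_iff_le {f : ℝ → ℝ → ℝ} {c a s₁ s₂ : ℝ} (hc : 0 ≤ c)
    (hcont : ∀ s, a ≤ s → ContinuousOn (fun w => f w s) (Icc 0 1))
    (hpos : ∀ s, a ≤ s → ∀ w ∈ Ioo (0 : ℝ) 1, 0 < f w s)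
    (hone : ∀ s, a ≤ s → ∃ M, ∀ w ∈ Icc (0 : ℝ) 1, f w s ≤ M * (1 - w))
    (hequi : EquicontinuousOn (fun w : Ioo (0 : ℝ) 1 => f w) (Ici a))
    (hmono : ∀ w ∈ Ioo (0 : ℝ) 1, MonotoneOn (f w) (Ici a)) (hs₁ : a ≤ s₁) (hs : s₁ ≤ s₂)
    (h₁ : ∃ W, IsFront (fun w => f w s₁) c W) (h₂ : ¬∃ W, IsFront (fun w => f w s₂) c W) :
    ∃ t ∈ Ico s₁ s₂, ∀ s, a ≤ s → ((∃ W, IsFront (fun w => f w s) c W) ↔ s ≤ t) := by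
  choose! Y hY using fun s hs => exists_isSquaredSlope hc (hcont s hs)
  have hfront (s : ℝ) (hs : a ≤ s) : (∃ W, IsFront (fun w => f w s) c W) ↔ Y s 0 ≤ 0 :=
    have ⟨_, hM⟩ := hone s hs
    (hY s hs).exists_isFront_iff hc (hcont s hs) (hpos s hs) hM
  have hzero : (0 : ℝ) ∈ Icc 0 1 := left_mem_Icc.2 zero_le_one
  obtain ⟨t, ht, hthreshold⟩ := exists_threshold_of_monotoneOn
    (IsSquaredSlope.monotoneOn_param hc hY hmono hzero)
    (IsSquaredSlope.continuousOn_param hc hY hequi hzero) hs₁ hs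
    ((hfront s₁ hs₁).1 h₁) (not_le.1 (mt (hfront s₂ (hs₁.trans hs)).2 h₂))
  exact ⟨t, ht, fun s hs => (hfront s hs).trans (hthreshold s hs)⟩

theorem threshold_exists_scalar_general {f : ℝ → ℝ → ℝ} {cstar : ℝ → ℝ} {a c₀ s₁ s₂ : ℝ}
    (hc₀ : 0 ≤ c₀)
    (hcont : ∀ s, a ≤ s → ContinuousOn (fun w => f w s) (Icc 0 1))
    (hpos : ∀ s, a ≤ s → ∀ w ∈ Ioo (0 : ℝ) 1, 0 < f w s)
    (hone : ∀ s, a ≤ s → ∃ M, ∀ w ∈ Icc (0 : ℝ) 1, f w s ≤ M * (1 - w))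
    (hequi : EquicontinuousOn (fun w : Ioo (0 : ℝ) 1 => f w) (Ici a))
    (hmono : ∀ w ∈ Ioo (0 : ℝ) 1, MonotoneOn (f w) (Ici a))
    (hmin : ∀ s, a ≤ s → c₀ ≤ cstar s ∧
      ∀ c, (∃ W : ℝ → ℝ, IsFront (fun w => f w s) c W) ↔ cstar s ≤ c)
    (hs₁ : a ≤ s₁) (hc₁ : cstar s₁ = c₀) (hs₂ : s₁ < s₂) (hc₂ : c₀ < cstar s₂) :
    ∃ sstar : ℝ, s₁ ≤ sstar ∧ sstar < s₂ ∧
      (∀ s, a ≤ s → s ≤ sstar → cstar s = c₀) ∧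
      (∀ s, sstar < s → c₀ < cstar s) := by
  have hfront (s : ℝ) (hs : a ≤ s) := (hmin s hs).2 c₀
  obtain ⟨t, ⟨ht₁, ht₂⟩, ht⟩ := exists_isFront_iff_le hc₀ hcont hpos hone hequi hmono hs₁ hs₂.le
    ((hfront s₁ hs₁).2 hc₁.le) ((hfront s₂ (hs₁.trans hs₂.le)).not.2 hc₂.not_ge)
  refine ⟨t, ht₁, ht₂, fun s hs hst => ?_, fun s hts => ?_⟩
  · exact ((hfront s hs).1 ((ht s hs).2 hst)).antisymm (hmin s hs).1
  · have hs : a ≤ s := (hs₁.trans ht₁).trans hts.le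
    exact not_le.1 fun hle => hts.not_ge ((ht s hs).1 ((hfront s hs).2 hle))

/-- Under (A1)-(A5) there is a threshold `s* ∈ [s₁, s₂)` such that the minimal speed is
`2` on `[0, s*]` and `> 2` on `(s*, ∞)`. -/
theorem threshold_exists_scalar
    (f : ℝ → ℝ → ℝ) (cstar : ℝ → ℝ) (s₁ s₂ : ℝ)
    -- (A1) monostable condition, with ∂_w f(0;s) = 1
    (hA1 : ∀ s, 0 ≤ s →
      ContDiffOn ℝ 2 (fun w => f w s) (Icc 0 1) ∧
      f 0 s = 0 ∧ f 1 s = 0 ∧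
      derivWithin (fun w => f w s) (Icc 0 1) 0 = 1 ∧
      derivWithin (fun w => f w s) (Icc 0 1) 1 < 0 ∧
      (∀ w ∈ Ioo (0:ℝ) 1, 0 < f w s))
    -- (A2) Lipschitz continuity in the parameter, for f, f', f''
    (hA2 : ∃ L₀ > (0:ℝ), ∀ n : ℕ, n ≤ 2 → ∀ w ∈ Icc (0:ℝ) 1, ∀ sa sb : ℝ, 0 ≤ sa → 0 ≤ sb →
      |iteratedDerivWithin n (fun w => f w sa) (Icc 0 1) w -
        iteratedDerivWithin n (fun w => f w sb) (Icc 0 1) w| ≤ L₀ * |sa - sb|)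
    -- (A3) monotonicity condition
    (hA3 : ∀ s sh : ℝ, 0 ≤ s → s < sh →
      (∀ w ∈ Ioo (0:ℝ) 1, f w s < f w sh) ∧
      iteratedDerivWithin 2 (fun w => f w s) (Icc 0 1) 0 <
        iteratedDerivWithin 2 (fun w => f w sh) (Icc 0 1) 0)
    -- minimal-speed characterization: fronts exist exactly for speeds c ≥ c*(s) ≥ 2
    (hmin : ∀ s, 0 ≤ s → 2 ≤ cstar s ∧
      ∀ c, (∃ W : ℝ → ℝ, IsFront (fun w => f w s) c W) ↔ cstar s ≤ c)
    -- (A4) KPP condition at s₁, hence linear selection there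
    (hs₁ : 0 < s₁) (hA4 : ∀ w ∈ Icc (0:ℝ) 1, f w s₁ ≤ w) (hc₁ : cstar s₁ = 2)
    -- (A5) nonlinear selection at some s₂ > s₁
    (hs₂ : s₁ < s₂) (hc₂ : 2 < cstar s₂) :
    ∃ sstar : ℝ, s₁ ≤ sstar ∧ sstar < s₂ ∧
      (∀ s, 0 ≤ s → s ≤ sstar → cstar s = 2) ∧
      (∀ s, sstar < s → 2 < cstar s) := by
  obtain ⟨_, -, hlip⟩ := hA2
  exact threshold_exists_scalar_general zero_le_two (fun s hs => (hA1 s hs).1.continuousOn)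
    (fun s hs => (hA1 s hs).2.2.2.2.2)
    (fun s hs => exists_le_mul_sub_of_contDiffOn zero_lt_one
      ((hA1 s hs).1.of_le one_le_two) (hA1 s hs).2.2.1)
    (equicontinuousOn_of_abs_sub_le fun w s hs t ht => by
      simpa using hlip 0 (by simp) w (Ioo_subset_Icc_self w.2) s t hs ht)
    (fun w hw => StrictMonoOn.monotoneOn fun s hs t _ hst => (hA3 s t hs hst).1 w hw)
    hmin hs₁.le hc₁ hs₂ hc₂
end
end

section
/- Let c > 0, let B : ℝ → ℝ be a continuous function having finite limits B(±∞) := lim_{ξ→±∞} B(ξ), and let z : ℝ → ℝ be a locally integrable measurable function satisfying c·z(ξ) = ∫_ℝ J(y) exp(∫_{ξ−y}^{ξ} z(s) ds) dy + B(ξ) for all ξ ∈ ℝ. Then z is uniformly continuous and bounded, the limits ω± := lim_{ξ→±∞} z(ξ) exist, and they are real roots of the characteristic equations c·ω⁺ = ∫_ℝ J(y) e^{ω⁺ y} dy + B(+∞) and c·ω⁻ = ∫_ℝ J(y) e^{ω⁻ y} dy + B(−∞). -/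
open Filter Asymptotics MeasureTheory Set intervalIntegral

noncomputable section

/-- A continuous, nonnegative, even, compactly supported dispersal kernel of total mass 1. -/
def IsKernel (J : ℝ → ℝ) : Prop :=
  Continuous J ∧ (∀ x, 0 ≤ J x) ∧ (∀ x, J (-x) = J x) ∧
  HasCompactSupport J ∧ (∫ x, J x) = 1

/-!
With `φ(x) = exp(-∫₀ˣ z)`, so that `z = -φ'/φ`, the equation becomes linear:
`c φ' = -(J * φ) - B φ`. Subtracting a constant `l` from `z` tilts the kernel to `J(y) e^{ly}` and
replaces `B` by `B - c l`. A tilt making both `B` and `z` nonnegative makes `φ` decreasing, and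
integrating the linear equation over a short interval then gives a Harnack inequality, which
bounds `z`.

Translates of the bounded, uniformly continuous `z` are precompact, and their limits along `ξ → ∞`
are entire solutions with constant `B(∞)`. A translate limit attaining `l₁ = liminf z` or
`l₂ = limsup z` is constant on arbitrarily long intervals by the maximum principle, so both values
are characteristic roots. If `l₁ < θ < l₂`, then `z` crosses upwards through `θ` before long
plateaus near `l₂`, which yields a translate limit `f` with `f(0) = θ` and `θ ≤ f` on `[0, ∞)`.
After the tilt by the root `l₁` the linear equation conserves the flux
`c φ(x) - ∫ K(y) ∫_{x-y}^x φ dy`, and the flux vanishes because `φ → 0` at `+∞`. Comparing with the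
constant solution `l₂ ≥ f` forces `f(0) = l₂`, a contradiction. The limit at `-∞` follows by
reflection.
-/

open scoped Topology

section Preliminaries

theorem exists_Icc_pos {f : ℝ → ℝ} {x : ℝ} (hf : ContinuousAt f x) (hx : 0 < f x) :
    ∃ b > x, ∀ y ∈ Icc x b, 0 < f y :=
  mem_nhdsGE_iff_exists_Icc_subset.1 (mem_nhdsWithin_of_mem_nhds (hf.eventually_const_lt hx))

theorem eq_zero_of_integral_eq_zero {X : Type*} [TopologicalSpace X] [MeasurableSpace X]
    [OpensMeasurableSpace X] {μ : Measure X} [μ.IsOpenPosMeasure] [IsFiniteMeasureOnCompacts μ]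
    {g : X → ℝ} (hg : Continuous g) (hgs : HasCompactSupport g) (hg0 : 0 ≤ g)
    (hint : ∫ x, g x ∂μ = 0) : g = 0 := by
  by_contra! hne
  obtain ⟨x, hx⟩ := Function.ne_iff.1 hne
  exact (hg.integral_pos_of_hasCompactSupport_nonneg_nonzero hgs hg0 hx).ne' hint

theorem exists_abs_le_of_hasCompactSupport {K : ℝ → ℝ} (hKs : HasCompactSupport K) :
    ∃ R > 0, ∀ y, K y ≠ 0 → |y| ≤ R :=
  hKs.isCompact.isBounded.exists_pos_norm_le.imp fun _ hR =>
    ⟨hR.1, fun y hy => hR.2 y (subset_tsupport K hy)⟩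

theorem integrable_mul_of_hasCompactSupport {X : Type*} [TopologicalSpace X] [MeasurableSpace X]
    [OpensMeasurableSpace X] {μ : Measure X} [IsFiniteMeasureOnCompacts μ] {K g : X → ℝ}
    (hK : Continuous K) (hKs : HasCompactSupport K) (hg : Continuous g) :
    Integrable (fun x => K x * g x) μ :=
  (hK.mul hg).integrable_of_hasCompactSupport hKs.mul_right

theorem hasDerivAt_integral_mul {X : Type*} [TopologicalSpace X] [MeasurableSpace X]
    [OpensMeasurableSpace X] {μ : Measure X} [IsFiniteMeasureOnCompacts μ] {K : X → ℝ}
    (hK : Continuous K) (hKs : HasCompactSupport K) {F F' : ℝ → X → ℝ}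
    (hF : ∀ x, Continuous (F x)) (hF' : Continuous (Function.uncurry F'))
    (hd : ∀ x y, HasDerivAt (F · y) (F' x y) x) (x₀ : ℝ) :
    HasDerivAt (fun x => ∫ y, K y * F x y ∂μ) (∫ y, K y * F' x₀ y ∂μ) x₀ := by
  obtain ⟨C, hC⟩ := ((isCompact_closedBall x₀ 1).prod hKs).exists_bound_of_continuousOn
    hF'.continuousOn
  have hF'x : Continuous (F' x₀) := hF'.comp (.prodMk_right x₀)
  refine (_root_.hasDerivAt_integral_of_dominated_loc_of_deriv_le (μ := μ)
    (F := fun x y => K y * F x y) (F' := fun x y => K y * F' x y) (bound := fun y => ‖K y‖ * C)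
    (Metric.closedBall_mem_nhds x₀ one_pos) ?_ ?_ ?_ ?_ ?_ ?_).2
  · exact .of_forall fun x =>
      (integrable_mul_of_hasCompactSupport hK hKs (hF x)).aestronglyMeasurable
  · exact integrable_mul_of_hasCompactSupport hK hKs (hF x₀)
  · exact (integrable_mul_of_hasCompactSupport hK hKs hF'x).aestronglyMeasurable
  · refine .of_forall fun y x hx => ?_
    rw [norm_mul]
    by_cases hy : y ∈ tsupport K
    · exact mul_le_mul_of_nonneg_left (hC (x, y) ⟨hx, hy⟩) (norm_nonneg _)
    · simp [image_eq_zero_of_notMem_tsupport hy]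
  · exact (hK.norm.integrable_of_hasCompactSupport hKs.norm).mul_const C
  · exact .of_forall fun y x _ => (hd x y).const_mul (K y)

theorem continuous_integral_sub {g : ℝ → ℝ} (hg : ∀ a b, IntervalIntegrable g volume a b) :
    Continuous fun p : ℝ × ℝ => ∫ s in (p.1 - p.2)..p.1, g s := by
  have hprim := continuous_primitive hg 0
  simp_rw [← fun p : ℝ × ℝ => integral_interval_sub_left (hg 0 p.1) (hg 0 (p.1 - p.2))]
  fun_prop

theorem hasDerivAt_integral_sub {g : ℝ → ℝ} (hg : Continuous g) (x y : ℝ) :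
    HasDerivAt (fun x => ∫ s in (x - y)..x, g s) (g x - g (x - y)) x := by
  have hprim (t : ℝ) : HasDerivAt (fun t => ∫ s in (0 : ℝ)..t, g s) (g t) t :=
    (hg.integral_hasStrictDerivAt 0 t).hasDerivAt
  refine ((hprim x).sub ((hprim (x - y)).comp_sub_const x y)).congr_of_eventuallyEq
    (.of_forall fun t => ?_)
  exact (integral_interval_sub_left (hg.intervalIntegrable _ _) (hg.intervalIntegrable _ _)).symm

theorem exists_abs_le_of_tendsto_atBot_atTop {f : ℝ → ℝ} (hf : Continuous f) {a b : ℝ}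
    (ha : Tendsto f atBot (𝓝 a)) (hb : Tendsto f atTop (𝓝 b)) : ∃ C, ∀ x, |f x| ≤ C := by
  obtain ⟨r, hr⟩ := eventually_atBot.1 (ha.abs.eventually_le_const (lt_add_one |a|))
  obtain ⟨s, hs⟩ := eventually_atTop.1 (hb.abs.eventually_le_const (lt_add_one |b|))
  obtain ⟨C, hC⟩ := (isCompact_Icc (a := r) (b := s)).exists_bound_of_continuousOn hf.continuousOn
  refine ⟨max C (max (|a| + 1) (|b| + 1)), fun x => ?_⟩
  rcases le_total x r with hxr | hrx
  · exact (hr x hxr).trans (by simp)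
  rcases le_total s x with hsx | hxs
  · exact (hs x hsx).trans (by simp)
  exact (hC x ⟨hrx, hxs⟩).trans (le_max_left _ _)

theorem uniformContinuous_of_tendsto_atBot_atTop {f : ℝ → ℝ} (hf : Continuous f) {a b : ℝ}
    (ha : Tendsto f atBot (𝓝 a)) (hb : Tendsto f atTop (𝓝 b)) : UniformContinuous f := by
  set ramp : ℝ → ℝ := fun x => a + (b - a) • max 0 (min 1 x) with hramp
  have hramp_uc : UniformContinuous ramp :=
    uniformContinuous_const.add
      (((LipschitzWith.id.const_min 1).const_max 0).uniformContinuous.const_smul (b - a))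
  have hbot : Tendsto ramp atBot (𝓝 a) := by
    refine tendsto_const_nhds.congr' ?_
    filter_upwards [eventually_le_atBot 0] with x hx
    simp [hramp, max_eq_left ((min_le_right 1 x).trans hx)]
  have htop : Tendsto ramp atTop (𝓝 b) := by
    refine tendsto_const_nhds.congr' ?_
    filter_upwards [eventually_ge_atTop 1] with x hx
    simp [hramp, min_eq_left hx]
  have hdiff : Tendsto (fun x => f x - ramp x) (cocompact ℝ) (𝓝 0) := by
    rw [cocompact_eq_atBot_atTop]
    exact .sup (by simpa using ha.sub hbot) (by simpa using hb.sub htop)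
  simpa using ((hf.sub hramp_uc.continuous).uniformContinuous_of_tendsto_cocompact hdiff).add
    hramp_uc

theorem exists_tendstoLocallyUniformly_subseq {X : Type*} [TopologicalSpace X]
    [WeaklyLocallyCompactSpace X] [SigmaCompactSpace X] {u : ℕ → C(X, ℝ)}
    (hu : Equicontinuous fun n => (u n : X → ℝ)) (hbdd : ∀ x, ∃ M, ∀ n, |u n x| ≤ M) :
    ∃ φ : ℕ → ℕ, StrictMono φ ∧
      ∃ f : C(X, ℝ), TendstoLocallyUniformly (fun n x => u (φ n) x) f atTop := by
  have hcompact : IsCompact (closure (range u)) := by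
    refine ArzelaAscoli.isCompact_closure_of_isClosedEmbedding (F := fun f : C(X, ℝ) => ⇑f)
      (𝔖 := {K : Set X | IsCompact K}) (fun K hK => hK) ?_ ?_ ?_
    · have := UniformOnFun.t2Space_of_covering (β := ℝ) (sUnion_isCompact_eq_univ (X := X))
      exact ContinuousMap.isUniformEmbedding_toUniformOnFunIsCompact.isClosedEmbedding
    · refine fun K _ => Equicontinuous.equicontinuousOn (fun x U hU => ?_) K
      filter_upwards [hu x U hU] with y hy
      rintro ⟨_, n, rfl⟩
      exact hy n
    · intro K _ x _
      obtain ⟨M, hM⟩ := hbdd x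
      refine ⟨Icc (-M) M, isCompact_Icc, ?_⟩
      rintro _ ⟨n, rfl⟩
      exact abs_le.1 (hM n)
  obtain ⟨f, -, φ, hφ, hf⟩ := hcompact.tendsto_subseq fun n => subset_closure (mem_range_self n)
  exact ⟨φ, hφ, f, ContinuousMap.tendsto_iff_tendstoLocallyUniformly.1 hf⟩

theorem exists_translate_tendstoLocallyUniformly {z : ℝ → ℝ} (hz : UniformContinuous z)
    (hbdd : ∃ M, ∀ x, |z x| ≤ M) (ξ : ℕ → ℝ) :
    ∃ φ : ℕ → ℕ, StrictMono φ ∧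
      ∃ f : C(ℝ, ℝ), TendstoLocallyUniformly (fun n x => z (ξ (φ n) + x)) f atTop := by
  obtain ⟨M, hM⟩ := hbdd
  have hequi : UniformEquicontinuous fun n x => z (ξ n + x) := by
    rw [Metric.uniformEquicontinuous_iff]
    intro ε hε
    obtain ⟨δ, hδ, h⟩ := Metric.uniformContinuous_iff.1 hz ε hε
    exact ⟨δ, hδ, fun x y hxy n => h (by simpa using hxy)⟩
  exact exists_tendstoLocallyUniformly_subseq
    (u := fun n => ⟨fun x => z (ξ n + x), by have := hz.continuous; fun_prop⟩)
    hequi.equicontinuous fun x => ⟨M, fun n => hM _⟩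

theorem frequently_eq_and_forall_Icc_le {z : ℝ → ℝ} (hz : Continuous z) {θ : ℝ}
    (hlow : ∃ᶠ x in atTop, z x < θ) {L : ℝ}
    (hhigh : ∃ᶠ x in atTop, ∀ t ∈ Icc 0 L, θ ≤ z (x + t)) (hL : 0 ≤ L) :
    ∃ᶠ x in atTop, z x = θ ∧ ∀ t ∈ Icc 0 L, θ ≤ z (x + t) := by
  rw [frequently_atTop] at *
  intro a
  obtain ⟨p, hap, hp⟩ := hlow a
  obtain ⟨q, hpq, hq⟩ := hhigh p
  have hzq : θ ≤ z q := by simpa using hq 0 ⟨le_rfl, hL⟩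
  have crossing {x : ℝ} (hxq : x ≤ q) (hx : z x ≤ θ) : ∃ y ∈ Icc x q, z y = θ :=
    intermediate_value_Icc hxq hz.continuousOn ⟨hx, hzq⟩
  obtain ⟨η, ⟨⟨hpη, hηq⟩, hη⟩, hmax⟩ :=
    (isCompact_Icc.inter_right (isClosed_singleton.preimage hz)).exists_isGreatest
      (crossing hpq hp.le : (Icc p q ∩ z ⁻¹' {θ}).Nonempty)
  refine ⟨η, hap.trans hpη, hη, fun t ht => ?_⟩
  rcases le_total (η + t) q with hle | hge
  · by_contra! hlt
    obtain ⟨y, hy, hzy⟩ := crossing hle hlt.le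
    have hyη : y ≤ η := hmax ⟨⟨by linarith [hy.1, ht.1], hy.2⟩, hzy⟩
    have : y = η + t := by linarith [hy.1, ht.1]
    exact hlt.ne (this ▸ hzy)
  · have := hq (η + t - q) ⟨by linarith, by linarith [ht.2]⟩
    rwa [add_sub_cancel] at this

end Preliminaries

/-- The nonlocal term `∫ J(y) exp(∫_{ξ-y}^ξ z) dy` of the equation. For `φ = profile z` it is the
quotient `(J * φ)(ξ) / φ(ξ)`. -/
def convQuotient (J z : ℝ → ℝ) (ξ : ℝ) : ℝ :=
  ∫ y, J y * Real.exp (∫ s in (ξ - y)..ξ, z s)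

/-- The equation `c z(ξ) = ∫ J(y) exp(∫_{ξ-y}^ξ z) dy + B(ξ)`, required at every `ξ`. -/
def IsLogDerivSolution (J : ℝ → ℝ) (c : ℝ) (B z : ℝ → ℝ) : Prop :=
  ∀ ξ, c * z ξ = convQuotient J z ξ + B ξ

/-- The positive function `φ` with `φ(0) = 1` and `z = -φ'/φ`. -/
def profile (z : ℝ → ℝ) (x : ℝ) : ℝ :=
  Real.exp (-∫ s in (0 : ℝ)..x, z s)

/-- The exponentially tilted kernel `J(y) e^{ly}`: subtracting `l` from a solution for `J` gives a
solution for this kernel. -/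
def expTilt (J : ℝ → ℝ) (l y : ℝ) : ℝ :=
  J y * Real.exp (l * y)

/-- `l` solves the characteristic equation `c l = ∫ J(y) e^{ly} dy + b`. -/
def IsCharRoot (J : ℝ → ℝ) (c b l : ℝ) : Prop :=
  c * l = (∫ y, expTilt J l y) + b

section Profile

variable {J z : ℝ → ℝ}

theorem profile_pos (z : ℝ → ℝ) (x : ℝ) : 0 < profile z x :=
  Real.exp_pos _

@[simp]
theorem profile_zero (z : ℝ → ℝ) : profile z 0 = 1 := by
  simp [profile]

theorem continuous_profile (hz : ∀ a b, IntervalIntegrable z volume a b) :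
    Continuous (profile z) :=
  Real.continuous_exp.comp (continuous_primitive hz 0).neg

theorem hasDerivAt_profile (hz : Continuous z) (x : ℝ) :
    HasDerivAt (profile z) (-(z x * profile z x)) x :=
  (hz.integral_hasStrictDerivAt 0 x).hasDerivAt.neg.exp.congr_deriv (by simp [profile, mul_comm])

theorem profile_div_profile (hz : ∀ a b, IntervalIntegrable z volume a b) (a b : ℝ) :
    profile z a / profile z b = Real.exp (∫ s in a..b, z s) := by
  rw [profile, profile, ← Real.exp_sub, ← integral_interval_sub_left (hz 0 b) (hz 0 a)]
  ring_nf

theorem continuous_exp_integral (hz : ∀ a b, IntervalIntegrable z volume a b) :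
    Continuous fun p : ℝ × ℝ => Real.exp (∫ s in (p.1 - p.2)..p.1, z s) :=
  Real.continuous_exp.comp (continuous_integral_sub hz)

theorem convQuotient_eq_div (hz : ∀ a b, IntervalIntegrable z volume a b) (ξ : ℝ) :
    convQuotient J z ξ = (∫ y, J y * profile z (ξ - y)) / profile z ξ := by
  simp_rw [convQuotient, ← profile_div_profile hz, mul_div_assoc', MeasureTheory.integral_div]

theorem continuous_convQuotient (hJ : Continuous J) (hJs : HasCompactSupport J)
    (hz : ∀ a b, IntervalIntegrable z volume a b) : Continuous (convQuotient J z) := by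
  have hφ := continuous_profile hz
  have hconv : Continuous fun ξ => ∫ y, J y * profile z (ξ - y) :=
    hJs.continuous_convolution_left (.mul ℝ ℝ) hJ hφ.locallyIntegrable
  simp_rw [funext (convQuotient_eq_div hz)]
  exact hconv.div hφ fun ξ => (profile_pos z ξ).ne'

theorem hasDerivAt_convQuotient (hJ : Continuous J) (hJs : HasCompactSupport J)
    (hz : Continuous z) (x : ℝ) :
    HasDerivAt (convQuotient J z)
      (∫ y, J y * (Real.exp (∫ s in (x - y)..x, z s) * (z x - z (x - y)))) x := by
  have hint := fun a b => hz.intervalIntegrable (μ := volume) a b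
  have hexp := continuous_exp_integral hint
  exact hasDerivAt_integral_mul hJ hJs
    (F' := fun x y => Real.exp (∫ s in (x - y)..x, z s) * (z x - z (x - y)))
    (fun x => hexp.comp (.prodMk_right x)) (by fun_prop)
    (fun x y => (hasDerivAt_integral_sub hz x y).exp) x

theorem hasCompactSupport_expTilt (hJs : HasCompactSupport J) (l : ℝ) :
    HasCompactSupport (expTilt J l) :=
  hJs.mul_right

theorem continuous_expTilt (hJ : Continuous J) (l : ℝ) : Continuous (expTilt J l) := by
  unfold expTilt
  fun_prop

theorem convQuotient_const (J : ℝ → ℝ) (l ξ : ℝ) :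
    convQuotient J (fun _ => l) ξ = ∫ y, expTilt J l y := by
  simp [convQuotient, expTilt, mul_comm]

theorem convQuotient_expTilt (hz : ∀ a b, IntervalIntegrable z volume a b) (l ξ : ℝ) :
    convQuotient (expTilt J l) (fun x => z x - l) ξ = convQuotient J z ξ := by
  unfold convQuotient expTilt
  congr 1 with y
  rw [intervalIntegral.integral_sub (hz _ _) intervalIntegrable_const, mul_assoc, ← Real.exp_add]
  simp [mul_comm]

theorem convQuotient_comp_neg (J z : ℝ → ℝ) (ξ : ℝ) :
    convQuotient (fun y => J (-y)) (fun x => -z (-x)) ξ = convQuotient J z (-ξ) := by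
  unfold convQuotient
  rw [← integral_neg_eq_self]
  congr 1 with y
  rw [intervalIntegral.integral_neg, integral_comp_neg, ← integral_symm]
  ring_nf

theorem isCharRoot_comp_neg {c b l : ℝ} :
    IsCharRoot (fun y => J (-y)) (-c) b (-l) ↔ IsCharRoot J c b l := by
  have hmass : ∫ y, expTilt (fun y => J (-y)) (-l) y = ∫ y, expTilt J l y := by
    rw [← integral_neg_eq_self]
    simp [expTilt]
  rw [IsCharRoot, IsCharRoot, hmass, neg_mul_neg]

end Profile

namespace IsLogDerivSolution

variable {J B z : ℝ → ℝ} {c : ℝ}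

theorem eq_div (h : IsLogDerivSolution J c B z) (hc : c ≠ 0) :
    z = fun ξ => (convQuotient J z ξ + B ξ) / c :=
  funext fun ξ => eq_div_of_mul_eq hc (by rw [mul_comm, h ξ])

theorem continuous (h : IsLogDerivSolution J c B z) (hJ : Continuous J)
    (hJs : HasCompactSupport J) (hc : c ≠ 0) (hB : Continuous B)
    (hz : ∀ a b, IntervalIntegrable z volume a b) : Continuous z := by
  rw [h.eq_div hc]
  exact ((continuous_convQuotient hJ hJs hz).add hB).div_const c

theorem sub_const (h : IsLogDerivSolution J c B z)
    (hz : ∀ a b, IntervalIntegrable z volume a b) (l : ℝ) :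
    IsLogDerivSolution (expTilt J l) c (fun x => B x - c * l) (fun x => z x - l) := fun ξ => by
  rw [convQuotient_expTilt hz]
  linear_combination h ξ

theorem neg_comp_neg (h : IsLogDerivSolution J c B z) :
    IsLogDerivSolution (fun y => J (-y)) (-c) (fun x => B (-x)) (fun x => -z (-x)) := fun ξ => by
  rw [convQuotient_comp_neg]
  linear_combination h (-ξ)

theorem hasDerivAt_profile (h : IsLogDerivSolution J c B z) (hz : Continuous z) (x : ℝ) :
    HasDerivAt (fun x => c * profile z x)
      (-(∫ y, J y * profile z (x - y)) - B x * profile z x) x := by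
  have hquot := convQuotient_eq_div (J := J) (fun a b => hz.intervalIntegrable (μ := volume) a b) x
  rw [eq_div_iff (profile_pos z x).ne'] at hquot
  refine ((_root_.hasDerivAt_profile hz x).const_mul c).congr_deriv ?_
  linear_combination (-profile z x) * h x - hquot

end IsLogDerivSolution

section Boundedness

theorem exists_mul_le_integral_mul_of_monotone {K : ℝ → ℝ} (hK : Continuous K)
    (hKs : HasCompactSupport K) (hK0 : ∀ y, 0 ≤ K y) {a : ℝ} (ha : 0 < K a) :
    ∃ κ > 0, ∀ g : ℝ → ℝ, Continuous g → Monotone g → (∀ y, 0 ≤ g y) →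
      κ * g a ≤ ∫ y, K y * g y := by
  obtain ⟨b, hab, hb⟩ := exists_Icc_pos hK.continuousAt ha
  refine ⟨∫ y in a..b, K y, intervalIntegral_pos_of_pos_on (hK.intervalIntegrable a b)
    (fun y hy => hb y (Ioo_subset_Icc_self hy)) hab, fun g hg hmono hg0 => ?_⟩
  have hint : Integrable (fun y => K y * g y) volume :=
    integrable_mul_of_hasCompactSupport hK hKs hg
  calc (∫ y in a..b, K y) * g a = ∫ y in Ioc a b, K y * g a := by
        rw [← intervalIntegral.integral_mul_const, integral_of_le hab.le]
    _ ≤ ∫ y in Ioc a b, K y * g y :=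
        setIntegral_mono_on ((hK.integrable_of_hasCompactSupport hKs).mul_const _).integrableOn
          hint.integrableOn measurableSet_Ioc
          fun y hy => mul_le_mul_of_nonneg_left (hmono hy.1.le) (hK0 y)
    _ ≤ ∫ y, K y * g y :=
        setIntegral_le_integral hint (.of_forall fun y => mul_nonneg (hK0 y) (hg0 y))

theorem antitone_profile {u : ℝ → ℝ} (hu : Continuous u) (hu0 : ∀ x, 0 ≤ u x) :
    Antitone (profile u) :=
  antitone_of_hasDerivAt_nonpos (hasDerivAt_profile hu) fun x =>
    neg_nonpos.2 (mul_nonneg (hu0 x) (profile_pos u x).le)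

theorem convQuotient_nonneg {K : ℝ → ℝ} (hK0 : ∀ y, 0 ≤ K y) (z : ℝ → ℝ) (ξ : ℝ) :
    0 ≤ convQuotient K z ξ :=
  integral_nonneg fun y => mul_nonneg (hK0 y) (Real.exp_nonneg _)

namespace IsLogDerivSolution

variable {K B u : ℝ → ℝ} {c : ℝ}

theorem nonneg (h : IsLogDerivSolution K c B u) (hK0 : ∀ y, 0 ≤ K y) (hc : 0 < c)
    (hB : ∀ x, 0 ≤ B x) (x : ℝ) : 0 ≤ u x :=
  nonneg_of_mul_nonneg_right (by rw [h x]; exact add_nonneg (convQuotient_nonneg hK0 u x) (hB x)) hc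

theorem exists_profile_sub_half_le (h : IsLogDerivSolution K c B u) (hK : Continuous K)
    (hKs : HasCompactSupport K) (hK0 : ∀ y, 0 ≤ K y) (hc : 0 < c) (hB : ∀ x, 0 ≤ B x)
    (hu : Continuous u) {a : ℝ} (ha : 0 < a) (hKa : 0 < K a) :
    ∃ C, ∀ x, profile u (x - a / 2) ≤ C * profile u x := by
  obtain ⟨κ, hκ, hκle⟩ := exists_mul_le_integral_mul_of_monotone hK hKs hK0 hKa
  have hanti := antitone_profile hu (h.nonneg hK0 hc hB)
  have hcont : Continuous (profile u) :=
    continuous_profile fun _ _ => hu.intervalIntegrable _ _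
  refine ⟨c / (κ * (a / 2)), fun x => ?_⟩
  have hderiv : ∀ t ∈ interior (Icc x (x + a / 2)),
      deriv (fun t => c * profile u t) t ≤ -(κ * profile u (x - a / 2)) := fun t ht => by
    rw [interior_Icc] at ht
    rw [(h.hasDerivAt_profile hu t).deriv]
    have hconv := hκle (fun y => profile u (t - y)) (by fun_prop)
      (fun y y' hy => hanti (by linarith)) fun y => (profile_pos u _).le
    have hmono : profile u (x - a / 2) ≤ profile u (t - a) := hanti (by linarith [ht.2])
    nlinarith [mul_nonneg (hB t) (profile_pos u t).le]
  have hle : x ≤ x + a / 2 := by linarith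
  -- over `[x, x + a/2]` the function `c φ` drops by at least `κ (a/2) φ(x - a/2)`,
  -- and by at most `c φ(x)`
  have hdrop := (convex_Icc x (x + a / 2)).image_sub_le_mul_sub_of_deriv_le (by fun_prop)
    (fun t _ => (h.hasDerivAt_profile hu t).differentiableAt.differentiableWithinAt) hderiv
    x (left_mem_Icc.2 hle) (x + a / 2) (right_mem_Icc.2 hle) hle
  rw [div_mul_eq_mul_div, le_div_iff₀ (by positivity)]
  nlinarith [profile_pos u (x + a / 2)]

theorem exists_profile_sub_le (h : IsLogDerivSolution K c B u) (hK : Continuous K)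
    (hKs : HasCompactSupport K) (hK0 : ∀ y, 0 ≤ K y) (hc : 0 < c) (hB : ∀ x, 0 ≤ B x)
    (hu : Continuous u) : ∃ C, ∀ x y, K y ≠ 0 → profile u (x - y) ≤ C * profile u x := by
  have hanti := antitone_profile hu (h.nonneg hK0 hc hB)
  by_cases hpos : ∃ a > 0, 0 < K a
  · obtain ⟨a, ha, hKa⟩ := hpos
    obtain ⟨C, hC⟩ := h.exists_profile_sub_half_le hK hKs hK0 hc hB hu ha hKa
    have hC0 : 0 ≤ C :=
      nonneg_of_mul_nonneg_left ((profile_pos u _).le.trans (hC 0)) (profile_pos u 0)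
    have hiter (n : ℕ) (x : ℝ) : profile u (x - n * (a / 2)) ≤ C ^ n * profile u x := by
      induction n generalizing x with
      | zero => simp
      | succ n ih =>
        calc profile u (x - (n + 1 : ℕ) * (a / 2)) = profile u (x - a / 2 - n * (a / 2)) := by
              push_cast; ring_nf
          _ ≤ C ^ n * (C * profile u x) :=
              (ih _).trans (mul_le_mul_of_nonneg_left (hC x) (pow_nonneg hC0 n))
          _ = C ^ (n + 1) * profile u x := by ring
    obtain ⟨R, -, hR⟩ := exists_abs_le_of_hasCompactSupport hKs
    obtain ⟨n, hn⟩ := exists_nat_ge (R / (a / 2))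
    refine ⟨C ^ n, fun x y hy => (hanti ?_).trans (hiter n x)⟩
    have := (div_le_iff₀ (half_pos ha)).1 hn
    linarith [hR y hy, le_abs_self y]
  · push Not at hpos
    refine ⟨1, fun x y hy => ?_⟩
    have hy0 : y ≤ 0 := not_lt.1 fun hy' => hy ((hpos y hy').antisymm (hK0 y))
    rw [one_mul]
    exact hanti (by linarith)

theorem exists_abs_le_of_nonneg (h : IsLogDerivSolution K c B u) (hK : Continuous K)
    (hKs : HasCompactSupport K) (hK0 : ∀ y, 0 ≤ K y) (hc : 0 < c) (hB : ∀ x, 0 ≤ B x)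
    (hBb : ∃ M, ∀ x, B x ≤ M) (hu : Continuous u) : ∃ M, ∀ x, |u x| ≤ M := by
  obtain ⟨C, hC⟩ := h.exists_profile_sub_le hK hKs hK0 hc hB hu
  obtain ⟨M, hM⟩ := hBb
  have hint := fun a b => hu.intervalIntegrable (μ := volume) a b
  have hquot (x : ℝ) : convQuotient K u x ≤ ∫ y, K y * C := by
    refine integral_mono (integrable_mul_of_hasCompactSupport hK hKs
      ((continuous_exp_integral hint).comp (.prodMk_right x)))
      (integrable_mul_of_hasCompactSupport hK hKs continuous_const) fun y => ?_
    rcases eq_or_ne (K y) 0 with hy | hy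
    · simp [hy]
    · refine mul_le_mul_of_nonneg_left ?_ (hK0 y)
      rw [← profile_div_profile hint, div_le_iff₀ (profile_pos u x)]
      exact hC x y hy
  refine ⟨((∫ y, K y * C) + M) / c, fun x => ?_⟩
  rw [abs_of_nonneg (h.nonneg hK0 hc hB x), le_div_iff₀' hc, h x]
  exact add_le_add (hquot x) (hM x)

theorem exists_abs_le_of_pos (h : IsLogDerivSolution K c B u) (hK : Continuous K)
    (hKs : HasCompactSupport K) (hK0 : ∀ y, 0 ≤ K y) (hc : 0 < c)
    (hB : ∃ M, ∀ x, |B x| ≤ M) (hu : Continuous u) : ∃ M, ∀ x, |u x| ≤ M := by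
  obtain ⟨M, hM⟩ := hB
  -- the choice of `l` that makes the tilted inhomogeneity `B - c l = B + M` nonnegative
  set l := -M / c with hl
  have hcl : c * l = -M := by rw [hl]; field_simp
  obtain ⟨N, hN⟩ := (h.sub_const (fun _ _ => hu.intervalIntegrable _ _) l).exists_abs_le_of_nonneg
    (continuous_expTilt hK l) (hasCompactSupport_expTilt hKs l)
    (fun y => mul_nonneg (hK0 y) (Real.exp_nonneg _)) hc
    (fun x => by linarith [neg_le_of_abs_le (hM x)])
    ⟨2 * M, fun x => by linarith [le_of_abs_le (hM x)]⟩ (hu.sub continuous_const)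
  exact ⟨N + |l|, fun x => by linarith [hN x, abs_sub_abs_le_abs_sub (u x) l]⟩

theorem exists_abs_le (h : IsLogDerivSolution K c B u) (hK : Continuous K)
    (hKs : HasCompactSupport K) (hK0 : ∀ y, 0 ≤ K y) (hc : c ≠ 0)
    (hB : ∃ M, ∀ x, |B x| ≤ M) (hu : Continuous u) : ∃ M, ∀ x, |u x| ≤ M := by
  rcases hc.lt_or_gt with hneg | hpos
  · obtain ⟨M, hM⟩ := h.neg_comp_neg.exists_abs_le_of_pos (by fun_prop)
      (hKs.comp_homeomorph (.neg ℝ)) (fun y => hK0 (-y)) (neg_pos.2 hneg)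
      (hB.imp fun M hM x => hM (-x)) (by fun_prop)
    exact ⟨M, fun x => by simpa using hM (-x)⟩
  · exact h.exists_abs_le_of_pos hK hKs hK0 hpos hB hu

end IsLogDerivSolution

end Boundedness

section Bounded

variable {J B z : ℝ → ℝ} {c M : ℝ}

theorem exp_integral_le (hM : ∀ x, |z x| ≤ M) (x y : ℝ) :
    Real.exp (∫ s in (x - y)..x, z s) ≤ Real.exp (M * |y|) := by
  have := norm_integral_le_of_norm_le_const (a := x - y) (b := x) (f := z) (C := M) fun s _ => hM s
  rw [sub_sub_cancel] at this
  exact Real.exp_le_exp.2 ((le_abs_self _).trans this)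

theorem uniformContinuous_convQuotient (hJ : Continuous J) (hJs : HasCompactSupport J)
    (hz : Continuous z) (hM : ∀ x, |z x| ≤ M) : UniformContinuous (convQuotient J z) := by
  have hderiv := hasDerivAt_convQuotient hJ hJs hz
  refine (lipschitzWith_of_nnnorm_deriv_le (fun x => (hderiv x).differentiableAt)
    (C := (∫ y, |J y| * (Real.exp (M * |y|) * (2 * M))).toNNReal) fun x => ?_).uniformContinuous
  rw [(hderiv x).deriv, ← NNReal.coe_le_coe, coe_nnnorm]
  refine le_trans (norm_integral_le_of_norm_le ?_ (.of_forall fun y => ?_))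
    (Real.le_coe_toNNReal _)
  · exact integrable_mul_of_hasCompactSupport hJ.abs hJs.norm (by fun_prop)
  · have hdiff : |z x - z (x - y)| ≤ 2 * M := (abs_sub _ _).trans (by linarith [hM x, hM (x - y)])
    rw [norm_mul, norm_mul, Real.norm_eq_abs, Real.norm_of_nonneg (Real.exp_nonneg _)]
    exact mul_le_mul_of_nonneg_left (mul_le_mul (exp_integral_le hM x y) hdiff (abs_nonneg _)
      (Real.exp_nonneg _)) (abs_nonneg _)

theorem tendsto_convQuotient {ι : Type*} {l : Filter ι} [l.IsCountablyGenerated]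
    {F : ι → ℝ → ℝ} {f : ℝ → ℝ} (hJ : Continuous J) (hJs : HasCompactSupport J)
    (hF : ∀ i, Continuous (F i)) (hM : ∀ i x, |F i x| ≤ M)
    (hlim : ∀ x, Tendsto (fun i => F i x) l (𝓝 (f x))) (ξ : ℝ) :
    Tendsto (fun i => convQuotient J (F i) ξ) l (𝓝 (convQuotient J f ξ)) := by
  refine tendsto_integral_filter_of_dominated_convergence (fun y => |J y| * Real.exp (M * |y|))
    (.of_forall fun i => ?_) (.of_forall fun i => .of_forall fun y => ?_) ?_
    (.of_forall fun y => ?_)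
  · have hint := fun a b => (hF i).intervalIntegrable (μ := volume) a b
    exact (integrable_mul_of_hasCompactSupport hJ hJs
      ((continuous_exp_integral hint).comp (.prodMk_right ξ))).aestronglyMeasurable
  · rw [norm_mul, Real.norm_of_nonneg (Real.exp_nonneg _)]
    exact mul_le_mul_of_nonneg_left (exp_integral_le (hM i) ξ y) (abs_nonneg _)
  · exact integrable_mul_of_hasCompactSupport hJ.abs hJs.norm (by fun_prop)
  · have hprim := intervalIntegral.tendsto_integral_filter_of_dominated_convergence
      (a := ξ - y) (b := ξ) (μ := volume) (fun _ => M)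
      (.of_forall fun i => (hF i).aestronglyMeasurable)
      (.of_forall fun i => .of_forall fun x _ => hM i x) intervalIntegrable_const
      (.of_forall fun x _ => hlim x)
    exact (hprim.rexp).const_mul (J y)

theorem convQuotient_comp_add_left (J z : ℝ → ℝ) (a ξ : ℝ) :
    convQuotient J (fun x => z (a + x)) ξ = convQuotient J z (a + ξ) := by
  simp only [convQuotient, integral_comp_add_left, add_sub_assoc]

namespace IsLogDerivSolution

theorem uniformContinuous (h : IsLogDerivSolution J c B z) (hJ : Continuous J)
    (hJs : HasCompactSupport J) (hc : c ≠ 0) (hB : UniformContinuous B) (hz : Continuous z)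
    (hbdd : ∃ M, ∀ x, |z x| ≤ M) : UniformContinuous z := by
  obtain ⟨M, hM⟩ := hbdd
  rw [h.eq_div hc]
  exact ((uniformContinuous_convQuotient hJ hJs hz hM).add hB).div_const' c

theorem of_tendsto_translate {ι : Type*} {l : Filter ι} [l.IsCountablyGenerated] [l.NeBot]
    {ξ : ι → ℝ} {b : ℝ} {f : ℝ → ℝ} (h : IsLogDerivSolution J c B z) (hJ : Continuous J)
    (hJs : HasCompactSupport J) (hz : Continuous z) (hbdd : ∃ M, ∀ x, |z x| ≤ M)
    (hB : ∀ x, Tendsto (fun i => B (ξ i + x)) l (𝓝 b))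
    (hf : ∀ x, Tendsto (fun i => z (ξ i + x)) l (𝓝 (f x))) :
    IsLogDerivSolution J c (fun _ => b) f := fun x => by
  obtain ⟨M, hM⟩ := hbdd
  have hquot := tendsto_convQuotient hJ hJs (F := fun i x => z (ξ i + x)) (fun i => by fun_prop)
    (fun i x => hM _) hf x
  refine tendsto_nhds_unique ((hf x).const_mul c) ((hquot.add (hB x)).congr fun i => ?_)
  rw [convQuotient_comp_add_left, h]

end IsLogDerivSolution

end Bounded

section MaximumPrinciple

variable {J f : ℝ → ℝ} {c b : ℝ}

theorem exists_forall_Icc_eq_of_sub {a b x₀ m : ℝ} (hab : a < b) (hx₀ : f x₀ = m)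
    (hstep : ∀ x, f x = m → ∀ y ∈ Icc a b, f (x - y) = m) (L : ℝ) :
    ∃ s, ∀ t ∈ Icc 0 L, f (s + t) = m := by
  have hiter (n : ℕ) {y : ℝ} (hy : y ∈ Icc a b) : f (x₀ - n * y) = m := by
    induction n with
    | zero => simpa using hx₀
    | succ n ih => convert hstep _ ih y hy using 2; push_cast; ring
  obtain ⟨n, hn⟩ := exists_nat_gt (max 0 (L / (b - a)))
  have hn0 : (0 : ℝ) < n := (le_max_left _ _).trans_lt hn
  have hnL : L < n * (b - a) :=
    (div_lt_iff₀ (sub_pos.2 hab)).1 ((le_max_right _ _).trans_lt hn)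
  refine ⟨x₀ - n * b, fun t ht => ?_⟩
  have htn : t / n ≤ b - a := by
    rw [div_le_iff₀' hn0]
    exact ht.2.trans hnL.le
  convert hiter n (y := b - t / n) ⟨by linarith, by linarith [div_nonneg ht.1 hn0.le]⟩ using 2
  field_simp
  ring

namespace IsLogDerivSolution

theorem apply_sub_eq_of_isExtrOn (h : IsLogDerivSolution J c (fun _ => b) f)
    (hJ : Continuous J) (hJs : HasCompactSupport J) (hJ0 : ∀ y, 0 ≤ J y) (hc : c ≠ 0)
    (hf : Continuous f) {x₀ : ℝ} (hx₀ : IsExtrOn f univ x₀) {y : ℝ} (hy : J y ≠ 0) :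
    f (x₀ - y) = f x₀ := by
  have hquot := hasDerivAt_convQuotient hJ hJs hf x₀
  set g : ℝ → ℝ := fun y => J y * (Real.exp (∫ s in (x₀ - y)..x₀, f s) * (f x₀ - f (x₀ - y)))
  have hgc : Continuous g := hJ.mul <| ((continuous_exp_integral fun a b =>
    hf.intervalIntegrable (μ := volume) a b).comp (.prodMk_right x₀)).mul (by fun_prop)
  have hgs : HasCompactSupport g := hJs.mul_right
  have hint : ∫ y, g y = 0 := by
    have hderiv : HasDerivAt f ((∫ y, g y) / c) x₀ := by
      rw [h.eq_div hc]
      exact (hquot.add_const b).div_const c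
    simpa [hc] using (hx₀.isLocalExtr univ_mem).hasDerivAt_eq_zero hderiv
  have hg : g = 0 := by
    rcases hx₀ with hmin | hmax
    · refine neg_eq_zero.1 (eq_zero_of_integral_eq_zero (μ := volume) hgc.neg hgs.neg (fun y => ?_)
        (by simp [MeasureTheory.integral_neg, hint]))
      have : f x₀ ≤ f (x₀ - y) := hmin (mem_univ _)
      exact neg_nonneg.2 (mul_nonpos_of_nonneg_of_nonpos (hJ0 y)
        (mul_nonpos_of_nonneg_of_nonpos (Real.exp_nonneg _) (sub_nonpos.2 this)))
    · refine eq_zero_of_integral_eq_zero (μ := volume) hgc hgs (fun y => ?_) hint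
      have : f (x₀ - y) ≤ f x₀ := hmax (mem_univ _)
      exact mul_nonneg (hJ0 y) (mul_nonneg (Real.exp_nonneg _) (sub_nonneg.2 this))
  have hgy : f x₀ - f (x₀ - y) = 0 := by simpa [g, hy] using congrFun hg y
  exact (sub_eq_zero.1 hgy).symm

theorem exists_forall_Icc_eq_of_isExtrOn (h : IsLogDerivSolution J c (fun _ => b) f)
    (hJ : Continuous J) (hJs : HasCompactSupport J) (hJ0 : ∀ y, 0 ≤ J y) (hJne : J ≠ 0)
    (hc : c ≠ 0) (hf : Continuous f) {x₀ : ℝ} (hx₀ : IsExtrOn f univ x₀) (L : ℝ) :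
    ∃ s, ∀ t ∈ Icc 0 L, f (s + t) = f x₀ := by
  obtain ⟨a, ha⟩ := Function.ne_iff.1 hJne
  obtain ⟨b, hab, hb⟩ := exists_Icc_pos hJ.continuousAt ((hJ0 a).lt_of_ne' ha)
  refine exists_forall_Icc_eq_of_sub hab rfl (fun x hx y hy => ?_) L
  rw [← hx]
  refine h.apply_sub_eq_of_isExtrOn hJ hJs hJ0 hc hf ?_ (hb y hy).ne'
  simpa only [IsExtrOn, IsExtrFilter, IsMinFilter, IsMaxFilter, hx] using hx₀

theorem isCharRoot_of_eqOn (h : IsLogDerivSolution J c (fun _ => b) f) {l s R : ℝ}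
    (hR0 : 0 ≤ R) (hR : ∀ y, J y ≠ 0 → |y| ≤ R) (hf : ∀ t ∈ Icc 0 (2 * R), f (s + t) = l) :
    IsCharRoot J c b l := by
  have hfl {x : ℝ} (hx : x ∈ Icc s (s + 2 * R)) : f x = l := by
    simpa using hf (x - s) ⟨by linarith [hx.1], by linarith [hx.2]⟩
  have heq : convQuotient J f (s + R) = ∫ y, expTilt J l y := by
    unfold convQuotient expTilt
    congr 1 with y
    rcases eq_or_ne (J y) 0 with hy | hy
    · simp [hy]
    have hyR := abs_le.1 (hR y hy)
    rw [integral_congr (g := fun _ => l) fun x hx => hfl (uIcc_subset_Icc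
      ⟨by linarith, by linarith⟩ ⟨by linarith, by linarith⟩ hx)]
    simp [mul_comm]
  rw [IsCharRoot, ← heq, ← h, hfl ⟨by linarith, by linarith⟩]

end IsLogDerivSolution

end MaximumPrinciple

section ClusterValues

variable {J B z : ℝ → ℝ} {c b : ℝ}

namespace IsLogDerivSolution

theorem exists_translate_limit (h : IsLogDerivSolution J c B z) (hJ : Continuous J)
    (hJs : HasCompactSupport J) (hB : Tendsto B atTop (𝓝 b)) (hz : UniformContinuous z)
    (hbdd : ∃ M, ∀ x, |z x| ≤ M) {ξ : ℕ → ℝ} (hξ : Tendsto ξ atTop atTop) :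
    ∃ φ : ℕ → ℕ, StrictMono φ ∧ ∃ f : C(ℝ, ℝ),
      TendstoLocallyUniformly (fun n x => z (ξ (φ n) + x)) f atTop ∧
      IsLogDerivSolution J c (fun _ => b) f ∧ ∀ x, MapClusterPt (f x) atTop z := by
  obtain ⟨φ, hφ, f, hf⟩ := exists_translate_tendstoLocallyUniformly hz hbdd ξ
  have hshift (x : ℝ) : Tendsto (fun n => ξ (φ n) + x) atTop atTop :=
    tendsto_atTop_add_const_right _ x (hξ.comp hφ.tendsto_atTop)
  have hlim (x : ℝ) : Tendsto (fun n => z (ξ (φ n) + x)) atTop (𝓝 (f x)) :=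
    (tendstoLocallyUniformlyOn_univ.2 hf).tendsto_at (mem_univ x)
  exact ⟨φ, hφ, f, hf,
    h.of_tendsto_translate hJ hJs hz.continuous hbdd (fun x => hB.comp (hshift x)) hlim,
    fun x => .of_comp (hshift x) (hlim x).mapClusterPt⟩

theorem isCharRoot_and_frequently_near (h : IsLogDerivSolution J c B z) (hJ : Continuous J)
    (hJs : HasCompactSupport J) (hJ0 : ∀ y, 0 ≤ J y) (hJne : J ≠ 0) (hc : c ≠ 0)
    (hB : Tendsto B atTop (𝓝 b)) (hz : UniformContinuous z) (hbdd : ∃ M, ∀ x, |z x| ≤ M) {l : ℝ}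
    (hl : IsLeast {m | MapClusterPt m atTop z} l ∨ IsGreatest {m | MapClusterPt m atTop z} l) :
    IsCharRoot J c b l ∧
      ∀ L, ∀ ε > 0, ∃ᶠ x in atTop, ∀ t ∈ Icc 0 L, |z (x + t) - l| < ε := by
  have hcluster : MapClusterPt l atTop z := hl.elim (·.1) (·.1)
  obtain ⟨ξ, hzξ, hξ⟩ := hcluster.exists_seq_tendsto
  obtain ⟨φ, hφ, f, hf, hsol, hfcluster⟩ := h.exists_translate_limit hJ hJs hB hz hbdd hξ
  have hf0 : f 0 = l := by
    have hlim := (tendstoLocallyUniformlyOn_univ.2 hf).tendsto_at (mem_univ 0)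
    simp only [add_zero] at hlim
    exact tendsto_nhds_unique hlim (hzξ.comp hφ.tendsto_atTop)
  have hextr : IsExtrOn f univ 0 :=
    hl.imp (fun hl x _ => hf0.trans_le (hl.2 (hfcluster x)))
      fun hl x _ => (hl.2 (hfcluster x)).trans_eq hf0.symm
  have hplateau (L : ℝ) : ∃ s, ∀ t ∈ Icc 0 L, f (s + t) = l :=
    hf0 ▸ hsol.exists_forall_Icc_eq_of_isExtrOn hJ hJs hJ0 hJne hc f.continuous hextr L
  constructor
  · obtain ⟨R, hR0, hR⟩ := exists_abs_le_of_hasCompactSupport hJs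
    obtain ⟨s, hs⟩ := hplateau (2 * R)
    exact hsol.isCharRoot_of_eqOn hR0.le hR hs
  · intro L ε hε
    obtain ⟨s, hs⟩ := hplateau L
    have hunif := Metric.tendstoUniformlyOn_iff.1 (tendstoLocallyUniformly_iff_forall_isCompact.1
      hf _ (isCompact_Icc (a := s) (b := s + L))) ε hε
    refine (tendsto_atTop_add_const_right _ s (hξ.comp hφ.tendsto_atTop)).frequently
      (Eventually.frequently (hunif.mono fun n hn t ht => ?_))
    have := hn (s + t) ⟨by linarith [ht.1], by linarith [ht.2]⟩
    rwa [hs t ht, dist_comm, ← add_assoc] at this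

end IsLogDerivSolution

end ClusterValues

section Flux

variable {K φ : ℝ → ℝ} {c : ℝ}

/-- The flux `c φ(x) - ∫ K(y) (∫_{x-y}^x φ) dy`, a conserved quantity of the linear equation
`c φ' = ∫ K(y) (φ(x) - φ(x - y)) dy`. -/
def flux (K : ℝ → ℝ) (c : ℝ) (φ : ℝ → ℝ) (x : ℝ) : ℝ :=
  c * φ x - ∫ y, K y * ∫ s in (x - y)..x, φ s

theorem hasDerivAt_flux (hK : Continuous K) (hKs : HasCompactSupport K) (hφ : Continuous φ)
    {x φ' : ℝ} (hφ' : HasDerivAt (fun x => c * φ x) φ' x) :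
    HasDerivAt (flux K c φ) (φ' - ∫ y, K y * (φ x - φ (x - y))) x := by
  refine hφ'.sub (hasDerivAt_integral_mul hK hKs
    (F := fun x y => ∫ s in (x - y)..x, φ s) (F' := fun x y => φ x - φ (x - y))
    (fun x => (continuous_integral_sub fun _ _ => hφ.intervalIntegrable _ _).comp (.prodMk_right x))
    (by fun_prop) (fun x y => hasDerivAt_integral_sub hφ x y) x)

theorem abs_flux_le (hK : Continuous K) (hKs : HasCompactSupport K) {R E x : ℝ}
    (hR : ∀ y, K y ≠ 0 → |y| ≤ R) (hR0 : 0 ≤ R) (hE : ∀ s ≥ x - R, |φ s| ≤ E) :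
    |flux K c φ x| ≤ (|c| + (∫ y, |K y|) * R) * E := by
  have hE0 : 0 ≤ E := (abs_nonneg _).trans (hE (x - R) le_rfl)
  have hwindow (y : ℝ) : |K y * ∫ s in (x - y)..x, φ s| ≤ |K y| * (R * E) := by
    rw [abs_mul]
    rcases eq_or_ne (K y) 0 with hy | hy
    · simp [hy]
    refine mul_le_mul_of_nonneg_left ?_ (abs_nonneg _)
    have hyR := hR y hy
    calc |∫ s in (x - y)..x, φ s| ≤ E * |x - (x - y)| := by
          refine norm_integral_le_of_norm_le_const (f := φ) fun s hs => hE s ?_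
          exact (le_min (by linarith [le_abs_self y]) (by linarith)).trans hs.1.le
      _ ≤ R * E := by rw [sub_sub_cancel, mul_comm]; gcongr
  calc |flux K c φ x| ≤ |c * φ x| + |∫ y, K y * ∫ s in (x - y)..x, φ s| := abs_sub _ _
    _ ≤ |c| * E + ∫ y, |K y| * (R * E) := by
        refine add_le_add ?_ (MeasureTheory.norm_integral_le_of_norm_le (f := fun y => K y * _)
          ((hK.abs.integrable_of_hasCompactSupport hKs.norm).mul_const _) (.of_forall hwindow))
        rw [abs_mul]
        exact mul_le_mul_of_nonneg_left (hE x (by linarith)) (abs_nonneg c)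
    _ = (|c| + (∫ y, |K y|) * R) * E := by rw [MeasureTheory.integral_mul_const]; ring

theorem flux_eq_zero (hK : Continuous K) (hKs : HasCompactSupport K) (hφ : Continuous φ)
    (hlim : Tendsto φ atTop (𝓝 0))
    (hderiv : ∀ x, HasDerivAt (fun x => c * φ x) (∫ y, K y * (φ x - φ (x - y))) x) (x : ℝ) :
    flux K c φ x = 0 := by
  have hflux (x : ℝ) : HasDerivAt (flux K c φ) 0 x := by
    simpa using hasDerivAt_flux hK hKs hφ (hderiv x)
  obtain ⟨R, hR0, hR⟩ := exists_abs_le_of_hasCompactSupport hKs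
  have hsmall : ∀ E > 0, |flux K c φ x| ≤ (|c| + (∫ y, |K y|) * R) * E := fun E hE => by
    obtain ⟨a, ha⟩ := eventually_atTop.1 (hlim.abs.eventually_le_const (by simpa using hE))
    rw [is_const_of_deriv_eq_zero (fun x => (hflux x).differentiableAt) (fun x => (hflux x).deriv)
      x (a + R)]
    exact abs_flux_le hK hKs hR hR0.le fun s hs => ha s (by simpa using hs)
  have hzero : Tendsto (fun E => (|c| + (∫ y, |K y|) * R) * E) (𝓝[>] 0) (𝓝 0) := by
    exact (by fun_prop : Continuous _).tendsto' 0 0 (mul_zero _) |>.mono_left nhdsWithin_le_nhds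
  exact abs_nonpos_iff.1 (ge_of_tendsto hzero (eventually_mem_nhdsWithin.mono hsmall))

end Flux

section Rigidity

variable {J K u v : ℝ → ℝ} {b c : ℝ}

theorem tendsto_profile_zero (hu : Continuous u) {θ : ℝ} (hθ : 0 < θ) (hle : ∀ x ≥ 0, θ ≤ u x) :
    Tendsto (profile u) atTop (𝓝 0) := by
  have hlower : ∀ x ≥ 0, θ * x ≤ ∫ s in (0 : ℝ)..x, u s := fun x hx => by
    simpa [mul_comm] using integral_mono_on (μ := volume) hx intervalIntegrable_const
      (hu.intervalIntegrable 0 x) fun s hs => hle s hs.1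
  exact Real.tendsto_exp_neg_atTop_nhds_zero.comp <| tendsto_atTop_mono' _
    ((eventually_ge_atTop 0).mono hlower) (tendsto_id.const_mul_atTop hθ)

namespace IsLogDerivSolution

theorem flux_profile_zero (h : IsLogDerivSolution K c (fun _ => -∫ y, K y) u)
    (hK : Continuous K) (hKs : HasCompactSupport K) (hu : Continuous u) {θ : ℝ} (hθ : 0 < θ)
    (hle : ∀ x ≥ 0, θ ≤ u x) : flux K c (profile u) 0 = 0 := by
  have hφ : Continuous (profile u) := continuous_profile fun _ _ => hu.intervalIntegrable _ _
  refine flux_eq_zero hK hKs hφ (tendsto_profile_zero hu hθ hle) (fun x => ?_) 0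
  refine (h.hasDerivAt_profile hu x).congr_deriv ?_
  simp_rw [mul_sub]
  rw [MeasureTheory.integral_sub (integrable_mul_of_hasCompactSupport hK hKs continuous_const)
    (integrable_mul_of_hasCompactSupport hK hKs (by fun_prop)), MeasureTheory.integral_mul_const]
  ring

end IsLogDerivSolution

theorem profile_lt (hu : Continuous u) (hv : Continuous v) (hle : ∀ x, u x ≤ v x)
    (hlt : u 0 < v 0) {x : ℝ} (hx : 0 < x) : profile v x < profile u x :=
  Real.exp_lt_exp.2 <| neg_lt_neg <|
    intervalIntegral.integral_lt_integral_of_continuousOn_of_le_of_exists_lt hx hu.continuousOn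
      hv.continuousOn (fun x _ => hle x) ⟨0, left_mem_Icc.2 hx.le, hlt⟩

theorem profile_lt_of_neg (hu : Continuous u) (hv : Continuous v)
    (hle : ∀ x, u x ≤ v x) (hlt : u 0 < v 0) {x : ℝ} (hx : x < 0) :
    profile u x < profile v x := by
  rw [profile, profile, ← integral_symm, ← integral_symm, Real.exp_lt_exp]
  exact intervalIntegral.integral_lt_integral_of_continuousOn_of_le_of_exists_lt hx hu.continuousOn
    hv.continuousOn (fun x _ => hle x) ⟨0, right_mem_Icc.2 hx.le, hlt⟩

theorem integral_profile_lt (hu : Continuous u) (hv : Continuous v)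
    (hle : ∀ x, u x ≤ v x) (hlt : u 0 < v 0) {y : ℝ} (hy : y ≠ 0) :
    ∫ s in (-y)..0, profile u s < ∫ s in (-y)..0, profile v s := by
  have hφ {w : ℝ → ℝ} (hw : Continuous w) : Continuous (profile w) :=
    continuous_profile fun _ _ => hw.intervalIntegrable _ _
  rcases hy.lt_or_gt with hy | hy
  · rw [integral_symm, integral_symm 0 (-y), neg_lt_neg_iff]
    exact intervalIntegral.integral_lt_integral_of_continuousOn_of_le_of_exists_lt (by linarith)
      (hφ hv).continuousOn (hφ hu).continuousOn
      (fun x hx => (profile_lt hu hv hle hlt hx.1).le)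
      ⟨-y, right_mem_Icc.2 (by linarith), profile_lt hu hv hle hlt (by linarith)⟩
  · exact intervalIntegral.integral_lt_integral_of_continuousOn_of_le_of_exists_lt (by linarith)
      (hφ hu).continuousOn (hφ hv).continuousOn
      (fun x hx => by
        rcases hx.2.eq_or_lt with rfl | hx
        · simp
        · exact (profile_lt_of_neg hu hv hle hlt hx).le)
      ⟨-y, left_mem_Icc.2 (by linarith), profile_lt_of_neg hu hv hle hlt (by linarith)⟩

theorem apply_zero_eq_of_flux_eq (hK : Continuous K)
    (hKs : HasCompactSupport K) (hK0 : ∀ y, 0 ≤ K y) (hKne : K ≠ 0) (hu : Continuous u)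
    (hv : Continuous v) (hle : ∀ x, u x ≤ v x)
    (hflux : flux K c (profile u) 0 = flux K c (profile v) 0) : u 0 = v 0 := by
  by_contra hne
  have hlt {y : ℝ} (hy : y ≠ 0) := integral_profile_lt hu hv hle ((hle 0).lt_of_ne hne) hy
  have hwindow {w : ℝ → ℝ} (hw : Continuous w) :
      Continuous fun y => ∫ s in (0 - y)..0, profile w s :=
    (continuous_integral_sub fun _ _ => (continuous_profile fun _ _ =>
      hw.intervalIntegrable _ _).intervalIntegrable _ _).comp (.prodMk_right 0)
  simp only [zero_sub] at hwindow
  set g : ℝ → ℝ := fun y => (∫ s in (-y)..0, profile v s) - ∫ s in (-y)..0, profile u s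
  have hg : Continuous g := (hwindow hv).sub (hwindow hu)
  have hint : ∫ y, K y * g y = 0 := by
    simp only [flux, profile_zero, zero_sub] at hflux
    simp_rw [g, mul_sub]
    rw [MeasureTheory.integral_sub (integrable_mul_of_hasCompactSupport hK hKs (hwindow hv))
      (integrable_mul_of_hasCompactSupport hK hKs (hwindow hu))]
    linarith
  have hg0 (y : ℝ) : 0 ≤ g y := by
    rcases eq_or_ne y 0 with rfl | hy
    · simp [g]
    · exact (sub_pos.2 (hlt hy)).le
  have hKg : (fun y => K y * g y) = 0 := eq_zero_of_integral_eq_zero (hK.mul hg) hKs.mul_right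
    (fun y => mul_nonneg (hK0 y) (hg0 y)) hint
  have hK_zero : EqOn K 0 {0}ᶜ := fun y hy =>
    (mul_eq_zero.1 (congr_fun hKg y)).resolve_right (sub_pos.2 (hlt hy)).ne'
  exact hKne (hK.ext_on (dense_compl_singleton 0) continuous_const hK_zero)

theorem IsCharRoot.isLogDerivSolution_const {l : ℝ} (hl : IsCharRoot J c b l) :
    IsLogDerivSolution J c (fun _ => b) (fun _ => l) := fun ξ => by
  rw [convQuotient_const, hl]

namespace IsLogDerivSolution

theorem apply_zero_eq_of_isCharRoot {f : ℝ → ℝ} {l₁ l₂ θ : ℝ}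
    (h : IsLogDerivSolution J c (fun _ => b) f)
    (hJ : Continuous J) (hJs : HasCompactSupport J) (hJ0 : ∀ y, 0 ≤ J y) (hJne : J ≠ 0)
    (hf : Continuous f) (hl₁ : IsCharRoot J c b l₁)
    (hl₂ : IsCharRoot J c b l₂) (hθ : l₁ < θ) (hfθ : ∀ x ≥ 0, θ ≤ f x)
    (hfl₂ : ∀ x, f x ≤ l₂) : f 0 = l₂ := by
  have hK := continuous_expTilt hJ l₁
  have hKs := hasCompactSupport_expTilt hJs l₁
  have hθl₂ : θ ≤ l₂ := (hfθ 0 le_rfl).trans (hfl₂ 0)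
  have hflux {w : ℝ → ℝ} (hw : IsLogDerivSolution J c (fun _ => b) w) (hwc : Continuous w)
      (hwθ : ∀ x ≥ 0, θ ≤ w x) : flux (expTilt J l₁) c (profile fun x => w x - l₁) 0 = 0 := by
    have htilt := hw.sub_const (fun _ _ => hwc.intervalIntegrable _ _) l₁
    have hb : b - c * l₁ = -∫ y, expTilt J l₁ y := by rw [hl₁]; ring
    simp only [hb] at htilt
    exact htilt.flux_profile_zero hK hKs (by fun_prop) (sub_pos.2 hθ)
      fun x hx => sub_le_sub_right (hwθ x hx) l₁
  have hKne : expTilt J l₁ ≠ 0 := fun h0 => hJne <| funext fun y =>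
    (mul_eq_zero.1 (congr_fun h0 y)).resolve_right (Real.exp_pos _).ne'
  have heq := apply_zero_eq_of_flux_eq hK hKs
    (fun y => mul_nonneg (hJ0 y) (Real.exp_pos _).le) hKne (u := fun x => f x - l₁)
    (v := fun _ => l₂ - l₁) (by fun_prop) (by fun_prop) (fun x => sub_le_sub_right (hfl₂ x) l₁)
    ((hflux h hf hfθ).trans
      (hflux (hl₂.isLogDerivSolution_const) continuous_const fun _ _ => hθl₂).symm)
  exact sub_left_injective heq

end IsLogDerivSolution

end Rigidity

section Limits

variable {J B z : ℝ → ℝ} {c b : ℝ}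

namespace IsLogDerivSolution

theorem exists_limit_eq_and_forall_le (h : IsLogDerivSolution J c B z) (hJ : Continuous J)
    (hJs : HasCompactSupport J) (hB : Tendsto B atTop (𝓝 b)) (hz : UniformContinuous z)
    (hbdd : ∃ M, ∀ x, |z x| ≤ M) {θ : ℝ} (hlow : ∃ᶠ x in atTop, z x < θ)
    (hhigh : ∀ L, ∃ᶠ x in atTop, ∀ t ∈ Icc 0 L, θ ≤ z (x + t)) :
    ∃ f : C(ℝ, ℝ), IsLogDerivSolution J c (fun _ => b) f ∧ (∀ x, MapClusterPt (f x) atTop z) ∧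
      f 0 = θ ∧ ∀ x ≥ 0, θ ≤ f x := by
  have hcross (n : ℕ) : ∃ ξ ≥ (n : ℝ), z ξ = θ ∧ ∀ t ∈ Icc 0 (n : ℝ), θ ≤ z (ξ + t) :=
    frequently_atTop.1
      (frequently_eq_and_forall_Icc_le hz.continuous hlow (hhigh n) n.cast_nonneg) n
  choose ξ hnξ hξθ hξ using hcross
  obtain ⟨φ, hφ, f, hf, hsol, hcluster⟩ := h.exists_translate_limit hJ hJs hB hz hbdd
    (tendsto_atTop_mono hnξ tendsto_natCast_atTop_atTop)
  have hlim (x : ℝ) : Tendsto (fun n => z (ξ (φ n) + x)) atTop (𝓝 (f x)) :=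
    (tendstoLocallyUniformlyOn_univ.2 hf).tendsto_at (mem_univ x)
  refine ⟨f, hsol, hcluster, tendsto_nhds_unique (hlim 0) (by simp [hξθ]), fun x hx => ?_⟩
  refine ge_of_tendsto (hlim x) ?_
  filter_upwards [(tendsto_natCast_atTop_atTop.comp hφ.tendsto_atTop).eventually_ge_atTop x]
    with n hn
  exact hξ (φ n) x ⟨hx, hn⟩

theorem exists_tendsto_atTop (h : IsLogDerivSolution J c B z) (hJ : Continuous J)
    (hJs : HasCompactSupport J) (hJ0 : ∀ y, 0 ≤ J y) (hJne : J ≠ 0) (hc : c ≠ 0)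
    (hB : Tendsto B atTop (𝓝 b)) (hz : UniformContinuous z) (hbdd : ∃ M, ∀ x, |z x| ≤ M) :
    ∃ l, Tendsto z atTop (𝓝 l) ∧ IsCharRoot J c b l := by
  obtain ⟨M, hM⟩ := hbdd
  have hle : IsBoundedUnder (· ≤ ·) atTop z := isBoundedUnder_of ⟨M, fun x => (abs_le.1 (hM x)).2⟩
  have hge : IsBoundedUnder (· ≥ ·) atTop z := isBoundedUnder_of ⟨-M, fun x => (abs_le.1 (hM x)).1⟩
  have hmin := isLeast_mapClusterPt_liminf hle.isCoboundedUnder_ge hge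
  have hmax := isGreatest_mapClusterPt_limsup hge.isCoboundedUnder_le hle
  set l₁ := liminf z atTop
  set l₂ := limsup z atTop
  obtain ⟨hroot₁, hnear₁⟩ :=
    h.isCharRoot_and_frequently_near hJ hJs hJ0 hJne hc hB hz ⟨M, hM⟩ (.inl hmin)
  obtain ⟨hroot₂, hnear₂⟩ :=
    h.isCharRoot_and_frequently_near hJ hJs hJ0 hJne hc hB hz ⟨M, hM⟩ (.inr hmax)
  have heq : l₁ = l₂ := by
    by_contra hne
    have hlt : l₁ < l₂ := (hmin.2 hmax.1).lt_of_ne hne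
    obtain ⟨θ, hθ₁, hθ₂⟩ := exists_between hlt
    have hlow : ∃ᶠ x in atTop, z x < θ := (hnear₁ 0 _ (sub_pos.2 hθ₁)).mono fun x hx => by
      have := (abs_lt.1 (hx 0 (by simp))).2
      rw [add_zero] at this
      linarith
    have hhigh (L : ℝ) : ∃ᶠ x in atTop, ∀ t ∈ Icc 0 L, θ ≤ z (x + t) :=
      (hnear₂ L _ (sub_pos.2 hθ₂)).mono fun x hx t ht => by linarith [(abs_lt.1 (hx t ht)).1]
    obtain ⟨f, hsol, hcluster, hf0, hfθ⟩ :=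
      h.exists_limit_eq_and_forall_le hJ hJs hB hz ⟨M, hM⟩ hlow hhigh
    have hf0' : f 0 = l₂ := hsol.apply_zero_eq_of_isCharRoot hJ hJs hJ0 hJne f.continuous hroot₁
      hroot₂ hθ₁ hfθ fun x => hmax.2 (hcluster x)
    exact hθ₂.ne (hf0.symm.trans hf0')
  exact ⟨l₂, tendsto_of_liminf_eq_limsup heq rfl hle hge, hroot₂⟩

theorem exists_tendsto_atBot (h : IsLogDerivSolution J c B z) (hJ : Continuous J)
    (hJs : HasCompactSupport J) (hJ0 : ∀ y, 0 ≤ J y) (hJne : J ≠ 0) (hc : c ≠ 0)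
    (hB : Tendsto B atBot (𝓝 b)) (hz : UniformContinuous z) (hbdd : ∃ M, ∀ x, |z x| ≤ M) :
    ∃ l, Tendsto z atBot (𝓝 l) ∧ IsCharRoot J c b l := by
  have hJne' : (fun y => J (-y)) ≠ 0 := fun h0 =>
    hJne (funext fun y => by simpa using congr_fun h0 (-y))
  obtain ⟨l, hl, hroot⟩ := h.neg_comp_neg.exists_tendsto_atTop (hJ.comp continuous_neg)
    (hJs.comp_homeomorph (.neg ℝ)) (fun y => hJ0 (-y)) hJne' (neg_ne_zero.2 hc)
    (hB.comp tendsto_neg_atTop_atBot) (hz.comp uniformContinuous_neg).neg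
    (hbdd.imp fun M hM x => (abs_neg _).trans_le (hM (-x)))
  refine ⟨-l, by simpa [Function.comp_def] using hl.neg.comp tendsto_neg_atBot_atTop, ?_⟩
  rwa [← isCharRoot_comp_neg, neg_neg]

end IsLogDerivSolution

end Limits

theorem limits_of_logarithmic_derivative_general {J : ℝ → ℝ} (hJ : Continuous J)
    (hJs : HasCompactSupport J) (hJ0 : ∀ y, 0 ≤ J y) (hJne : J ≠ 0) {c : ℝ} (hc : c ≠ 0)
    {B : ℝ → ℝ} (hB : Continuous B) {Bp Bm : ℝ} (hBp : Tendsto B atTop (𝓝 Bp))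
    (hBm : Tendsto B atBot (𝓝 Bm)) {z : ℝ → ℝ} (hz : LocallyIntegrable z volume)
    (h : IsLogDerivSolution J c B z) :
    UniformContinuous z ∧ (∃ M, ∀ ξ, |z ξ| ≤ M) ∧
      (∃ ωp, Tendsto z atTop (𝓝 ωp) ∧ IsCharRoot J c Bp ωp) ∧
      ∃ ωm, Tendsto z atBot (𝓝 ωm) ∧ IsCharRoot J c Bm ωm := by
  have hzc : Continuous z := h.continuous hJ hJs hc hB fun _ _ =>
    (hz.integrableOn_isCompact isCompact_uIcc).intervalIntegrable
  have hbdd : ∃ M, ∀ ξ, |z ξ| ≤ M :=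
    h.exists_abs_le hJ hJs hJ0 hc (exists_abs_le_of_tendsto_atBot_atTop hB hBm hBp) hzc
  have huc : UniformContinuous z := h.uniformContinuous hJ hJs hc
    (uniformContinuous_of_tendsto_atBot_atTop hB hBm hBp) hzc hbdd
  exact ⟨huc, hbdd, h.exists_tendsto_atTop hJ hJs hJ0 hJne hc hBp huc hbdd,
    h.exists_tendsto_atBot hJ hJs hJ0 hJne hc hBm huc hbdd⟩

/-- If a locally integrable measurable `z` satisfies
`c z(ξ) = ∫ J(y) exp(∫_{ξ-y}^{ξ} z) dy + B(ξ)` with `B` continuous having limits at `±∞`,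
then `z` is uniformly continuous, bounded, has limits `ω±` at `±∞`, and these limits solve
the corresponding characteristic equations. -/
theorem limits_of_logarithmic_derivative
    (J : ℝ → ℝ) (hJ : IsKernel J)
    (c : ℝ) (hc : 0 < c)
    (B : ℝ → ℝ) (hB : Continuous B) (Bp Bm : ℝ)
    (hBp : Tendsto B atTop (nhds Bp)) (hBm : Tendsto B atBot (nhds Bm))
    (z : ℝ → ℝ) (hz : Measurable z) (hzloc : LocallyIntegrable z volume)
    (heq : ∀ ξ, c * z ξ = (∫ y, J y * Real.exp (∫ s in (ξ - y)..ξ, z s)) + B ξ) :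
    UniformContinuous z ∧ (∃ M, ∀ ξ, |z ξ| ≤ M) ∧
    (∃ ωp : ℝ, Tendsto z atTop (nhds ωp) ∧
      c * ωp = (∫ y, J y * Real.exp (ωp * y)) + Bp) ∧
    (∃ ωm : ℝ, Tendsto z atBot (nhds ωm) ∧
      c * ωm = (∫ y, J y * Real.exp (ωm * y)) + Bm) := by
  obtain ⟨hJc, hJ0, -, hJs, hJ1⟩ := hJ
  have hJne : J ≠ 0 := fun h => by simp [h] at hJ1
  exact limits_of_logarithmic_derivative_general hJc hJs hJ0 hJne hc.ne' hB hBp hBm hzloc heq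
end
end

section
/- Assume c_NL*(q) = c₀*, i.e. the minimal speed is linearly selected. Then the minimal traveling wave 𝒲_q satisfies 𝒲_q(ξ) = A ξ e^{−λ₀ξ} + B e^{−λ₀ξ} + o(e^{−λ₀ξ}) as ξ → +∞, where A ≥ 0 and B ∈ ℝ, and B > 0 if A = 0 (in particular A and B do not vanish simultaneously). -/
open Filter Asymptotics MeasureTheory Set

noncomputable section

/-- A nonlocal traveling wave front with speed `c` for the kernel `J` and nonlinearity `g`:
a decreasing `C¹` solution of `J∗W - W + cW' + g(W) = 0` connecting `1` to `0`. -/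
def IsNLFront (J : ℝ → ℝ) (g : ℝ → ℝ) (c : ℝ) (W : ℝ → ℝ) : Prop :=
  ContDiff ℝ 1 W ∧
  (∀ ξ, (∫ y, J (ξ - y) * W y) - W ξ + c * deriv W ξ + g (W ξ) = 0) ∧
  Tendsto W atBot (nhds 1) ∧ Tendsto W atTop (nhds 0) ∧
  (∀ ξ, deriv W ξ < 0)

/-- The linearized minimal speed `c₀* = inf_{λ>0} (∫ J(x)e^{λx}dx + γ₀ - 1)/λ`. -/
noncomputable def c0star (J : ℝ → ℝ) (γ₀ : ℝ) : ℝ :=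
  sInf ((fun l : ℝ => ((∫ x, J x * Real.exp (l * x)) + γ₀ - 1) / l) '' Ioi 0)

/-!
With `u ξ = W ξ * exp (l * ξ)` and `K y = J y * exp (l * y)`, the double root `l = λ₀` of the
dispersion relation turns the front equation into `taylorOp K u = remainder`, where `taylorOp K`
is a nonlocal second derivative that vanishes on affine functions and whose remainder is quadratic
in `W`. Pairing the equation with truncated exponentials gives `W = O(exp (-3 * l / 4 * ξ))`, so
that the remainder decays exponentially, and a Tauberian argument for second antiderivatives of `u`
(which are convex because `u > 0`) yields `u ξ = A * ξ + B + o(1)`. Positivity gives `A ≥ 0` and,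
if `A = 0`, `B ≥ 0`. If both vanished, then at a maximum point `x` of `u` on a half-line
`[X, ∞)` the remainder, being quadratic in `u`, would force `u x` to be smaller than itself.
-/

/-- A continuous nonnegative weight supported in `[-R, R]`. No normalization is imposed, so that the
exponentially tilted kernels `y ↦ J y * exp (l * y)` are covered. -/
structure IsCompactKernel (K : ℝ → ℝ) (R : ℝ) : Prop where
  continuous : Continuous K
  nonneg : ∀ y, 0 ≤ K y
  radius_pos : 0 < R
  eq_zero_of_le_abs : ∀ y, R ≤ |y| → K y = 0

/-- The second-order Taylor defect of `H` averaged against `K`: a nonlocal second derivative, which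
vanishes on affine functions. -/
def taylorOp (K H : ℝ → ℝ) (ξ : ℝ) : ℝ :=
  ∫ y, K y * (H (ξ - y) - H ξ + y * deriv H ξ)

/-- The part of the second moment of `K` carried by the positive half-line. -/
def rightSecondMoment (K : ℝ → ℝ) : ℝ :=
  ∫ y, K y * max y 0 ^ 2

lemma add_mul_deriv_add_sq_le {H : ℝ → ℝ} (hH : ContDiff ℝ 2 H) {m a b : ℝ}
    (hm : ∀ x ∈ uIcc a b, m ≤ deriv (deriv H) x) :
    H a + (b - a) * deriv H a + m / 2 * (b - a) ^ 2 ≤ H b := by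
  have hH' : ∀ x, HasDerivAt H (deriv H x) x := fun x =>
    (hH.differentiable (by norm_num) x).hasDerivAt
  have hH'' : ∀ x, HasDerivAt (deriv H) (deriv (deriv H) x) x := fun x =>
    ((ContDiff.deriv' (n := 1) hH).differentiable (by norm_num) x).hasDerivAt
  have hG : ∀ x, HasDerivAt (fun x => H x - m / 2 * x ^ 2) (deriv H x - m * x) x := fun x =>
    ((hH' x).sub ((hasDerivAt_pow 2 x).const_mul (m / 2))).congr_deriv (by ring)
  have hG' : ∀ x, HasDerivAt (fun x => deriv H x - m * x) (deriv (deriv H) x - m) x := fun x =>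
    ((hH'' x).sub ((hasDerivAt_id' x).const_mul m)).congr_deriv (by ring)
  have hGd : deriv (fun x => H x - m / 2 * x ^ 2) = fun x => deriv H x - m * x :=
    funext fun x => (hG x).deriv
  have hconv : ConvexOn ℝ (uIcc a b) fun x => H x - m / 2 * x ^ 2 := by
    refine convexOn_of_deriv2_nonneg' (convex_uIcc a b)
      (fun x _ => (hG x).differentiableAt.differentiableWithinAt) ?_ fun x hx => ?_
    · rw [hGd]
      exact fun x _ => (hG' x).differentiableAt.differentiableWithinAt
    · simp only [Function.iterate_succ, Function.iterate_zero, Function.comp_apply, id_eq, hGd,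
        (hG' x).deriv, sub_nonneg]
      exact hm x hx
  rcases lt_trichotomy a b with hab | rfl | hab
  · have := hconv.le_slope_of_hasDerivAt left_mem_uIcc right_mem_uIcc hab (hG a)
    rw [slope_def_field, le_div_iff₀ (sub_pos.2 hab)] at this
    linarith
  · simp
  · have := hconv.slope_le_of_hasDerivAt right_mem_uIcc left_mem_uIcc hab (hG a)
    rw [slope_def_field, div_le_iff₀ (sub_pos.2 hab)] at this
    linarith

namespace IsCompactKernel

variable {K : ℝ → ℝ} {R : ℝ}

lemma hasCompactSupport (hK : IsCompactKernel K R) : HasCompactSupport K :=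
  .intro (isCompact_closedBall 0 R) fun y hy => hK.eq_zero_of_le_abs y <| by
    simpa using (not_le.1 (mem_closedBall_zero_iff.not.1 hy)).le

lemma integrable_mul (hK : IsCompactKernel K R) {k : ℝ → ℝ} (hk : Continuous k) :
    Integrable fun y => K y * k y :=
  (hK.continuous.mul hk).integrable_of_hasCompactSupport hK.hasCompactSupport.mul_right

lemma integral_mul_mono (hK : IsCompactKernel K R) {k l : ℝ → ℝ} (hk : Continuous k)
    (hl : Continuous l) (hkl : ∀ y, |y| ≤ R → k y ≤ l y) :
    ∫ y, K y * k y ≤ ∫ y, K y * l y := by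
  refine integral_mono (hK.integrable_mul hk) (hK.integrable_mul hl) fun y => ?_
  rcases le_total |y| R with hy | hy
  · exact mul_le_mul_of_nonneg_left (hkl y hy) (hK.nonneg y)
  · simp [hK.eq_zero_of_le_abs y hy]

lemma integral_mul_pos (hK : IsCompactKernel K R) (hmean : 0 < ∫ y, K y * y) {k : ℝ → ℝ}
    (hk : Continuous k) (hk0 : ∀ y, 0 ≤ k y) (hkpos : ∀ y, 0 < y → 0 < k y) :
    0 < ∫ y, K y * k y := by
  obtain ⟨y, hy, hKy⟩ : ∃ y, 0 < y ∧ K y ≠ 0 := by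
    by_contra! h
    refine hmean.not_ge (integral_nonpos fun y => ?_)
    rcases lt_or_ge 0 y with hy | hy
    · simp [h y hy]
    · exact mul_nonpos_of_nonneg_of_nonpos (hK.nonneg y) hy
  exact (hK.continuous.mul hk).integral_pos_of_hasCompactSupport_nonneg_nonzero
    hK.hasCompactSupport.mul_right (fun y => mul_nonneg (hK.nonneg y) (hk0 y))
    (mul_ne_zero hKy (hkpos y hy).ne')

lemma integral_pos (hK : IsCompactKernel K R) (hmean : 0 < ∫ y, K y * y) : 0 < ∫ y, K y := by
  simpa using hK.integral_mul_pos hmean continuous_const (fun _ => zero_le_one)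
    fun _ _ => zero_lt_one

lemma rightSecondMoment_pos (hK : IsCompactKernel K R) (hmean : 0 < ∫ y, K y * y) :
    0 < rightSecondMoment K :=
  hK.integral_mul_pos hmean (by fun_prop) (fun y => sq_nonneg _)
    fun y hy => pow_pos (lt_max_of_lt_left hy) 2

lemma hasDerivAt_integral_mul (hK : IsCompactKernel K R) {k k' : ℝ → ℝ → ℝ}
    (hk : ∀ x, Continuous (k x)) (hk' : Continuous (Function.uncurry k'))
    (hd : ∀ x y, HasDerivAt (fun x => k x y) (k' x y) x) (x : ℝ) :
    HasDerivAt (fun x => ∫ y, K y * k x y) (∫ y, K y * k' x y) x := by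
  obtain ⟨C, hC⟩ := ((isCompact_Icc (a := x - 1) (b := x + 1)).prod
    (isCompact_Icc (a := -R) (b := R))).exists_bound_of_continuousOn hk'.continuousOn
  refine (hasDerivAt_integral_of_dominated_loc_of_deriv_le (s := Icc (x - 1) (x + 1))
    (bound := fun y => K y * C) (Icc_mem_nhds (by linarith) (by linarith))
    (.of_forall fun x => (hK.integrable_mul (hk x)).aestronglyMeasurable)
    (hK.integrable_mul (hk x))
    (hK.integrable_mul (hk'.comp (Continuous.prodMk_right x))).aestronglyMeasurable
    (.of_forall fun y t ht => ?_) (hK.integrable_mul continuous_const)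
    (.of_forall fun y t _ => (hd t y).const_mul _)).2
  rw [norm_mul, Real.norm_of_nonneg (hK.nonneg y)]
  rcases le_total |y| R with hy | hy
  · exact mul_le_mul_of_nonneg_left (hC (t, y) ⟨ht, abs_le.1 hy⟩) (hK.nonneg y)
  · simp [hK.eq_zero_of_le_abs y hy]

end IsCompactKernel

section TaylorOp

variable {K H : ℝ → ℝ} {R : ℝ}

lemma taylorOp_eq (hK : IsCompactKernel K R) (hH : Continuous H) (ξ : ℝ) :
    taylorOp K H ξ
      = (∫ y, K y * H (ξ - y)) - (∫ y, K y) * H ξ + (∫ y, K y * y) * deriv H ξ := by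
  have h1 := hK.integrable_mul (show Continuous fun y => H (ξ - y) by fun_prop)
  have h2 := hK.integrable_mul (show Continuous fun _ => H ξ by fun_prop)
  have h3 := (hK.integrable_mul continuous_id').mul_const (deriv H ξ)
  rw [← integral_mul_const, ← integral_mul_const, ← integral_sub h1 h2,
    ← integral_add (h1.sub' h2) h3]
  exact integral_congr_ae (.of_forall fun y => by ring)

lemma taylorOp_neg (K H : ℝ → ℝ) (ξ : ℝ) :
    taylorOp K (fun x => -H x) ξ = -taylorOp K H ξ := by
  simp only [taylorOp, deriv.fun_neg, ← integral_neg]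
  exact integral_congr_ae (.of_forall fun y => by ring)

lemma taylorOp_sub (hK : IsCompactKernel K R) {G : ℝ → ℝ} (hH : Differentiable ℝ H)
    (hG : Differentiable ℝ G) (ξ : ℝ) :
    taylorOp K (fun x => H x - G x) ξ = taylorOp K H ξ - taylorOp K G ξ := by
  have hHc := hH.continuous
  have hGc := hG.continuous
  simp only [taylorOp, deriv_fun_sub (hH ξ) (hG ξ)]
  rw [← integral_sub (hK.integrable_mul (by fun_prop)) (hK.integrable_mul (by fun_prop))]
  exact integral_congr_ae (.of_forall fun y => by ring)

lemma hasDerivAt_cubic (a b d e x : ℝ) :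
    HasDerivAt (fun x => a * x ^ 3 + b * x ^ 2 + d * x + e) (3 * a * x ^ 2 + 2 * b * x + d) x :=
  (((((hasDerivAt_pow 3 x).const_mul a).add ((hasDerivAt_pow 2 x).const_mul b)).add
    ((hasDerivAt_id' x).const_mul d)).add_const e).congr_deriv (by push_cast; ring)

lemma taylorOp_cubic (hK : IsCompactKernel K R) (a b d e ξ : ℝ) :
    taylorOp K (fun x => a * x ^ 3 + b * x ^ 2 + d * x + e) ξ
      = (3 * a * ξ + b) * (∫ y, K y * y ^ 2) - a * ∫ y, K y * y ^ 3 := by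
  rw [taylorOp, (hasDerivAt_cubic a b d e ξ).deriv, ← integral_const_mul, ← integral_const_mul,
    ← integral_sub ((hK.integrable_mul (by fun_prop)).const_mul _)
      ((hK.integrable_mul (by fun_prop)).const_mul _)]
  exact integral_congr_ae (.of_forall fun y => by ring)

lemma hasDerivAt_taylorOp (hK : IsCompactKernel K R) (hH : ContDiff ℝ 2 H) (ξ : ℝ) :
    HasDerivAt (taylorOp K H) (taylorOp K (deriv H) ξ) ξ := by
  have hH1 : ContDiff ℝ 1 (deriv H) := hH.deriv'
  have hc0 := hH.continuous
  have hc1 := hH1.continuous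
  have : Continuous (deriv (deriv H)) := hH1.continuous_deriv le_rfl
  have hd0 : ∀ x, HasDerivAt H (deriv H x) x := fun x =>
    (hH.differentiable (by norm_num) x).hasDerivAt
  have hd1 : ∀ x, HasDerivAt (deriv H) (deriv (deriv H) x) x := fun x =>
    (hH1.differentiable (by norm_num) x).hasDerivAt
  refine hK.hasDerivAt_integral_mul (k := fun ξ y => H (ξ - y) - H ξ + y * deriv H ξ)
    (k' := fun ξ y => deriv H (ξ - y) - deriv H ξ + y * deriv (deriv H) ξ)
    (fun x => by fun_prop) (by unfold Function.uncurry; fun_prop) (fun x y => ?_) ξ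
  exact (((hd0 (x - y)).comp_sub_const x y).sub (hd0 x)).add ((hd1 x).const_mul y)

lemma half_mul_rightSecondMoment_le_taylorOp (hK : IsCompactKernel K R) (hH : ContDiff ℝ 2 H)
    {m ξ : ℝ} (hleft : ∀ x ∈ Icc (ξ - R) ξ, m ≤ deriv (deriv H) x)
    (hright : ∀ x ∈ Icc ξ (ξ + R), 0 ≤ deriv (deriv H) x) :
    m / 2 * rightSecondMoment K ≤ taylorOp K H ξ := by
  have hc := hH.continuous
  rw [rightSecondMoment, ← integral_const_mul]
  simp only [mul_left_comm (m / 2)]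
  refine hK.integral_mul_mono (by fun_prop) (by fun_prop) fun y hy => ?_
  obtain ⟨hy1, hy2⟩ := abs_le.1 hy
  rcases le_total 0 y with h | h
  · have := add_mul_deriv_add_sq_le hH (a := ξ) (b := ξ - y) (m := m) fun x hx => by
      rw [uIcc_of_ge (by linarith)] at hx
      exact hleft x ⟨by linarith [hx.1], hx.2⟩
    rw [max_eq_left h]
    linarith
  · have := add_mul_deriv_add_sq_le hH (a := ξ) (b := ξ - y) (m := 0) fun x hx => by
      rw [uIcc_of_le (by linarith)] at hx
      exact hright x ⟨hx.1, by linarith [hx.2]⟩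
    rw [max_eq_right h]
    linarith

end TaylorOp

section Tauberian

variable {K : ℝ → ℝ} {R : ℝ}

-- The drift `c z'` with `c = ∫ K y * y > 0` propagates smallness of `z ≥ 0` to the right.
lemma le_gronwallBound_of_taylorOp_le (hK : IsCompactKernel K R) (hmean : 0 < ∫ y, K y * y)
    {z : ℝ → ℝ} (hz : Differentiable ℝ z) {x t q : ℝ} (hz0 : ∀ s, x - R ≤ s → 0 ≤ z s)
    (hq : ∀ s ∈ Icc x t, taylorOp K z s ≤ q) :
    ∀ s ∈ Icc x t,
      z s ≤ gronwallBound (z x) ((∫ y, K y) / ∫ y, K y * y) (q / ∫ y, K y * y) (s - x) := by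
  refine le_gronwallBound_of_liminf_deriv_right_le (f' := deriv z) hz.continuous.continuousOn
    (fun s _ r hr => (hz s).hasDerivAt.hasDerivWithinAt.liminf_right_slope_le hr) le_rfl
    fun s hs => ?_
  have hbound := hq s (Ico_subset_Icc_self hs)
  have hconv : 0 ≤ ∫ y, K y * z (s - y) := by
    refine integral_nonneg fun y => ?_
    rcases le_total |y| R with hy | hy
    · exact mul_nonneg (hK.nonneg y) (hz0 _ (by linarith [hs.1, (abs_le.1 hy).2]))
    · simp [hK.eq_zero_of_le_abs y hy]
  rw [taylorOp_eq hK hz.continuous] at hbound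
  rw [div_mul_eq_mul_div, ← add_div, le_div_iff₀ hmean]
  linarith

lemma exists_forward_bound (hK : IsCompactKernel K R) (hmean : 0 < ∫ y, K y * y) (T : ℝ) :
    ∃ E, 0 ≤ E ∧ ∀ (z : ℝ → ℝ) (x q : ℝ), Differentiable ℝ z → 0 ≤ q →
      (∀ s, x - R ≤ s → 0 ≤ z s) → (∀ s ∈ Icc x (x + T), taylorOp K z s ≤ q) →
      ∀ s ∈ Icc x (x + T), z s ≤ E * (z x + q) := by
  have hM := hK.integral_pos hmean
  set M := ∫ y, K y
  set c := ∫ y, K y * y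
  refine ⟨Real.exp (M / c * T) * (1 + 1 / M), by positivity, fun z x q hz hq hz0 hzq s hs => ?_⟩
  have hx := hz0 x (by linarith [hK.radius_pos])
  calc z s ≤ z x * Real.exp (M / c * (s - x))
        + q / c / (M / c) * (Real.exp (M / c * (s - x)) - 1) := by
        refine (le_gronwallBound_of_taylorOp_le hK hmean hz hz0 hzq s hs).trans_eq ?_
        rw [gronwallBound_of_K_ne_0 (by positivity)]
    _ ≤ Real.exp (M / c * (s - x)) * (z x + q / M) := by
        have : 0 ≤ q / M := by positivity
        rw [div_div_div_cancel_right₀ hmean.ne']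
        linarith
    _ ≤ Real.exp (M / c * T) * ((1 + 1 / M) * (z x + q)) := by
        gcongr
        · linarith [hs.2]
        · have : 0 ≤ 1 / M * z x := by positivity
          linear_combination this + hq
    _ = _ := by ring

-- Applies the forward bound to the gap between `v` and a parabola touching it from above at `x`.
lemma exists_sub_le_of_touching (hK : IsCompactKernel K R) (hmean : 0 < ∫ y, K y * y) (T : ℝ) :
    ∃ E, 0 ≤ E ∧ ∀ (v : ℝ → ℝ) (x m ε δ : ℝ), Differentiable ℝ v → 0 ≤ x → 0 ≤ ε → 0 ≤ δ →
      (∀ s, x - R ≤ s → v s ≤ m + ε * (s ^ 2 - x ^ 2)) → (∀ s, x ≤ s → -δ ≤ taylorOp K v s) →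
      ∀ s ∈ Icc x (x + T), m - E * ((m - v x) + ε + δ) ≤ v s := by
  obtain ⟨E, hE, hforward⟩ := exists_forward_bound hK hmean T
  set S := ∫ y, K y * y ^ 2
  have hS : 0 ≤ S := integral_nonneg fun y => mul_nonneg (hK.nonneg y) (sq_nonneg y)
  refine ⟨E * (1 + S), by positivity, fun v x m ε δ hv hx hε hδ htouch hlow s hs => ?_⟩
  have hgap : 0 ≤ m - v x := by linarith [htouch x (by linarith [hK.radius_pos])]
  have hparabola : ∀ t, 0 * t ^ 3 + ε * t ^ 2 + 0 * t + (m - ε * x ^ 2)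
      = m + ε * (t ^ 2 - x ^ 2) := fun t => by ring
  have hle := hforward (fun t => (0 * t ^ 3 + ε * t ^ 2 + 0 * t + (m - ε * x ^ 2)) - v t) x
    (ε * S + δ) (by fun_prop) (by positivity)
    (fun t ht => by linarith [htouch t ht, hparabola t])
    (fun t ht => by
      rw [taylorOp_sub hK (by fun_prop) hv, taylorOp_cubic hK]
      linarith [hlow t ht.1]) s hs
  simp only [hparabola, sub_self, mul_zero, add_zero] at hle
  have hsq : 0 ≤ ε * (s ^ 2 - x ^ 2) := mul_nonneg hε (by nlinarith [hs.1])
  have hslack : 0 ≤ E * (S * (m - v x) + ε + S * δ) := by positivity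
  linear_combination hle + hsq + hslack

-- If `V''` is nearly touched from above at `x` by a parabola of height `m`, then `V''` stays near
-- `m` on `[x, x + 2 * R]`, so that `taylorOp K V (x + R)` would be large if `m` were.
lemma exists_touching_bound (hK : IsCompactKernel K R) (hmean : 0 < ∫ y, K y * y) :
    ∃ C, 0 ≤ C ∧ ∀ (V : ℝ → ℝ) (x m ε δ : ℝ), ContDiff ℝ 3 V → 0 ≤ x → 0 ≤ ε → 0 ≤ δ →
      (∀ s, x - R ≤ s → deriv (deriv V) s ≤ m + ε * (s ^ 2 - x ^ 2)) →
      (∀ s, x ≤ s → -δ ≤ taylorOp K (deriv (deriv V)) s) → taylorOp K V (x + R) ≤ δ →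
      m ≤ C * ((m - deriv (deriv V) x) + ε + δ) := by
  obtain ⟨E, hE, hclose⟩ := exists_sub_le_of_touching hK hmean (2 * R)
  have hR := hK.radius_pos
  have hσ := hK.rightSecondMoment_pos hmean
  refine ⟨E + 2 / rightSecondMoment K, by positivity,
    fun V x m ε δ hV hx hε hδ htouch hlow hup => ?_⟩
  have hv : Differentiable ℝ (deriv (deriv V)) :=
    (ContDiff.deriv' (n := 1) (ContDiff.deriv' (n := 2) hV)).differentiable (by norm_num)
  have hgap : 0 ≤ m - deriv (deriv V) x := by linarith [htouch x (by linarith)]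
  have hbelow := hclose (deriv (deriv V)) x m ε δ hv hx hε hδ htouch hlow
  set e := E * ((m - deriv (deriv V) x) + ε + δ)
  have hheight : m ≤ e + 2 / rightSecondMoment K * δ := by
    rcases le_total m e with hme | hme
    · exact hme.trans (le_add_of_nonneg_right (by positivity))
    · have := (half_mul_rightSecondMoment_le_taylorOp hK (hV.of_le (by norm_num)) (m := m - e)
        (ξ := x + R) (fun s hs => hbelow s ⟨by linarith [hs.1], by linarith [hs.2]⟩)
        fun s hs => by linarith [hbelow s ⟨by linarith [hs.1], by linarith [hs.2]⟩]).trans hup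
      rw [div_mul_eq_mul_div, ← sub_le_iff_le_add', le_div_iff₀ hσ]
      linarith
  have hslack : 0 ≤ 2 / rightSecondMoment K * ((m - deriv (deriv V) x) + ε) := by positivity
  linear_combination hheight + hslack

lemma exists_isMaxOn_Ici {f : ℝ → ℝ} (hf : Continuous f) {X : ℝ}
    (h : ∀ᶠ x in atTop, f x ≤ f X) : ∃ x ∈ Ici X, IsMaxOn f (Ici X) x := by
  refine hf.continuousOn.exists_isMaxOn' isClosed_Ici self_mem_Ici ?_
  rw [eventually_inf_principal, cocompact_eq_atBot_atTop, eventually_sup]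
  exact ⟨(eventually_lt_atBot X).mono fun x hx hx' => absurd hx (not_lt.2 hx'),
    h.mono fun x hx _ => hx⟩

lemma exists_isMaxOn_Ici_sub_mul_sq {v : ℝ → ℝ} (hv : Continuous v)
    (hgrowth : v =o[atTop] fun x : ℝ => x ^ 2) {ε : ℝ} (hε : 0 < ε) (X : ℝ) :
    ∃ x ∈ Ici X, IsMaxOn (fun s => v s - ε * s ^ 2) (Ici X) x := by
  refine exists_isMaxOn_Ici (by fun_prop) ?_
  have hlim : Tendsto (fun s : ℝ => -(ε / 2) * s ^ 2) atTop atBot :=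
    (tendsto_pow_atTop two_ne_zero).const_mul_atTop_of_neg (by linarith)
  filter_upwards [hgrowth.bound (half_pos hε), hlim.eventually_le_atBot (v X - ε * X ^ 2)]
    with s hs hs'
  rw [Real.norm_eq_abs, Real.norm_of_nonneg (sq_nonneg s)] at hs
  linarith [le_abs_self (v s)]

lemma exists_forall_le_add_mul_sq (hK : IsCompactKernel K R) (hmean : 0 < ∫ y, K y * y)
    {V : ℝ → ℝ} (hV : ContDiff ℝ 3 V) (hgrowth : deriv (deriv V) =o[atTop] fun x : ℝ => x ^ 2)
    {X : ℝ} (hX : 0 ≤ X) (h0 : ∀ x, X ≤ x → taylorOp K V x ≤ 1)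
    (h2 : ∀ x, X ≤ x → -1 ≤ taylorOp K (deriv (deriv V)) x) :
    ∃ B, ∀ ε ∈ Ioc (0 : ℝ) 1, ∀ s, X ≤ s → deriv (deriv V) s ≤ B + ε * s ^ 2 := by
  obtain ⟨C, hC, htouch⟩ := exists_touching_bound hK hmean
  have hR := hK.radius_pos
  have hvc : Continuous (deriv (deriv V)) :=
    (ContDiff.deriv' (n := 1) (ContDiff.deriv' (n := 2) hV)).continuous
  obtain ⟨B, hB⟩ := (isCompact_Icc (a := X) (b := X + R)).exists_bound_of_continuousOn
    hvc.continuousOn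
  refine ⟨max B (C * 2), fun ε hε s hs => ?_⟩
  obtain ⟨x, hx, hmax⟩ := exists_isMaxOn_Ici_sub_mul_sq hvc hgrowth hε.1 X
  have hmax' : ∀ t, X ≤ t → deriv (deriv V) t - ε * t ^ 2 ≤ deriv (deriv V) x - ε * x ^ 2 :=
    fun t ht => hmax ht
  have hvx : deriv (deriv V) x ≤ max B (C * 2) := by
    rcases le_or_gt x (X + R) with hxR | hxR
    · exact le_max_of_le_left ((le_abs_self _).trans (hB x ⟨hx, hxR⟩))
    · have := htouch V x (deriv (deriv V) x) ε 1 hV (hX.trans hx) hε.1.le zero_le_one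
        (fun t ht => by linarith [hmax' t (by linarith)])
        (fun t ht => h2 t (hx.out.trans ht)) (h0 _ (by linarith))
      refine le_max_of_le_right (this.trans (mul_le_mul_of_nonneg_left ?_ hC))
      linarith [hε.2]
  have : 0 ≤ ε * x ^ 2 := mul_nonneg hε.1.le (sq_nonneg x)
  linarith [hmax' s hs]

lemma exists_eventually_le_of_tendsto_taylorOp (hK : IsCompactKernel K R)
    (hmean : 0 < ∫ y, K y * y) {V : ℝ → ℝ} (hV : ContDiff ℝ 3 V)
    (hgrowth : deriv (deriv V) =o[atTop] fun x : ℝ => x ^ 2)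
    (h0 : Tendsto (taylorOp K V) atTop (nhds 0))
    (h2 : Tendsto (taylorOp K (deriv (deriv V))) atTop (nhds 0)) :
    ∃ B, ∀ᶠ x in atTop, deriv (deriv V) x ≤ B := by
  obtain ⟨X, hX⟩ := eventually_atTop.1 ((eventually_ge_atTop 0).and
    ((h0.eventually_le_const one_pos).and (h2.eventually_const_le neg_one_lt_zero)))
  obtain ⟨B, hB⟩ := exists_forall_le_add_mul_sq hK hmean hV hgrowth (hX X le_rfl).1
    (fun x hx => (hX x hx).2.1) fun x hx => (hX x hx).2.2
  refine ⟨B, eventually_atTop.2 ⟨X, fun s hs => ?_⟩⟩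
  have hlim : Tendsto (fun ε => B + ε * s ^ 2) (nhdsWithin 0 (Ioi 0))
      (nhds (B + 0 * s ^ 2)) :=
    (Continuous.tendsto (by fun_prop) 0).mono_left nhdsWithin_le_nhds
  rw [zero_mul, add_zero] at hlim
  exact ge_of_tendsto hlim (mem_of_superset (Ioc_mem_nhdsGT one_pos) fun ε hε => hB ε hε s hs)

lemma eventually_deriv_deriv_lt_of_tendsto_taylorOp (hK : IsCompactKernel K R)
    (hmean : 0 < ∫ y, K y * y) {V : ℝ → ℝ} (hV : ContDiff ℝ 3 V)
    (hgrowth : deriv (deriv V) =o[atTop] fun x : ℝ => x ^ 2)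
    (h0 : Tendsto (taylorOp K V) atTop (nhds 0))
    (h2 : Tendsto (taylorOp K (deriv (deriv V))) atTop (nhds 0))
    (hbelow : ∃ B, ∀ᶠ x in atTop, B ≤ deriv (deriv V) x) {a : ℝ} (ha : 0 < a) :
    ∀ᶠ x in atTop, deriv (deriv V) x < a := by
  obtain ⟨C, hC, htouch⟩ := exists_touching_bound hK hmean
  have habove : IsBoundedUnder (· ≤ ·) atTop (deriv (deriv V)) :=
    exists_eventually_le_of_tendsto_taylorOp hK hmean hV hgrowth h0 h2
  have hcobdd : IsCoboundedUnder (· ≤ ·) atTop (deriv (deriv V)) :=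
    IsBoundedUnder.isCoboundedUnder_le hbelow
  set m := limsup (deriv (deriv V)) atTop
  have hm : ∀ η > 0, m + η ≤ C * (3 * η) := fun η hη => by
    obtain ⟨X, hX⟩ := eventually_atTop.1 ((eventually_ge_atTop 0).and
      ((eventually_lt_of_limsup_lt (lt_add_of_pos_right m hη) habove).and
      ((h0.eventually_le_const hη).and (h2.eventually_const_le (neg_lt_zero.2 hη)))))
    obtain ⟨x, hlt, hx⟩ := ((frequently_lt_of_lt_limsup hcobdd
      (sub_lt_self m hη)).and_eventually (eventually_ge_atTop (X + R))).exists
    have hR := hK.radius_pos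
    refine (htouch V x (m + η) 0 η hV (hX x (by linarith)).1 le_rfl hη.le
      (fun s hs => by linarith [(hX s (by linarith)).2.1])
      (fun s hs => (hX s (by linarith)).2.2.2) (hX _ (by linarith)).2.2.1).trans
      (mul_le_mul_of_nonneg_left (by linarith) hC)
  refine eventually_lt_of_limsup_lt (lt_of_le_of_lt ?_ ha) habove
  have hlim : Tendsto (fun η => C * (3 * η) - η) (nhdsWithin 0 (Ioi 0))
      (nhds (C * (3 * 0) - 0)) :=
    (Continuous.tendsto (by fun_prop) 0).mono_left nhdsWithin_le_nhds
  simp only [mul_zero, sub_zero] at hlim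
  exact ge_of_tendsto hlim (eventually_mem_nhdsWithin.mono fun η hη => by linarith [hm η hη])

lemma tendsto_deriv_deriv_of_tendsto_taylorOp (hK : IsCompactKernel K R)
    (hmean : 0 < ∫ y, K y * y) {V : ℝ → ℝ} (hV : ContDiff ℝ 3 V)
    (hgrowth : deriv (deriv V) =o[atTop] fun x : ℝ => x ^ 2)
    (h0 : Tendsto (taylorOp K V) atTop (nhds 0))
    (h2 : Tendsto (taylorOp K (deriv (deriv V))) atTop (nhds 0)) :
    Tendsto (deriv (deriv V)) atTop (nhds 0) := by
  have hd2 : deriv (deriv fun x => -V x) = fun x => -deriv (deriv V) x := by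
    simp only [deriv.fun_neg']
  have hgrowth' : deriv (deriv fun x => -V x) =o[atTop] fun x : ℝ => x ^ 2 := by
    rw [hd2]
    exact hgrowth.neg_left
  have h0' : Tendsto (taylorOp K fun x => -V x) atTop (nhds 0) := by
    simpa only [← taylorOp_neg, neg_zero] using h0.neg
  have h2' : Tendsto (taylorOp K (deriv (deriv fun x => -V x))) atTop (nhds 0) := by
    rw [hd2]
    simpa only [← taylorOp_neg, neg_zero] using h2.neg
  obtain ⟨B, hB⟩ := exists_eventually_le_of_tendsto_taylorOp hK hmean hV hgrowth h0 h2
  obtain ⟨B', hB'⟩ := exists_eventually_le_of_tendsto_taylorOp hK hmean hV.neg hgrowth' h0' h2'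
  rw [hd2] at hB'
  refine tendsto_order.2 ⟨fun a ha => ?_, fun a ha => ?_⟩
  · have := eventually_deriv_deriv_lt_of_tendsto_taylorOp hK hmean hV.neg hgrowth' h0' h2'
      ⟨-B, by rw [hd2]; exact hB.mono fun x hx => neg_le_neg hx⟩ (neg_pos.2 ha)
    rw [hd2] at this
    exact this.mono fun x hx => neg_lt_neg_iff.1 hx
  · exact eventually_deriv_deriv_lt_of_tendsto_taylorOp hK hmean hV hgrowth h0 h2
      ⟨-B', hB'.mono fun x hx => neg_le.1 hx⟩ ha

end Tauberian

section ExponentialIntegration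

variable {D : ℝ → ℝ} {α C X : ℝ}

lemma exists_abs_sub_le_of_abs_deriv_le_exp (hα : 0 < α) (hD : Differentiable ℝ D)
    (h : ∀ x, X ≤ x → |deriv D x| ≤ C * Real.exp (-α * x)) :
    ∃ l, ∀ x, X ≤ x → |D x - l| ≤ C / α * Real.exp (-α * x) := by
  have hbound : ∀ x, X ≤ x → ∀ᵐ y ∂volume.restrict (Ioi x),
      ‖deriv D y‖ ≤ C * Real.exp (-α * y) := fun x hx =>
    (ae_restrict_iff' measurableSet_Ioi).2 (.of_forall fun y hy => h y (hx.trans (le_of_lt hy)))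
  have hexp : ∀ x, IntegrableOn (fun y => C * Real.exp (-α * y)) (Ioi x) := fun x =>
    (integrableOn_exp_mul_Ioi (neg_lt_zero.2 hα) x).const_mul C
  have hint : ∀ x, X ≤ x → IntegrableOn (deriv D) (Ioi x) := fun x hx =>
    (hexp x).mono' (measurable_deriv D).aestronglyMeasurable (hbound x hx)
  have hlim := tendsto_limUnder_of_hasDerivAt_of_integrableOn_Ioi (a := X)
    (fun x _ => (hD x).hasDerivAt) (hint X le_rfl)
  refine ⟨limUnder atTop D, fun x hx => ?_⟩
  rw [abs_sub_comm, ← integral_Ioi_of_hasDerivAt_of_tendsto' (fun y _ => (hD y).hasDerivAt)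
    (hint x hx) hlim]
  refine (norm_integral_le_of_norm_le (hexp x) (hbound x hx)).trans_eq ?_
  rw [integral_const_mul, integral_exp_mul_Ioi (neg_lt_zero.2 hα)]
  ring

lemma exists_abs_sub_affine_le_of_abs_deriv_deriv_le_exp (hα : 0 < α) (hD : Differentiable ℝ D)
    (hD' : Differentiable ℝ (deriv D))
    (h : ∀ x, X ≤ x → |deriv (deriv D) x| ≤ C * Real.exp (-α * x)) :
    ∃ a b, ∀ x, X ≤ x → |D x - (a * x + b)| ≤ C / α ^ 2 * Real.exp (-α * x) := by
  obtain ⟨a, ha⟩ := exists_abs_sub_le_of_abs_deriv_le_exp hα hD' h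
  have hderiv : ∀ x, HasDerivAt (fun x => D x - a * x) (deriv D x - a) x := fun x =>
    ((hD x).hasDerivAt.sub ((hasDerivAt_id' x).const_mul a)).congr_deriv (by ring)
  obtain ⟨b, hb⟩ := exists_abs_sub_le_of_abs_deriv_le_exp hα
    (fun x => (hderiv x).differentiableAt) fun x hx => by
      rw [(hderiv x).deriv]
      exact ha x hx
  refine ⟨a, b, fun x hx => ?_⟩
  rw [← sub_sub, sq, ← div_div]
  exact hb x hx

end ExponentialIntegration

lemma exists_contDiff_succ_deriv_eq {n : ℕ} {u : ℝ → ℝ} (hu : ContDiff ℝ n u) :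
    ∃ H, ContDiff ℝ (n + 1) H ∧ deriv H = u := by
  have hd : ∀ x, HasDerivAt (fun x => ∫ t in (0 : ℝ)..x, u t) (u x) x := fun x =>
    hu.continuous.integral_hasStrictDerivAt 0 x |>.hasDerivAt
  have hderiv : deriv (fun x => ∫ t in (0 : ℝ)..x, u t) = u := funext fun x => (hd x).deriv
  refine ⟨_, contDiff_succ_iff_deriv.2 ⟨fun x => (hd x).differentiableAt, by simp, ?_⟩, hderiv⟩
  rwa [hderiv]

lemma isLittleO_affine_sq (a b : ℝ) :
    (fun x : ℝ => a * x + b) =o[atTop] fun x : ℝ => x ^ 2 := by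
  have hpow : ∀ k < 2, (fun x : ℝ => x ^ k) =o[atTop] fun x : ℝ => x ^ 2 := fun k hk =>
    isLittleO_pow_pow_atTop_of_lt hk
  simpa using ((hpow 1 (by norm_num)).const_mul_left a).add
    ((hpow 0 (by norm_num)).const_mul_left b)

section AffineAsymptotics

variable {K H : ℝ → ℝ} {R α C X : ℝ}

lemma deriv_deriv_sub_cubic (hH : ContDiff ℝ 3 H) (a b d e x : ℝ) :
    deriv (deriv fun x => H x - (a * x ^ 3 + b * x ^ 2 + d * x + e)) x
      = deriv (deriv H) x - (6 * a * x + 2 * b) := by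
  have hH' : Differentiable ℝ H := hH.differentiable (by norm_num)
  have hH'' : Differentiable ℝ (deriv H) :=
    (ContDiff.deriv' (n := 2) hH).differentiable (by norm_num)
  have h1 : (deriv fun x => H x - (a * x ^ 3 + b * x ^ 2 + d * x + e))
      = fun x => deriv H x - (0 * x ^ 3 + 3 * a * x ^ 2 + 2 * b * x + d) := funext fun x => by
    rw [((hH' x).hasDerivAt.fun_sub (hasDerivAt_cubic a b d e x)).deriv]
    ring
  rw [h1, ((hH'' x).hasDerivAt.fun_sub (hasDerivAt_cubic 0 (3 * a) (2 * b) d x)).deriv]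
  ring

lemma exists_abs_taylorOp_sub_affine_le (hK : IsCompactKernel K R) (hH : ContDiff ℝ 3 H)
    (hα : 0 < α) (h : ∀ ξ, X ≤ ξ → |taylorOp K (deriv (deriv H)) ξ| ≤ C * Real.exp (-α * ξ)) :
    ∃ a b, ∀ ξ, X ≤ ξ → |taylorOp K H ξ - (a * ξ + b)| ≤ C / α ^ 2 * Real.exp (-α * ξ) := by
  have hd := hasDerivAt_taylorOp hK (hH.of_le (by norm_num))
  have hd' := hasDerivAt_taylorOp hK (ContDiff.deriv' (n := 2) hH)
  have hderiv : deriv (taylorOp K H) = taylorOp K (deriv H) := funext fun ξ => (hd ξ).deriv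
  refine exists_abs_sub_affine_le_of_abs_deriv_deriv_le_exp hα
    (fun ξ => (hd ξ).differentiableAt) ?_ fun ξ hξ => ?_
  · rw [hderiv]
    exact fun ξ => (hd' ξ).differentiableAt
  · rw [hderiv, (hd' ξ).deriv]
    exact h ξ hξ

-- A cubic corrector has affine image under `taylorOp K`, so it absorbs the integration constants.
lemma exists_abs_taylorOp_sub_cubic_le (hK : IsCompactKernel K R) (hmean : 0 < ∫ y, K y * y)
    (hH : ContDiff ℝ 3 H) (hα : 0 < α)
    (h : ∀ ξ, X ≤ ξ → |taylorOp K (deriv (deriv H)) ξ| ≤ C * Real.exp (-α * ξ)) :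
    ∃ A B, ∀ ξ, X ≤ ξ →
      |taylorOp K (fun x => H x - (A / 6 * x ^ 3 + B / 2 * x ^ 2 + 0 * x + 0)) ξ|
        ≤ C / α ^ 2 * Real.exp (-α * ξ) := by
  obtain ⟨a, b, hab⟩ := exists_abs_taylorOp_sub_affine_le hK hH hα h
  have hS : 0 < ∫ y, K y * y ^ 2 := hK.integral_mul_pos hmean (by fun_prop) sq_nonneg
    fun y hy => pow_pos hy 2
  set S := ∫ y, K y * y ^ 2
  set S3 := ∫ y, K y * y ^ 3
  refine ⟨2 * a / S, 2 * (b + a / (3 * S) * S3) / S, fun ξ hξ => ?_⟩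
  rw [taylorOp_sub hK (hH.differentiable (by norm_num)) (by fun_prop), taylorOp_cubic hK]
  convert hab ξ hξ using 3
  field_simp
  ring

lemma tendsto_mul_exp_neg (hα : 0 < α) (C : ℝ) :
    Tendsto (fun x => C * Real.exp (-α * x)) atTop (nhds 0) := by
  have := Real.tendsto_exp_atBot.comp (tendsto_id.const_mul_atTop_of_neg (neg_lt_zero.2 hα))
  simpa using this.const_mul C

lemma tendsto_deriv_deriv_sub_affine (hK : IsCompactKernel K R) (hmean : 0 < ∫ y, K y * y)
    (hH : ContDiff ℝ 3 H) (hgrowth : deriv (deriv H) =o[atTop] fun x : ℝ => x ^ 2) {A B : ℝ}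
    (h0 : Tendsto (taylorOp K fun x => H x - (A / 6 * x ^ 3 + B / 2 * x ^ 2 + 0 * x + 0)) atTop
      (nhds 0))
    (h2 : Tendsto (taylorOp K (deriv (deriv H))) atTop (nhds 0)) :
    Tendsto (fun x => deriv (deriv H) x - (A * x + B)) atTop (nhds 0) := by
  have hd2 : (deriv (deriv fun x => H x - (A / 6 * x ^ 3 + B / 2 * x ^ 2 + 0 * x + 0)))
      = fun x => deriv (deriv H) x - (0 * x ^ 3 + 0 * x ^ 2 + A * x + B) := funext fun x => by
    rw [deriv_deriv_sub_cubic hH]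
    ring
  have hH2 : Differentiable ℝ (deriv (deriv H)) :=
    (ContDiff.deriv' (n := 1) (ContDiff.deriv' (n := 2) hH)).differentiable (by norm_num)
  have := tendsto_deriv_deriv_of_tendsto_taylorOp hK hmean (by fun_prop) (by
      rw [hd2]
      simpa only [zero_mul, zero_add] using hgrowth.sub (isLittleO_affine_sq A B)) h0 (by
      refine h2.congr fun ξ => ?_
      rw [hd2, taylorOp_sub hK hH2 (by fun_prop), taylorOp_cubic hK]
      ring)
  rw [hd2] at this
  simpa only [zero_mul, zero_add] using this

end AffineAsymptotics

/-- A front rescaled by the critical exponential, `u ξ = W ξ * exp (l * ξ)` with `W > 0` decreasing.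
Its limiting shape is the polynomial prefactor in the asymptotics of `W`. -/
structure IsRescaledFront (u : ℝ → ℝ) (l : ℝ) : Prop where
  contDiff : ContDiff ℝ 1 u
  pos : ∀ ξ, 0 < u ξ
  antitone : Antitone fun ξ => u ξ * Real.exp (-l * ξ)

lemma eq_zero_of_tendsto_affine {a b : ℝ}
    (h : Tendsto (fun x => a * x + b) atTop (nhds 0)) : a = 0 ∧ b = 0 := by
  have ha : a = 0 := by
    have hshift := (h.comp (tendsto_atTop_add_const_right atTop (1 : ℝ) tendsto_id)).sub h
    rw [sub_zero] at hshift
    refine tendsto_nhds_unique tendsto_const_nhds (hshift.congr fun x => ?_)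
    simp only [Function.comp_apply, id_eq]
    ring
  subst ha
  simp only [zero_mul, zero_add] at h
  exact ⟨rfl, tendsto_nhds_unique tendsto_const_nhds h⟩

namespace IsRescaledFront

variable {K u H : ℝ → ℝ} {R l α C X : ℝ}

lemma mul_le_taylorOp (hu : IsRescaledFront u l) (hl : 0 < l) (hK : IsCompactKernel K R)
    (hH : ContDiff ℝ 2 H) (hHu : deriv (deriv H) = u) (ξ : ℝ) :
    Real.exp (-l * R) * rightSecondMoment K / 2 * u ξ ≤ taylorOp K H ξ := by
  refine le_of_eq_of_le (by ring) (half_mul_rightSecondMoment_le_taylorOp hK hH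
    (m := Real.exp (-l * R) * u ξ) (fun x hx => ?_) fun x _ => ?_)
  · calc Real.exp (-l * R) * u ξ
        ≤ Real.exp (l * (x - ξ)) * u ξ := by
          have hexp : -l * R ≤ l * (x - ξ) := by nlinarith [hx.1]
          exact mul_le_mul_of_nonneg_right (Real.exp_le_exp.2 hexp) (hu.pos ξ).le
      _ = u ξ * Real.exp (-l * ξ) * Real.exp (l * x) := by
          rw [mul_assoc, ← Real.exp_add]
          ring_nf
      _ ≤ u x * Real.exp (-l * x) * Real.exp (l * x) := by
          exact mul_le_mul_of_nonneg_right (hu.antitone hx.2) (Real.exp_pos _).le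
      _ = deriv (deriv H) x := by
          rw [mul_assoc, ← Real.exp_add, hHu]
          simp
  · rw [hHu]
    exact (hu.pos x).le

lemma isLittleO_sq (hu : IsRescaledFront u l) (hl : 0 < l) (hK : IsCompactKernel K R)
    (hmean : 0 < ∫ y, K y * y) (hH : ContDiff ℝ 3 H) (hHu : deriv (deriv H) = u) (hα : 0 < α)
    (h : ∀ ξ, X ≤ ξ → |taylorOp K u ξ| ≤ C * Real.exp (-α * ξ)) :
    u =o[atTop] fun x : ℝ => x ^ 2 := by
  obtain ⟨a, b, hab⟩ := exists_abs_taylorOp_sub_affine_le hK hH hα (hHu ▸ h)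
  have hσ := hK.rightSecondMoment_pos hmean
  set κ := Real.exp (-l * R) * rightSecondMoment K / 2
  have hκ : 0 < κ := by positivity
  refine IsBigO.trans_isLittleO (.of_bound κ⁻¹ ?_) (isLittleO_affine_sq a (b + 1))
  filter_upwards [eventually_ge_atTop X,
    (tendsto_mul_exp_neg hα (C / α ^ 2)).eventually_le_const one_pos] with x hx hx'
  have hlow : κ * u x ≤ taylorOp K H x := hu.mul_le_taylorOp hl hK (hH.of_le (by norm_num)) hHu x
  rw [Real.norm_of_nonneg (hu.pos x).le, ← div_eq_inv_mul, le_div_iff₀' hκ]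
  refine le_trans ?_ (le_abs_self _)
  linarith [(abs_le.1 (hab x hx)).2]

-- The last clause keeps track of `C`, which drives the argument against `A = B = 0`.
lemma exists_tendsto_sub_affine (hu : IsRescaledFront u l) (hl : 0 < l)
    (hK : IsCompactKernel K R) (hmean : 0 < ∫ y, K y * y) (hα : 0 < α)
    (h : ∀ ξ, X ≤ ξ → |taylorOp K u ξ| ≤ C * Real.exp (-α * ξ)) :
    ∃ A B, Tendsto (fun ξ => u ξ - (A * ξ + B)) atTop (nhds 0) ∧
      (A = 0 → B = 0 → ∀ ξ, X ≤ ξ →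
        Real.exp (-l * R) * rightSecondMoment K / 2 * u ξ ≤ C / α ^ 2 * Real.exp (-α * ξ)) := by
  obtain ⟨H', hH', rfl⟩ := exists_contDiff_succ_deriv_eq (n := 1) hu.contDiff
  obtain ⟨H, hH, rfl⟩ := exists_contDiff_succ_deriv_eq (n := 2) (by exact_mod_cast hH')
  have hH3 : ContDiff ℝ 3 H := by exact_mod_cast hH
  obtain ⟨A, B, hAB⟩ := exists_abs_taylorOp_sub_cubic_le hK hmean hH3 hα h
  refine ⟨A, B, ?_, ?_⟩
  · refine tendsto_deriv_deriv_sub_affine hK hmean hH3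
      (hu.isLittleO_sq hl hK hmean hH3 rfl hα h) ?_ ?_
    · exact squeeze_zero_norm' ((eventually_ge_atTop X).mono hAB) (tendsto_mul_exp_neg hα _)
    · exact squeeze_zero_norm' ((eventually_ge_atTop X).mono h) (tendsto_mul_exp_neg hα _)
  · rintro rfl rfl ξ hξ
    have := hAB ξ hξ
    simp only [zero_div, zero_mul, add_zero, sub_zero] at this
    exact (hu.mul_le_taylorOp hl hK (hH3.of_le (by norm_num)) rfl ξ).trans (abs_le.1 this).2

lemma slope_nonneg (hu : IsRescaledFront u l) {A B : ℝ}
    (hAB : Tendsto (fun ξ => u ξ - (A * ξ + B)) atTop (nhds 0)) : 0 ≤ A := by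
  by_contra! hA
  have hbot := tendsto_atBot_add_const_right atTop B (tendsto_id.const_mul_atTop_of_neg hA)
  obtain ⟨ξ, h1, h2⟩ := ((hAB.eventually_lt_const one_pos).and
    (hbot.eventually_le_atBot (-1))).exists
  simp only [id_eq] at h2
  linarith [hu.pos ξ]

-- If `u → 0`, apply the quantitative clause from a far maximum point `x` of `u` with
-- `C = C₀ * u x ^ 2`: this gives `κ * u x ≤ C₀ / l ^ 2 * u x ^ 2 * exp (-l * x)`, too small.
lemma not_tendsto_zero (hu : IsRescaledFront u l) (hl : 0 < l) (hK : IsCompactKernel K R)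
    (hmean : 0 < ∫ y, K y * y) {C₀ : ℝ}
    (h : ∀ ξ, |taylorOp K u ξ| ≤ C₀ * u ξ ^ 2 * Real.exp (-l * ξ)) :
    ¬ Tendsto u atTop (nhds 0) := by
  intro hzero
  have hσ := hK.rightSecondMoment_pos hmean
  have hC₀ : 0 ≤ C₀ := by
    have hbound := (abs_nonneg _).trans (h 0)
    have := pow_pos (hu.pos 0) 2
    contrapose! hbound
    exact mul_neg_of_neg_of_pos (mul_neg_of_neg_of_pos hbound this) (Real.exp_pos _)
  set κ := Real.exp (-l * R) * rightSecondMoment K / 2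
  have hκ : 0 < κ := by positivity
  obtain ⟨X, hX⟩ := eventually_atTop.1 ((hzero.eventually_le_const one_pos).and
    ((tendsto_mul_exp_neg hl (C₀ / l ^ 2)).eventually_lt_const hκ))
  obtain ⟨x, hx, hmax⟩ := exists_isMaxOn_Ici hu.contDiff.continuous
    (hzero.eventually_le_const (hu.pos X))
  obtain ⟨A, B, hAB, hdecay⟩ := hu.exists_tendsto_sub_affine hl hK hmean hl
    (C := C₀ * u x ^ 2) (X := x) fun ξ hξ => (h ξ).trans (by
      have := (hu.pos ξ).le
      gcongr
      exact hmax (hx.out.trans hξ))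
  obtain ⟨rfl, rfl⟩ : A = 0 ∧ B = 0 :=
    eq_zero_of_tendsto_affine (by simpa using hzero.sub hAB)
  refine (hdecay rfl rfl x le_rfl).not_gt ?_
  calc C₀ * u x ^ 2 / l ^ 2 * Real.exp (-l * x)
      = C₀ / l ^ 2 * Real.exp (-l * x) * (u x * u x) := by ring
    _ ≤ C₀ / l ^ 2 * Real.exp (-l * x) * (1 * u x) := by
        have := (hu.pos x).le
        gcongr
        exact (hX x hx).1
    _ < κ * u x := by
        rw [one_mul]
        exact mul_lt_mul_of_pos_right (hX x hx).2 (hu.pos x)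

theorem exists_asymptotics (hu : IsRescaledFront u l) (hl : 0 < l) (hK : IsCompactKernel K R)
    (hmean : 0 < ∫ y, K y * y) {C₀ : ℝ}
    (h : ∀ ξ, |taylorOp K u ξ| ≤ C₀ * u ξ ^ 2 * Real.exp (-l * ξ)) (hα : 0 < α)
    (hdecay : ∀ ξ, X ≤ ξ → |taylorOp K u ξ| ≤ C * Real.exp (-α * ξ)) :
    ∃ A B, 0 ≤ A ∧ (0 < A ∨ (A = 0 ∧ 0 < B)) ∧
      Tendsto (fun ξ => u ξ - (A * ξ + B)) atTop (nhds 0) := by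
  obtain ⟨A, B, hAB, -⟩ := hu.exists_tendsto_sub_affine hl hK hmean hα hdecay
  have hA := hu.slope_nonneg hAB
  refine ⟨A, B, hA, hA.lt_or_eq.imp_right fun hA0 => ⟨hA0.symm, ?_⟩, hAB⟩
  subst hA0
  have hlim : Tendsto u atTop (nhds B) := by simpa using hAB.add_const B
  refine (ge_of_tendsto' hlim fun ξ => (hu.pos ξ).le).lt_of_ne fun hB => ?_
  exact hu.not_tendsto_zero hl hK hmean h (hB ▸ hlim)

end IsRescaledFront

/-- The exponential `x ↦ exp (μ * x)`, cut off on the right by a Gaussian factor: an integrable test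
function whose logarithmic derivative `μ - 2 * θ * max x 0` never exceeds `μ`. -/
def cutoffExp (μ θ x : ℝ) : ℝ :=
  Real.exp (μ * x - θ * max x 0 ^ 2)

lemma sq_max_add_zero_sub_mem_Icc (x y : ℝ) :
    max (x + y) 0 ^ 2 - max x 0 ^ 2 - 2 * max x 0 * y ∈ Icc 0 (y ^ 2) := by
  rcases le_total x 0 with hx | hx <;> rcases le_total (x + y) 0 with hxy | hxy <;>
    simp only [hx, hxy, max_eq_left, max_eq_right, mem_Icc] <;> constructor <;>
    nlinarith [sq_nonneg y]

lemma hasDerivAt_sq_max_zero (x : ℝ) : HasDerivAt (fun x => max x 0 ^ 2) (2 * max x 0) x := by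
  rw [hasDerivAt_iff_isLittleO_nhds_zero]
  refine IsBigO.trans_isLittleO (.of_bound 1 (.of_forall fun y => ?_))
    (isLittleO_pow_id one_lt_two)
  obtain ⟨h1, h2⟩ := sq_max_add_zero_sub_mem_Icc x y
  rw [smul_eq_mul, mul_comm y, Real.norm_of_nonneg h1, Real.norm_of_nonneg (sq_nonneg y), one_mul]
  exact h2

section CutoffExp

variable {μ θ : ℝ}

lemma cutoffExp_pos (μ θ x : ℝ) : 0 < cutoffExp μ θ x :=
  Real.exp_pos _

lemma cutoffExp_le_exp (μ : ℝ) (hθ : 0 ≤ θ) (x : ℝ) : cutoffExp μ θ x ≤ Real.exp (μ * x) :=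
  Real.exp_le_exp.2 (sub_le_self _ (by positivity))

lemma hasDerivAt_cutoffExp (μ θ x : ℝ) :
    HasDerivAt (cutoffExp μ θ) ((μ - 2 * θ * max x 0) * cutoffExp μ θ x) x :=
  ((((hasDerivAt_id' x).const_mul μ).sub
    ((hasDerivAt_sq_max_zero x).const_mul θ)).exp).congr_deriv (by rw [cutoffExp]; simp; ring)

lemma continuous_cutoffExp (μ θ : ℝ) : Continuous (cutoffExp μ θ) :=
  continuous_iff_continuousAt.2 fun x => (hasDerivAt_cutoffExp μ θ x).continuousAt

lemma integrable_cutoffExp (hμ : 0 < μ) (hθ : 0 < θ) : Integrable (cutoffExp μ θ) := by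
  rw [← integrableOn_univ, ← Iic_union_Ioi (a := (0 : ℝ))]
  have hmeas := (continuous_cutoffExp μ θ).aestronglyMeasurable (μ := volume)
  refine IntegrableOn.union ?_ ?_
  · refine (integrableOn_exp_mul_Iic hμ 0).mono' hmeas.restrict (.of_forall fun x => ?_)
    rw [Real.norm_of_nonneg (cutoffExp_pos μ θ x).le]
    exact cutoffExp_le_exp μ hθ.le x
  · refine ((integrableOn_exp_mul_Ioi neg_one_lt_zero 0).const_mul
      (Real.exp ((μ + 1) ^ 2 / (4 * θ)))).mono' hmeas.restrict
      ((ae_restrict_iff' measurableSet_Ioi).2 (.of_forall fun x hx => ?_))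
    rw [Real.norm_of_nonneg (cutoffExp_pos μ θ x).le, ← Real.exp_add, cutoffExp,
      max_eq_left (le_of_lt hx), Real.exp_le_exp, ← sub_nonneg]
    have hsq : (μ + 1) ^ 2 / (4 * θ) + -1 * x - (μ * x - θ * x ^ 2)
        = θ * (x - (μ + 1) / (2 * θ)) ^ 2 := by
      field_simp
      ring
    rw [hsq]
    positivity

lemma max_zero_mul_cutoffExp_le (μ θ x : ℝ) :
    max x 0 * cutoffExp μ θ x ≤ cutoffExp (μ + 1) θ x := by
  rcases le_total x 0 with hx | hx
  · simpa [hx] using (cutoffExp_pos _ _ _).le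
  · have hsplit : cutoffExp (μ + 1) θ x = Real.exp x * cutoffExp μ θ x := by
      rw [cutoffExp, cutoffExp, ← Real.exp_add]
      ring_nf
    rw [max_eq_left hx, hsplit]
    exact mul_le_mul_of_nonneg_right (by linarith [Real.add_one_le_exp x]) (cutoffExp_pos _ _ _).le

lemma integrable_deriv_cutoffExp (hμ : 0 < μ) (hθ : 0 < θ) :
    Integrable (deriv (cutoffExp μ θ)) := by
  have hsplit : deriv (cutoffExp μ θ)
      = fun x => μ * cutoffExp μ θ x - 2 * θ * (max x 0 * cutoffExp μ θ x) := funext fun x => by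
    rw [(hasDerivAt_cutoffExp μ θ x).deriv]
    ring
  have hc := continuous_cutoffExp μ θ
  rw [hsplit]
  refine ((integrable_cutoffExp hμ hθ).const_mul μ).sub (.const_mul ?_ (2 * θ))
  refine (integrable_cutoffExp (by linarith : 0 < μ + 1) hθ).mono'
    (by fun_prop : Continuous _).aestronglyMeasurable (.of_forall fun x => ?_)
  rw [Real.norm_of_nonneg (mul_nonneg (le_max_right _ _) (cutoffExp_pos _ _ _).le)]
  exact max_zero_mul_cutoffExp_le μ θ x

lemma cutoffExp_mul_exp_mul_le (hθ : 0 ≤ θ) (x y : ℝ) :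
    (1 - θ * y ^ 2) * Real.exp ((μ - 2 * θ * max x 0) * y) * cutoffExp μ θ x
      ≤ cutoffExp μ θ (x + y) := by
  have hgauss : 1 - θ * y ^ 2 ≤ Real.exp (-(θ * y ^ 2)) := by
    linarith [Real.add_one_le_exp (-(θ * y ^ 2))]
  calc _ ≤ Real.exp (-(θ * y ^ 2)) * Real.exp ((μ - 2 * θ * max x 0) * y) * cutoffExp μ θ x := by
        have := (cutoffExp_pos μ θ x).le
        gcongr
    _ = Real.exp (-(θ * y ^ 2) + (μ - 2 * θ * max x 0) * y + (μ * x - θ * max x 0 ^ 2)) := by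
        rw [cutoffExp, ← Real.exp_add, ← Real.exp_add]
    _ ≤ cutoffExp μ θ (x + y) := by
        refine Real.exp_le_exp.2 ?_
        have := mul_le_mul_of_nonneg_left (sq_max_add_zero_sub_mem_Icc x y).2 hθ
        linarith

end CutoffExp

/-- The linearization at the state `0` of the nonlocal front equation with speed `c`, where `γ` is
the slope of the nonlinearity at `0`. -/
def linearFrontOp (J : ℝ → ℝ) (c γ : ℝ) (W : ℝ → ℝ) (ξ : ℝ) : ℝ :=
  (∫ y, J (ξ - y) * W y) - W ξ + c * deriv W ξ + γ * W ξ

/-- The formal adjoint of `linearFrontOp`. -/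
def adjointFrontOp (J : ℝ → ℝ) (c γ : ℝ) (φ : ℝ → ℝ) (x : ℝ) : ℝ :=
  (∫ y, J y * φ (x + y)) - φ x - c * deriv φ x + γ * φ x

section Duality

variable {J φ W : ℝ → ℝ} {B B' : ℝ}

lemma integral_mul_convolution_eq (hJ : Integrable J) (hφ : Integrable φ) (hW : Continuous W)
    (hWB : ∀ x, |W x| ≤ B) :
    (Integrable fun ξ => φ ξ * ∫ y, J (ξ - y) * W y) ∧
    (Integrable fun x => (∫ y, J y * φ (x + y)) * W x) ∧
    ∫ ξ, φ ξ * ∫ y, J (ξ - y) * W y = ∫ x, (∫ y, J y * φ (x + y)) * W x := by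
  have hprod : Integrable
      (Function.uncurry fun y ξ => φ ξ * J (ξ - y) * W y) (volume.prod volume) := by
    have hconv := hφ.convolution_integrand (ContinuousLinearMap.mul ℝ ℝ) hJ.comp_neg
    simp only [ContinuousLinearMap.mul_apply', neg_sub] at hconv
    exact hconv.mul_bdd (hW.comp continuous_fst).aestronglyMeasurable
      (.of_forall fun p => hWB p.1)
  have hinner : ∀ x, ∫ ξ, φ ξ * J (ξ - x) * W x = (∫ y, J y * φ (x + y)) * W x := fun x => by
    rw [integral_mul_const, ← integral_add_left_eq_self (fun ξ => φ ξ * J (ξ - x)) x]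
    simp only [add_sub_cancel_left, mul_comm]
  have houter : ∀ ξ, ∫ x, φ ξ * J (ξ - x) * W x = φ ξ * ∫ y, J (ξ - y) * W y := fun ξ => by
    simp only [mul_assoc, integral_const_mul]
  have hswap := integral_integral_swap hprod
  have hleft := hprod.integral_prod_left
  have hright := hprod.integral_prod_right
  simp only [Function.uncurry_apply_pair, hinner, houter] at hswap hleft hright
  exact ⟨hright, hleft, hswap.symm⟩

lemma integral_mul_linearFrontOp_eq (c γ : ℝ) (hJ : Integrable J) (hφd : Differentiable ℝ φ)
    (hφ : Integrable φ) (hφ' : Integrable (deriv φ)) (hW : ContDiff ℝ 1 W)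
    (hWB : ∀ x, |W x| ≤ B) (hWB' : ∀ x, |deriv W x| ≤ B') :
    (Integrable fun ξ => φ ξ * linearFrontOp J c γ W ξ) ∧
    (Integrable fun x => adjointFrontOp J c γ φ x * W x) ∧
    ∫ ξ, φ ξ * linearFrontOp J c γ W ξ = ∫ x, adjointFrontOp J c γ φ x * W x := by
  obtain ⟨hconv, hconv', hswap⟩ := integral_mul_convolution_eq hJ hφ hW.continuous hWB
  have hmulW : ∀ {k : ℝ → ℝ}, Integrable k → Integrable fun x => k x * W x := fun hk =>
    hk.mul_bdd hW.continuous.aestronglyMeasurable (.of_forall hWB)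
  have hφW' : Integrable fun x => φ x * deriv W x :=
    hφ.mul_bdd (hW.continuous_deriv le_rfl).aestronglyMeasurable (.of_forall hWB')
  have hibp : ∫ x, φ x * deriv W x = -∫ x, deriv φ x * W x :=
    integral_mul_deriv_eq_deriv_mul_of_integrable (fun x _ => (hφd x).hasDerivAt)
      (fun x _ => (hW.differentiable one_ne_zero x).hasDerivAt) hφW' (hmulW hφ') (hmulW hφ)
  have hlin : ∀ ξ, φ ξ * linearFrontOp J c γ W ξ = φ ξ * (∫ y, J (ξ - y) * W y)
      + c * (φ ξ * deriv W ξ) + (γ - 1) * (φ ξ * W ξ) := fun ξ => by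
    rw [linearFrontOp]
    ring
  have hadj : ∀ x, adjointFrontOp J c γ φ x * W x = (∫ y, J y * φ (x + y)) * W x
      + -c * (deriv φ x * W x) + (γ - 1) * (φ x * W x) := fun x => by
    rw [adjointFrontOp]
    ring
  simp only [hlin, hadj]
  have h1 := hconv.fun_add (hφW'.const_mul c)
  have h2 := hconv'.fun_add ((hmulW hφ').const_mul (-c))
  have h3 := (hmulW hφ).const_mul (γ - 1)
  refine ⟨h1.fun_add h3, h2.fun_add h3, ?_⟩
  rw [integral_add h1 h3, integral_add h2 h3, integral_add hconv (hφW'.const_mul c),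
    integral_add hconv' ((hmulW hφ').const_mul (-c)), hswap, integral_const_mul,
    integral_const_mul (-c), hibp, neg_mul, mul_neg]

end Duality

/-- The two-sided Laplace transform of `J`, that is, its moment generating function. -/
def expMoment (J : ℝ → ℝ) (l : ℝ) : ℝ :=
  ∫ x, J x * Real.exp (l * x)

/-- The dispersion relation of `linearFrontOp` for a kernel of mass 1: the factor by which that
operator multiplies `x ↦ exp (-l * x)`. -/
def dispersion (J : ℝ → ℝ) (c γ l : ℝ) : ℝ :=
  expMoment J l - 1 + γ - c * l

section Decay

variable {J W : ℝ → ℝ} {c γ μ η θ R X C B : ℝ}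

lemma half_mul_cutoffExp_le_adjointFrontOp (hJ : IsCompactKernel J R) (hθ : 0 ≤ θ)
    (hθR : θ * R ^ 2 ≤ η / 2) (hη : 0 ≤ η) (hJ1 : ∀ s, 1 ≤ expMoment J s)
    (hgap : ∀ s ≤ μ, η * expMoment J s ≤ dispersion J c γ s) (x : ℝ) :
    η / 2 * cutoffExp μ θ x ≤ adjointFrontOp J c γ (cutoffExp μ θ) x := by
  have hφ := cutoffExp_pos μ θ x
  have hφc := continuous_cutoffExp μ θ
  set s := μ - 2 * θ * max x 0 with hs
  have hconv : (1 - θ * R ^ 2) * expMoment J s * cutoffExp μ θ x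
      ≤ ∫ y, J y * cutoffExp μ θ (x + y) := by
    calc _ = ∫ y, J y * ((1 - θ * R ^ 2) * Real.exp (s * y) * cutoffExp μ θ x) := by
          rw [expMoment, ← integral_const_mul, ← integral_mul_const]
          exact integral_congr_ae (.of_forall fun y => by ring)
      _ ≤ ∫ y, J y * cutoffExp μ θ (x + y) := by
          refine hJ.integral_mul_mono (by fun_prop) (by fun_prop) fun y hy => ?_
          refine le_trans ?_ (cutoffExp_mul_exp_mul_le hθ x y)
          have := sq_le_sq.2 (hy.trans (le_abs_self R))
          gcongr
  have hsμ : s ≤ μ := sub_le_self _ (by positivity)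
  have hM := hJ1 s
  have hcoef : η / 2 ≤ (1 - θ * R ^ 2) * expMoment J s - 1 + γ - c * s := by
    have := hgap s hsμ
    rw [dispersion] at this
    nlinarith
  calc η / 2 * cutoffExp μ θ x
      ≤ ((1 - θ * R ^ 2) * expMoment J s - 1 + γ - c * s) * cutoffExp μ θ x := by gcongr
    _ ≤ adjointFrontOp J c γ (cutoffExp μ θ) x := by
        rw [adjointFrontOp, (hasDerivAt_cutoffExp μ θ x).deriv, ← hs]
        linarith

lemma mul_exp_le_integral_cutoffExp_mul (hμ : 0 < μ) (hθ : 0 ≤ θ) (hW0 : ∀ x, 0 < W x)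
    (hWa : Antitone W) (hint : Integrable fun x => cutoffExp μ θ x * W x) {ξ : ℝ} (hξ : 0 ≤ ξ) :
    W ξ * Real.exp (-θ * ξ ^ 2) * (Real.exp (μ * ξ) / μ) ≤ ∫ x, cutoffExp μ θ x * W x := by
  have hφ : ∀ x, 0 ≤ cutoffExp μ θ x * W x := fun x =>
    mul_nonneg (cutoffExp_pos μ θ x).le (hW0 x).le
  refine le_trans ?_ (setIntegral_le_integral (s := Iic ξ) hint (.of_forall hφ))
  rw [← integral_exp_mul_Iic hμ, ← integral_const_mul]
  refine setIntegral_mono_on ((integrableOn_exp_mul_Iic hμ ξ).const_mul _) hint.integrableOn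
    measurableSet_Iic fun x hx => ?_
  have hsq : max x 0 ^ 2 ≤ ξ ^ 2 := pow_le_pow_left₀ (le_max_right _ _) (max_le hx hξ) 2
  calc W ξ * Real.exp (-θ * ξ ^ 2) * Real.exp (μ * x)
      = Real.exp (μ * x - θ * ξ ^ 2) * W ξ := by
        rw [mul_assoc, ← Real.exp_add]
        ring_nf
    _ ≤ cutoffExp μ θ x * W x := by
        rw [cutoffExp]
        gcongr
        · exact (hW0 ξ).le
        · exact hWa hx

lemma integrable_cutoffExp_mul (hμ : 0 < μ) (hθ : 0 < θ) (hWc : Continuous W)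
    (hWB : ∀ x, |W x| ≤ B) : Integrable fun x => cutoffExp μ θ x * W x :=
  (integrable_cutoffExp hμ hθ).mul_bdd hWc.aestronglyMeasurable (.of_forall hWB)

lemma integrable_cutoffExp_mul_sq (hμ : 0 < μ) (hθ : 0 < θ) (hC : 0 ≤ C) (hWc : Continuous W)
    (hW0 : ∀ x, 0 < W x) (hW1 : ∀ x, W x ≤ 1) :
    Integrable fun x => cutoffExp μ θ x * (C * W x ^ 2) :=
  integrable_cutoffExp_mul hμ hθ (B := C) (by fun_prop) fun x => by
    rw [abs_of_nonneg (mul_nonneg hC (sq_nonneg _))]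
    exact mul_le_of_le_one_right hC (pow_le_one₀ (hW0 x).le (hW1 x))

lemma integral_cutoffExp_mul_sq_le (hμ : 0 < μ) (hθ : 0 < θ) (hC : 0 ≤ C) (hWc : Continuous W)
    (hW0 : ∀ x, 0 < W x) (hW1 : ∀ x, W x ≤ 1) (hX : ∀ x, X ≤ x → C * W x ≤ η) :
    ∫ x, cutoffExp μ θ x * (C * W x ^ 2)
      ≤ η * (∫ x, cutoffExp μ θ x * W x) + C * (Real.exp (μ * X) / μ) := by
  have hW : Integrable fun x => cutoffExp μ θ x * W x :=
    integrable_cutoffExp_mul hμ hθ hWc fun x => abs_le.2 ⟨by linarith [hW0 x], hW1 x⟩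
  have hW2 := integrable_cutoffExp_mul_sq hμ hθ hC hWc hW0 hW1
  have hexp : Integrable ((Iic X).indicator fun x => Real.exp (μ * x)) :=
    (integrable_indicator_iff measurableSet_Iic).2 (integrableOn_exp_mul_Iic hμ X)
  rw [← integral_exp_mul_Iic hμ, ← integral_indicator measurableSet_Iic, ← integral_const_mul,
    ← integral_const_mul, ← integral_add (hW.const_mul η) (hexp.const_mul C)]
  refine integral_mono hW2 ((hW.const_mul η).add (hexp.const_mul C)) fun x => ?_
  have hφ := cutoffExp_pos μ θ x
  have hη : 0 ≤ η := (mul_nonneg hC (hW0 X).le).trans (hX X le_rfl)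
  have hφW := mul_nonneg hη (mul_pos hφ (hW0 x)).le
  rcases le_or_gt x X with hx | hx
  · rw [indicator_of_mem (mem_Iic.2 hx)]
    refine le_trans ?_ (le_add_of_nonneg_left hφW)
    calc cutoffExp μ θ x * (C * W x ^ 2) ≤ Real.exp (μ * x) * (C * 1) := by
          gcongr
          · exact cutoffExp_le_exp μ hθ.le x
          · exact pow_le_one₀ (hW0 x).le (hW1 x)
      _ = C * Real.exp (μ * x) := by ring
  · rw [indicator_of_notMem (notMem_Iic.2 hx), mul_zero, add_zero]
    calc cutoffExp μ θ x * (C * W x ^ 2) = C * W x * (cutoffExp μ θ x * W x) := by ring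
      _ ≤ η * (cutoffExp μ θ x * W x) :=
        mul_le_mul_of_nonneg_right (hX x hx.le) (mul_pos hφ (hW0 x)).le

lemma integral_cutoffExp_mul_le (hJ : IsCompactKernel J R) (hJ1 : ∀ s, 1 ≤ expMoment J s)
    (hμ : 0 < μ) (hη : 0 < η) (hgap : ∀ s ≤ μ, η * expMoment J s ≤ dispersion J c γ s)
    (hθ : 0 < θ) (hθR : θ * R ^ 2 ≤ η / 2) (hW : ContDiff ℝ 1 W) (hW0 : ∀ x, 0 < W x)
    (hW1 : ∀ x, W x ≤ 1) (hW' : ∀ x, |deriv W x| ≤ B) (hC : 0 ≤ C)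
    (hLW : ∀ x, linearFrontOp J c γ W x ≤ C * W x ^ 2)
    (hX : ∀ x, X ≤ x → C * W x ≤ η / 4) :
    η / 4 * (∫ x, cutoffExp μ θ x * W x) ≤ C * (Real.exp (μ * X) / μ) := by
  have hWabs : ∀ x, |W x| ≤ 1 := fun x => abs_le.2 ⟨by linarith [hW0 x], hW1 x⟩
  obtain ⟨hintL, hintA, hdual⟩ := integral_mul_linearFrontOp_eq c γ
    (by simpa using hJ.integrable_mul continuous_const (k := fun _ => 1))
    (fun x => (hasDerivAt_cutoffExp μ θ x).differentiableAt) (integrable_cutoffExp hμ hθ)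
    (integrable_deriv_cutoffExp hμ hθ) hW hWabs hW'
  have hφW := integrable_cutoffExp_mul hμ hθ hW.continuous hWabs
  have hφW2 : Integrable fun x => cutoffExp μ θ x * (C * W x ^ 2) :=
    integrable_cutoffExp_mul_sq hμ hθ hC hW.continuous hW0 hW1
  have hlower : η / 2 * (∫ x, cutoffExp μ θ x * W x)
      ≤ ∫ x, adjointFrontOp J c γ (cutoffExp μ θ) x * W x := by
    rw [← integral_const_mul]
    refine integral_mono (hφW.const_mul _) hintA fun x => ?_
    rw [← mul_assoc]
    exact mul_le_mul_of_nonneg_right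
      (half_mul_cutoffExp_le_adjointFrontOp hJ hθ.le hθR hη.le hJ1 hgap x) (hW0 x).le
  have hupper : ∫ x, cutoffExp μ θ x * linearFrontOp J c γ W x
      ≤ ∫ x, cutoffExp μ θ x * (C * W x ^ 2) :=
    integral_mono hintL hφW2 fun x =>
      mul_le_mul_of_nonneg_left (hLW x) (cutoffExp_pos μ θ x).le
  have hquad := integral_cutoffExp_mul_sq_le hμ hθ hC hW.continuous hW0 hW1 hX
  linarith

theorem exists_le_mul_exp_of_linearFrontOp_le (hJ : IsCompactKernel J R)
    (hJ1 : ∀ s, 1 ≤ expMoment J s) (hμ : 0 < μ) (hη : 0 < η)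
    (hgap : ∀ s ≤ μ, η * expMoment J s ≤ dispersion J c γ s) (hW : ContDiff ℝ 1 W)
    (hW0 : ∀ x, 0 < W x) (hW1 : ∀ x, W x ≤ 1) (hWa : Antitone W)
    (hWlim : Tendsto W atTop (nhds 0)) (hW' : ∀ x, |deriv W x| ≤ B) (hC : 0 ≤ C)
    (hLW : ∀ x, linearFrontOp J c γ W x ≤ C * W x ^ 2) :
    ∃ D, ∀ ξ, 0 ≤ ξ → W ξ ≤ D * Real.exp (-μ * ξ) := by
  obtain ⟨X, hX⟩ := eventually_atTop.1 ((show Tendsto (fun x => C * W x) atTop (nhds 0) by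
    simpa using hWlim.const_mul C).eventually_le_const (show 0 < η / 4 by positivity))
  refine ⟨4 / η * (C * Real.exp (μ * X)), fun ξ hξ => ?_⟩
  have hcut : ∀ᶠ θ in nhdsWithin (0 : ℝ) (Ioi 0), η / 4 *
      (W ξ * Real.exp (-θ * ξ ^ 2) * (Real.exp (μ * ξ) / μ)) ≤ C * (Real.exp (μ * X) / μ) := by
    have hsmall : ∀ᶠ θ : ℝ in nhds 0, θ * R ^ 2 ≤ η / 2 :=
      ((continuous_mul_const (R ^ 2)).tendsto' 0 0 (zero_mul _)).eventually_le_const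
        (half_pos hη)
    filter_upwards [self_mem_nhdsWithin, hsmall.filter_mono nhdsWithin_le_nhds] with θ hθ hθR
    refine le_trans ?_ (integral_cutoffExp_mul_le hJ hJ1 hμ hη hgap hθ hθR hW hW0 hW1 hW' hC hLW
      hX)
    refine mul_le_mul_of_nonneg_left (mul_exp_le_integral_cutoffExp_mul hμ (le_of_lt hθ) hW0 hWa
      ?_ hξ) (by positivity)
    exact integrable_cutoffExp_mul hμ hθ hW.continuous
      fun x => abs_le.2 ⟨by linarith [hW0 x], hW1 x⟩
  have hcont : Continuous fun θ : ℝ => η / 4 *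
      (W ξ * Real.exp (-θ * ξ ^ 2) * (Real.exp (μ * ξ) / μ)) := by fun_prop
  have hlim := le_of_tendsto (hcont.continuousWithinAt (s := Ioi 0) (x := 0)).tendsto hcut
  rw [neg_zero, zero_mul, Real.exp_zero, mul_one] at hlim
  rw [neg_mul, Real.exp_neg, ← div_eq_mul_inv, le_div_iff₀ (Real.exp_pos _)]
  field_simp at hlim ⊢
  linarith

end Decay

/-- The exponentially tilted kernel, which turns `linearFrontOp` at a double root `l` of the
dispersion relation into `taylorOp` for the profile rescaled by `exp (l * x)`. -/
def tilt (J : ℝ → ℝ) (l y : ℝ) : ℝ :=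
  J y * Real.exp (l * y)

section Dispersion

variable {J W : ℝ → ℝ} {R c γ l μ : ℝ}

lemma IsCompactKernel.tilt (hJ : IsCompactKernel J R) (l : ℝ) : IsCompactKernel (tilt J l) R where
  continuous := hJ.continuous.mul (by fun_prop)
  nonneg y := mul_nonneg (hJ.nonneg y) (Real.exp_pos _).le
  radius_pos := hJ.radius_pos
  eq_zero_of_le_abs y hy := by rw [_root_.tilt, hJ.eq_zero_of_le_abs y hy, zero_mul]

lemma hasDerivAt_expMoment (hJ : IsCompactKernel J R) (s : ℝ) :
    HasDerivAt (expMoment J) (∫ y, tilt J s y * y) s := by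
  simp only [tilt, mul_assoc]
  refine hJ.hasDerivAt_integral_mul (k := fun s y => Real.exp (s * y))
    (k' := fun s y => Real.exp (s * y) * y) (fun x => by fun_prop)
    (by unfold Function.uncurry; fun_prop) (fun x y => ?_) s
  simpa using ((hasDerivAt_id' x).mul_const y).exp

lemma continuous_expMoment (hJ : IsCompactKernel J R) : Continuous (expMoment J) :=
  continuous_iff_continuousAt.2 fun s => (hasDerivAt_expMoment hJ s).continuousAt

lemma integral_tilt_mul_self_eq_of_isLocalMin (hJ : IsCompactKernel J R)
    (h : IsLocalMin (dispersion J c γ) l) : ∫ y, tilt J l y * y = c := by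
  have hd : HasDerivAt (dispersion J c γ) ((∫ y, tilt J l y * y) - c) l :=
    ((((hasDerivAt_expMoment hJ l).sub_const 1).add_const γ).sub
      ((hasDerivAt_id' l).const_mul c)).congr_deriv (by rw [mul_one])
  exact sub_eq_zero.1 (h.hasDerivAt_eq_zero hd)

lemma taylorOp_tilt (hJ : IsCompactKernel J R) (hW : Differentiable ℝ W)
    (hroot : dispersion J c γ l = 0) (hcrit : ∫ y, tilt J l y * y = c) (ξ : ℝ) :
    taylorOp (tilt J l) (fun x => W x * Real.exp (l * x)) ξ
      = Real.exp (l * ξ) * linearFrontOp J c γ W ξ := by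
  have hmass : ∫ y, tilt J l y = 1 - γ + c * l := by
    rw [dispersion, expMoment] at hroot
    simp only [tilt]
    linarith
  have hconv : ∫ y, tilt J l y * (W (ξ - y) * Real.exp (l * (ξ - y)))
      = Real.exp (l * ξ) * ∫ y, J (ξ - y) * W y := by
    rw [← integral_sub_left_eq_self (fun y => J (ξ - y) * W y) volume ξ, ← integral_const_mul]
    refine integral_congr_ae (.of_forall fun y => ?_)
    simp only [tilt, sub_sub_cancel, mul_sub l ξ y, Real.exp_sub]
    field_simp
  have hderiv : HasDerivAt (fun x => W x * Real.exp (l * x))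
      ((deriv W ξ + l * W ξ) * Real.exp (l * ξ)) ξ :=
    ((hW ξ).hasDerivAt.mul ((hasDerivAt_id' ξ).const_mul l).exp).congr_deriv (by ring)
  have hc := hW.continuous
  rw [taylorOp_eq (hJ.tilt l) (by fun_prop), hconv, hmass, hcrit, hderiv.deriv, linearFrontOp]
  ring

lemma exists_mul_expMoment_le_dispersion (hJ : IsCompactKernel J R) (hJ1 : ∀ s, 1 ≤ expMoment J s)
    (hγ : 0 < γ) (hc : 0 ≤ c) (hμ : 0 ≤ μ) (hpos : ∀ s ∈ Icc 0 μ, 0 < dispersion J c γ s) :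
    ∃ η > 0, ∀ s ≤ μ, η * expMoment J s ≤ dispersion J c γ s := by
  have hM := continuous_expMoment hJ
  have hMpos : ∀ s, 0 < expMoment J s := fun s => one_pos.trans_le (hJ1 s)
  have hD : Continuous (dispersion J c γ) := by
    unfold dispersion
    fun_prop
  obtain ⟨s₀, hs₀, hmin⟩ := isCompact_Icc.exists_isMinOn (nonempty_Icc.2 hμ)
    (hD.div hM fun s => (hMpos s).ne').continuousOn
  refine ⟨min (min γ 1) (dispersion J c γ s₀ / expMoment J s₀),
    lt_min (lt_min hγ one_pos) (div_pos (hpos s₀ hs₀) (hMpos s₀)), fun s hs => ?_⟩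
  rcases le_or_gt 0 s with h0 | h0
  · rw [← le_div_iff₀ (hMpos s)]
    exact (min_le_right _ _).trans (hmin ⟨h0, hs⟩)
  · calc _ ≤ min γ 1 * expMoment J s := mul_le_mul_of_nonneg_right (min_le_left _ _) (hMpos s).le
      _ = min γ 1 * (expMoment J s - 1) + min γ 1 := by ring
      _ ≤ 1 * (expMoment J s - 1) + γ := by
          have := sub_nonneg.2 (hJ1 s)
          gcongr
          · exact min_le_right _ _
          · exact min_le_left _ _
      _ ≤ dispersion J c γ s := by
          rw [dispersion]
          nlinarith

end Dispersion

namespace IsKernel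

variable {J : ℝ → ℝ} {γ l : ℝ}

lemma exists_isCompactKernel (hJ : IsKernel J) : ∃ R, IsCompactKernel J R := by
  obtain ⟨hc, h0, -, hsupp, -⟩ := hJ
  obtain ⟨R, hR, hzero⟩ := hsupp.exists_pos_le_norm
  exact ⟨R, hc, h0, hR, hzero⟩

lemma integral_mul_self (hJ : IsKernel J) : ∫ y, J y * y = 0 := by
  have hflip := integral_neg_eq_self (fun y => J y * y) volume
  simp only [hJ.2.2.1, mul_neg, integral_neg] at hflip
  linarith

lemma one_le_expMoment (hJ : IsKernel J) (s : ℝ) : 1 ≤ expMoment J s := by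
  obtain ⟨R, hK⟩ := hJ.exists_isCompactKernel
  calc 1 = ∫ y, J y * (s * y + 1) := by
        have h1 := (hK.integrable_mul continuous_id').const_mul s
        have h2 := hK.integrable_mul (continuous_const (y := (1 : ℝ)))
        simp only [mul_add, mul_left_comm _ s]
        rw [integral_add h1 h2, integral_const_mul, hJ.integral_mul_self]
        simp only [mul_one, mul_zero, zero_add, hJ.2.2.2.2]
    _ ≤ expMoment J s :=
        hK.integral_mul_mono (by fun_prop) (by fun_prop) fun y _ => Real.add_one_le_exp _

lemma dispersion_zero (hJ : IsKernel J) (c γ : ℝ) : dispersion J c γ 0 = γ := by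
  simp [dispersion, expMoment, hJ.2.2.2.2]

lemma dispersion_c0star_nonneg (hJ : IsKernel J) (hγ : 0 ≤ γ) (hl : 0 < l) :
    0 ≤ dispersion J (c0star J γ) γ l := by
  have hle : c0star J γ ≤ (expMoment J l + γ - 1) / l := by
    refine csInf_le ⟨0, ?_⟩ (mem_image_of_mem _ hl)
    rintro _ ⟨s, hs, rfl⟩
    have := hJ.one_le_expMoment s
    exact div_nonneg (by rw [expMoment] at this; linarith) (le_of_lt hs)
  rw [le_div_iff₀ hl] at hle
  rw [dispersion]
  linarith

lemma pos_of_dispersion_eq_zero (hJ : IsKernel J) (hγ : 0 < γ) (hl : 0 < l) {c : ℝ}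
    (hroot : dispersion J c γ l = 0) : 0 < c := by
  have := hJ.one_le_expMoment l
  rw [dispersion] at hroot
  exact pos_of_mul_pos_left (by linarith : 0 < c * l) hl.le

end IsKernel

namespace IsNLFront

variable {J f W : ℝ → ℝ} {c γ l μ C : ℝ}

lemma contDiff (hW : IsNLFront J f c W) : ContDiff ℝ 1 W :=
  hW.1

lemma strictAnti (hW : IsNLFront J f c W) : StrictAnti W :=
  strictAnti_of_deriv_neg hW.2.2.2.2

lemma tendsto_atTop (hW : IsNLFront J f c W) : Tendsto W atTop (nhds 0) :=
  hW.2.2.2.1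

lemma pos (hW : IsNLFront J f c W) (x : ℝ) : 0 < W x :=
  (hW.strictAnti.antitone.le_of_tendsto hW.tendsto_atTop (x + 1)).trans_lt
    (hW.strictAnti (lt_add_one x))

lemma le_one (hW : IsNLFront J f c W) (x : ℝ) : W x ≤ 1 :=
  hW.strictAnti.antitone.ge_of_tendsto hW.2.2.1 x

lemma linearFrontOp_eq (hW : IsNLFront J f c W) (γ ξ : ℝ) :
    linearFrontOp J c γ W ξ = γ * W ξ - f (W ξ) := by
  have := hW.2.1 ξ
  rw [linearFrontOp]
  linarith

lemma abs_linearFrontOp_le (hW : IsNLFront J f c W)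
    (hf : ∀ w ∈ Icc (0 : ℝ) 1, |γ * w - f w| ≤ C * w ^ 2) (ξ : ℝ) :
    |linearFrontOp J c γ W ξ| ≤ C * W ξ ^ 2 := by
  rw [hW.linearFrontOp_eq]
  exact hf _ ⟨(hW.pos ξ).le, hW.le_one ξ⟩

lemma isRescaledFront (hW : IsNLFront J f c W) (l : ℝ) :
    IsRescaledFront (fun ξ => W ξ * Real.exp (l * ξ)) l where
  contDiff := hW.contDiff.mul (by fun_prop)
  pos ξ := mul_pos (hW.pos ξ) (Real.exp_pos _)
  antitone := by
    simpa [mul_assoc, ← Real.exp_add] using hW.strictAnti.antitone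

lemma abs_convolution_le (hW : IsNLFront J f c W) (hJ : IsKernel J) (ξ : ℝ) :
    |∫ y, J (ξ - y) * W y| ≤ 1 := by
  obtain ⟨R, hK⟩ := hJ.exists_isCompactKernel
  have hint : Integrable J := by simpa using hK.integrable_mul (k := 1) continuous_one
  calc |∫ y, J (ξ - y) * W y| ≤ ∫ y, J (ξ - y) := by
        rw [← Real.norm_eq_abs]
        refine norm_integral_le_of_norm_le (hint.comp_sub_left ξ) (.of_forall fun y => ?_)
        rw [Real.norm_of_nonneg (mul_nonneg (hK.nonneg _) (hW.pos y).le)]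
        exact mul_le_of_le_one_right (hK.nonneg _) (hW.le_one y)
    _ = 1 := by rw [integral_sub_left_eq_self J, hJ.2.2.2.2]

lemma exists_abs_deriv_le (hW : IsNLFront J f c W) (hJ : IsKernel J) (hc : 0 < c) (hC : 0 ≤ C)
    (hf : ∀ w ∈ Icc (0 : ℝ) 1, |γ * w - f w| ≤ C * w ^ 2) :
    ∃ B, ∀ ξ, |deriv W ξ| ≤ B := by
  refine ⟨(C + 1 + |1 - γ|) / c, fun ξ => ?_⟩
  have hLW : |linearFrontOp J c γ W ξ| ≤ C := (hW.abs_linearFrontOp_le hf ξ).trans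
    (mul_le_of_le_one_right hC (pow_le_one₀ (hW.pos ξ).le (hW.le_one ξ)))
  have hWγ : |(1 - γ) * W ξ| ≤ |1 - γ| := by
    rw [abs_mul, abs_of_pos (hW.pos ξ)]
    exact mul_le_of_le_one_right (abs_nonneg _) (hW.le_one ξ)
  have hderiv : |deriv W ξ| * c
      = |linearFrontOp J c γ W ξ - (∫ y, J (ξ - y) * W y) + (1 - γ) * W ξ| := by
    rw [← abs_of_pos hc, ← abs_mul, abs_of_pos hc, linearFrontOp]
    ring_nf
  rw [le_div_iff₀ hc, hderiv]
  linarith [abs_add_le (linearFrontOp J c γ W ξ - ∫ y, J (ξ - y) * W y) ((1 - γ) * W ξ),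
    abs_sub (linearFrontOp J c γ W ξ) (∫ y, J (ξ - y) * W y), hW.abs_convolution_le hJ ξ]

lemma exists_le_mul_exp (hW : IsNLFront J f c W) (hJ : IsKernel J) (hγ : 0 < γ) (hc : 0 < c)
    (hf : ∀ w ∈ Icc (0 : ℝ) 1, |γ * w - f w| ≤ C * w ^ 2) (hC : 0 ≤ C) (hμ : 0 < μ)
    (hpos : ∀ s ∈ Icc 0 μ, 0 < dispersion J c γ s) :
    ∃ D, ∀ ξ, 0 ≤ ξ → W ξ ≤ D * Real.exp (-μ * ξ) := by
  obtain ⟨R, hK⟩ := hJ.exists_isCompactKernel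
  obtain ⟨η, hη, hgap⟩ :=
    exists_mul_expMoment_le_dispersion hK hJ.one_le_expMoment hγ hc.le hμ.le hpos
  obtain ⟨B, hB⟩ := hW.exists_abs_deriv_le hJ hc hC hf
  exact exists_le_mul_exp_of_linearFrontOp_le hK hJ.one_le_expMoment hμ hη hgap hW.contDiff
    hW.pos hW.le_one hW.strictAnti.antitone hW.tendsto_atTop hB hC
    fun ξ => (le_abs_self _).trans (hW.abs_linearFrontOp_le hf ξ)

-- Any a-priori decay rate above `l / 2` makes the quadratic remainder, once rescaled by
-- `exp (l * ξ)`, exponentially small; the rate `3 * l / 4` leaves `exp (-(l / 2) * ξ)`.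
theorem exists_asymptotics (hW : IsNLFront J f c W) (hJ : IsKernel J) (hγ : 0 < γ)
    (hf : ∀ w ∈ Icc (0 : ℝ) 1, |γ * w - f w| ≤ C * w ^ 2) (hl : 0 < l)
    (hroot : dispersion J c γ l = 0) (hcrit : ∫ y, tilt J l y * y = c)
    (hpos : ∀ s ∈ Ico 0 l, 0 < dispersion J c γ s) :
    ∃ A B, 0 ≤ A ∧ (0 < A ∨ (A = 0 ∧ 0 < B)) ∧
      Tendsto (fun ξ => W ξ * Real.exp (l * ξ) - (A * ξ + B)) atTop (nhds 0) := by
  obtain ⟨R, hK⟩ := hJ.exists_isCompactKernel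
  have hc := hJ.pos_of_dispersion_eq_zero hγ hl hroot
  have hC : 0 ≤ C := by simpa using (abs_nonneg _).trans (hf 1 (right_mem_Icc.2 zero_le_one))
  obtain ⟨D, hD⟩ := hW.exists_le_mul_exp hJ hγ hc hf hC (μ := 3 * l / 4) (by positivity)
    fun s hs => hpos s ⟨hs.1, by linarith [hs.2]⟩
  have hT : ∀ ξ, |taylorOp (tilt J l) (fun x => W x * Real.exp (l * x)) ξ|
      ≤ C * W ξ ^ 2 * Real.exp (l * ξ) := fun ξ => by
    rw [taylorOp_tilt hK (hW.contDiff.differentiable one_ne_zero) hroot hcrit, mul_comm, abs_mul,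
      Real.abs_exp]
    exact mul_le_mul_of_nonneg_right (hW.abs_linearFrontOp_le hf ξ) (Real.exp_pos _).le
  refine (hW.isRescaledFront l).exists_asymptotics hl (hK.tilt l) (hcrit.symm ▸ hc) (C₀ := C)
    (C := C * D ^ 2) (α := l / 2) (X := 0) (fun ξ => (hT ξ).trans_eq ?_) (half_pos hl)
    fun ξ hξ => (hT ξ).trans ?_
  · rw [mul_pow, ← Real.exp_nat_mul, ← mul_assoc, mul_assoc _ (Real.exp _), ← Real.exp_add]
    push_cast
    ring_nf
  · calc C * W ξ ^ 2 * Real.exp (l * ξ)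
        ≤ C * (D * Real.exp (-(3 * l / 4) * ξ)) ^ 2 * Real.exp (l * ξ) := by
          have := (hW.pos ξ).le
          have := hD ξ hξ
          gcongr
      _ = C * D ^ 2 * Real.exp (-(l / 2) * ξ) := by
          rw [mul_pow, ← Real.exp_nat_mul, ← mul_assoc, mul_assoc _ (Real.exp _), ← Real.exp_add]
          push_cast
          ring_nf

end IsNLFront

lemma exists_abs_sub_le_mul_sq {f : ℝ → ℝ} (hf : ContDiffOn ℝ 2 f (Icc 0 1)) (hf0 : f 0 = 0) :
    ∃ C, ∀ w ∈ Icc (0 : ℝ) 1, |derivWithin f (Icc 0 1) 0 * w - f w| ≤ C * w ^ 2 := by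
  obtain ⟨C, hC⟩ := exists_taylor_mean_remainder_bound (n := 1) zero_le_one
    (by exact_mod_cast hf : ContDiffOn ℝ ((1 : ℕ) + 1) f (Icc 0 1))
  refine ⟨C, fun w hw => ?_⟩
  have := hC w hw
  rw [taylorWithinEval_succ, taylor_within_zero_eval, hf0] at this
  simpa [iteratedDerivWithin_one, abs_sub_comm, mul_comm] using this

lemma isLittleO_exp_of_tendsto {W : ℝ → ℝ} {A B l : ℝ}
    (h : Tendsto (fun ξ => W ξ * Real.exp (l * ξ) - (A * ξ + B)) atTop (nhds 0)) :
    (fun ξ => W ξ - (A * ξ * Real.exp (-(l * ξ)) + B * Real.exp (-(l * ξ))))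
      =o[atTop] fun ξ => Real.exp (-(l * ξ)) := by
  rw [isLittleO_iff_tendsto fun ξ hξ => absurd hξ (Real.exp_ne_zero _)]
  refine h.congr fun ξ => ?_
  rw [Real.exp_neg]
  field_simp

theorem nonlocal_minimal_wave_decay_general {J : ℝ → ℝ} (hJ : IsKernel J) {f : ℝ → ℝ} {γ₀ C : ℝ}
    (hγ₀ : 0 < γ₀) (hf : ∀ w ∈ Icc (0 : ℝ) 1, |γ₀ * w - f w| ≤ C * w ^ 2)
    {lam₀ : ℝ} (hlam₀ : 0 < lam₀)
    (hroot : (∫ x, J x * Real.exp (lam₀ * x)) - 1 + γ₀ = c0star J γ₀ * lam₀)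
    (huniqroot : ∀ l, 0 < l →
      (∫ x, J x * Real.exp (l * x)) - 1 + γ₀ = c0star J γ₀ * l → l = lam₀)
    {W : ℝ → ℝ} (hW : IsNLFront J f (c0star J γ₀) W) :
    ∃ A B : ℝ, 0 ≤ A ∧ (0 < A ∨ (A = 0 ∧ 0 < B)) ∧
      (fun ξ => W ξ - (A * ξ * Real.exp (-(lam₀ * ξ)) + B * Real.exp (-(lam₀ * ξ))))
        =o[atTop] fun ξ => Real.exp (-(lam₀ * ξ)) := by
  obtain ⟨R, hK⟩ := hJ.exists_isCompactKernel
  have hroot' : dispersion J (c0star J γ₀) γ₀ lam₀ = 0 := sub_eq_zero.2 hroot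
  have hmin : IsLocalMin (dispersion J (c0star J γ₀) γ₀) lam₀ := by
    filter_upwards [lt_mem_nhds hlam₀] with s hs
    exact hroot' ▸ hJ.dispersion_c0star_nonneg hγ₀.le hs
  have hpos : ∀ s ∈ Ico 0 lam₀, 0 < dispersion J (c0star J γ₀) γ₀ s := by
    rintro s ⟨hs0, hs⟩
    rcases hs0.eq_or_lt with rfl | hs0
    · rwa [hJ.dispersion_zero]
    · exact (hJ.dispersion_c0star_nonneg hγ₀.le hs0).lt_of_ne fun h =>
        hs.ne (huniqroot s hs0 (sub_eq_zero.1 h.symm))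
  obtain ⟨A, B, hA, hAB, hlim⟩ := hW.exists_asymptotics hJ hγ₀ hf hlam₀ hroot'
    (integral_tilt_mul_self_eq_of_isLocalMin hK hmin) hpos
  exact ⟨A, B, hA, hAB, isLittleO_exp_of_tendsto hlim⟩

/-- If the minimal nonlocal speed is linearly selected, then the minimal front satisfies
`𝒲(ξ) = A ξ e^{-λ₀ξ} + B e^{-λ₀ξ} + o(e^{-λ₀ξ})` with `A ≥ 0`, and `B > 0` if `A = 0`. -/
theorem nonlocal_minimal_wave_decay
    (J : ℝ → ℝ) (hJ : IsKernel J)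
    (f : ℝ → ℝ) (γ₀ : ℝ)
    -- monostable condition with f'(0) = γ₀ > 0
    (hf1 : ContDiffOn ℝ 2 f (Icc 0 1)) (hf0 : f 0 = 0) (hf1' : f 1 = 0)
    (hγ₀ : 0 < γ₀) (hdf0 : derivWithin f (Icc 0 1) 0 = γ₀)
    (hdf1 : derivWithin f (Icc 0 1) 1 < 0)
    (hfpos : ∀ w ∈ Ioo (0:ℝ) 1, 0 < f w)
    -- λ₀ is the unique positive number with ∫ J e^{λ₀ x} dx - 1 + γ₀ = c₀* λ₀
    (lam₀ : ℝ) (hlam₀ : 0 < lam₀)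
    (hroot : (∫ x, J x * Real.exp (lam₀ * x)) - 1 + γ₀ = c0star J γ₀ * lam₀)
    (huniqroot : ∀ l, 0 < l →
      (∫ x, J x * Real.exp (l * x)) - 1 + γ₀ = c0star J γ₀ * l → l = lam₀)
    -- minimal speed c_NL* and its characterization
    (cNL : ℝ) (hge : c0star J γ₀ ≤ cNL)
    (hmin : ∀ c, (∃ V : ℝ → ℝ, IsNLFront J f c V) ↔ cNL ≤ c)
    -- linear selection
    (hlin : cNL = c0star J γ₀)
    -- the minimal traveling wave
    (W : ℝ → ℝ) (hW : IsNLFront J f cNL W) :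
    ∃ A B : ℝ, 0 ≤ A ∧ (0 < A ∨ (A = 0 ∧ 0 < B)) ∧
      (fun ξ => W ξ - (A * ξ * Real.exp (-(lam₀ * ξ)) + B * Real.exp (-(lam₀ * ξ))))
        =o[atTop] fun ξ => Real.exp (-(lam₀ * ξ)) := by
  obtain ⟨C, hC⟩ := exists_abs_sub_le_mul_sq hf1 hf0
  exact nonlocal_minimal_wave_decay_general hJ hγ₀ (hdf0 ▸ hC) hlam₀ hroot huniqroot (hlin ▸ hW)
end
end
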